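/- arXiv:1001.2457 — 7 statements merged into one kernel-verified Lean document; each statement's English description precedes it below -/
import Mathlib

section
/- Let R be an additive subgroup of ℚ containing 1 that is closed under multiplication (i.e. R is a subring of ℚ). Then the only cellular covers of R are the trivial ones: every surjective cellular cover π : G → R of abelian groups is an isomorphism, so its kernel is 0. -/
/-!
Since `R` is closed under multiplication, each `r ∈ R` gives a homomorphism `r • π : G → R`,
which lifts uniquely along `π` to some `φ r : G → G`. By uniqueness `φ` is additive in `r`.
Choosing `g` with `π g = 1`, the map `s : r ↦ φ r g` is therefore an additive section of `π`.
Then `s ∘ π` and the identity of `G` have the same composite with `π`, so they agree by the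
injectivity half of cellularity. Thus `s` is a left inverse of `π`, and `π` is injective.
-/

/-- If `R ⊆ ℚ` is an additive subgroup containing `1` that is closed under
multiplication (a subring of `ℚ`), then every surjective cellular cover `π : G → R` is an
isomorphism. -/
theorem cellular_cover_of_rational_ring_trivial (R : AddSubgroup ℚ) (h1 : (1 : ℚ) ∈ R)
    (hring : ∀ x ∈ R, ∀ y ∈ R, x * y ∈ R)
    (G : Type) [AddCommGroup G] (π : G →+ R)
    (hsurj : Function.Surjective π)
    (hcell : Function.Bijective (fun φ : G →+ G => π.comp φ)) :
    Function.Bijective π := by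
  have hlift : ∀ r : R, ∃ φ : G →+ G, ∀ x, (π (φ x) : ℚ) = r * π x := by
    intro r
    let m : R →+ R :=
      AddMonoidHom.mk' (fun x => ⟨r * x, hring _ r.2 _ x.2⟩) (by
        intro a b
        ext
        simp [mul_add])
    obtain ⟨φ, hφ⟩ := hcell.2 (m.comp π)
    exact ⟨φ, fun x => congrArg Subtype.val (DFunLike.congr_fun hφ x)⟩
  choose φ hφ using hlift
  have hadd : ∀ a b, φ (a + b) = φ a + φ b := by
    intro a b
    apply hcell.1
    ext x
    simp [hφ, add_mul]
  obtain ⟨g, hg⟩ := hsurj ⟨1, h1⟩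
  let s : R →+ G := AddMonoidHom.mk' (fun r => φ r g) (by
    intro a b
    simp [hadd])
  have hs : s.comp π = AddMonoidHom.id G := by
    apply hcell.1
    ext x
    change (π (φ (π x) g) : ℚ) = π x
    rw [hφ, hg, mul_one]
  exact ⟨Function.LeftInverse.injective (g := s) (DFunLike.congr_fun hs), hsurj⟩
end

section
/- Let q be a prime, let K = ℤ[1/q] ⊆ ℚ be the subring of rationals whose denominators are powers of q, and let R ⊆ ℚ be the additive subgroup generated by {1/p : p prime, p ≠ q}. Let G be the additive subgroup of ℚ × ℚ generated by K × {0}, the element (0,1), and the elements ((p−1)/p, 1/p) for all primes p ≠ q, and let π : G → R be the restriction of the projection onto the second coordinate. Then: (i) for every prime p ≠ q the element p − 1 of K does not lie in pK; (ii) π is surjective with kernel K × {0} and this short exact sequence splits, so that G ≅ K ⊕ R; and (iii) π is not a cellular cover. -/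
/-!
The shear `(a, b) ↦ (a + b, b)` of `ℚ × ℚ` carries `G` onto `K × R`: the generator
`((p-1)/p, 1/p)` goes to `(1, 1/p)`, and `1 ∈ K ∩ R`.  So `G` consists of the pairs with
`a + b ∈ K` and `b ∈ R` (`mem_G_iff`).  The section of `π` is `b ↦ (-b, b)`, and
the endomorphism `(a, b) ↦ (a + b, 0)` of `G` is nonzero but is killed by `π`, so `φ ↦ π ∘ φ` is
not injective.  Claim (i) holds because every element of `K` becomes an integer after
multiplication by a power of `q`, and `p` divides neither `q ^ n` nor `p - 1`.
-/

theorem exists_int_of_mem_K {q : ℕ} (hq : q.Prime) {y : ℚ}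
    (hy : y ∈ AddSubgroup.closure {x : ℚ | ∃ n : ℕ, x = 1 / (q : ℚ) ^ n}) :
    ∃ (n : ℕ) (m : ℤ), (q : ℚ) ^ n * y = m := by
  have hq0 : (q : ℚ) ≠ 0 := by exact_mod_cast hq.ne_zero
  induction hy using AddSubgroup.closure_induction with
  | mem x hx =>
    obtain ⟨n, rfl⟩ := hx
    exact ⟨n, 1, by field_simp; simp⟩
  | zero => exact ⟨0, 0, by simp⟩
  | add x y _ _ ihx ihy =>
    obtain ⟨n, a, ha⟩ := ihx
    obtain ⟨m, b, hb⟩ := ihy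
    refine ⟨n + m, (q : ℤ) ^ m * a + (q : ℤ) ^ n * b, ?_⟩
    push_cast
    rw [← ha, ← hb]
    ring
  | neg x _ ih =>
    obtain ⟨n, a, ha⟩ := ih
    exact ⟨n, -a, by push_cast; rw [← ha]; ring⟩

theorem one_mem_R (q : ℕ) :
    (1 : ℚ) ∈ AddSubgroup.closure {x : ℚ | ∃ p : ℕ, p.Prime ∧ p ≠ q ∧ x = 1 / (p : ℚ)} := by
  obtain ⟨p, hpq, hp⟩ := Nat.exists_infinite_primes (q + 1)
  have hp0 : (p : ℚ) ≠ 0 := by exact_mod_cast hp.ne_zero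
  have hmem : 1 / (p : ℚ) ∈ AddSubgroup.closure
      {x : ℚ | ∃ p : ℕ, p.Prime ∧ p ≠ q ∧ x = 1 / (p : ℚ)} :=
    AddSubgroup.subset_closure ⟨p, hp, by omega, rfl⟩
  have h := AddSubgroup.nsmul_mem _ hmem p
  rwa [nsmul_eq_mul, mul_one_div_cancel hp0] at h

/-- `G` is the preimage of `K × R` under the shear `(a, b) ↦ (a + b, b)`. -/
theorem mem_G_iff (q : ℕ) (K R : AddSubgroup ℚ) (h1K : (1 : ℚ) ∈ K) (h1R : (1 : ℚ) ∈ R)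
    (hR : R = AddSubgroup.closure {x : ℚ | ∃ p : ℕ, p.Prime ∧ p ≠ q ∧ x = 1 / (p : ℚ)})
    (x : ℚ × ℚ) :
    x ∈ AddSubgroup.closure ({x : ℚ × ℚ | x.1 ∈ K ∧ x.2 = 0} ∪ {(0, 1)} ∪
        {x : ℚ × ℚ | ∃ p : ℕ, p.Prime ∧ p ≠ q ∧ x = (((p : ℚ) - 1) / (p : ℚ), 1 / (p : ℚ))}) ↔
      x.1 + x.2 ∈ K ∧ x.2 ∈ R := by
  constructor
  · intro hx
    induction hx using AddSubgroup.closure_induction with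
    | mem x hx =>
      rcases hx with (⟨h1, h2⟩ | rfl) | ⟨p, hp, hpq, rfl⟩
      · rw [h2, add_zero]
        exact ⟨h1, R.zero_mem⟩
      · simpa using And.intro h1K h1R
      · have hp0 : (p : ℚ) ≠ 0 := by exact_mod_cast hp.ne_zero
        have e : ((p : ℚ) - 1) / p + 1 / p = 1 := by field_simp; ring
        refine ⟨by simpa only [e] using h1K, ?_⟩
        rw [hR]
        exact AddSubgroup.subset_closure ⟨p, hp, hpq, rfl⟩
    | zero => exact ⟨by simp, R.zero_mem⟩
    | add x y _ _ ihx ihy =>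
      refine ⟨?_, R.add_mem ihx.2 ihy.2⟩
      have e : (x + y).1 + (x + y).2 = (x.1 + x.2) + (y.1 + y.2) := by
        simp only [Prod.fst_add, Prod.snd_add]; ring
      rw [e]
      exact K.add_mem ihx.1 ihy.1
    | neg x _ ih =>
      refine ⟨?_, R.neg_mem ih.2⟩
      have e : (-x).1 + (-x).2 = -(x.1 + x.2) := by
        simp only [Prod.fst_neg, Prod.snd_neg]; ring
      rw [e]
      exact K.neg_mem ih.1
  · rintro ⟨hK, hxR⟩
    set H := AddSubgroup.closure ({x : ℚ × ℚ | x.1 ∈ K ∧ x.2 = 0} ∪ {(0, 1)} ∪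
        {x : ℚ × ℚ | ∃ p : ℕ, p.Prime ∧ p ≠ q ∧ x = (((p : ℚ) - 1) / (p : ℚ), 1 / (p : ℚ))})
    have hKH : ∀ k ∈ K, ((k, 0) : ℚ × ℚ) ∈ H := fun k hk =>
      AddSubgroup.subset_closure (Or.inl (Or.inl ⟨hk, rfl⟩))
    have hRH : ∀ b ∈ R, ((-b, b) : ℚ × ℚ) ∈ H := by
      intro b hb
      rw [hR] at hb
      induction hb using AddSubgroup.closure_induction with
      | mem b hb =>
        obtain ⟨p, hp, hpq, rfl⟩ := hb
        have hp0 : (p : ℚ) ≠ 0 := by exact_mod_cast hp.ne_zero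
        have h1 : ((((p : ℚ) - 1) / (p : ℚ), 1 / (p : ℚ)) : ℚ × ℚ) ∈ H :=
          AddSubgroup.subset_closure (Or.inr ⟨p, hp, hpq, rfl⟩)
        have e : ((-(1 / (p : ℚ)), 1 / (p : ℚ)) : ℚ × ℚ) =
            (((p : ℚ) - 1) / (p : ℚ), 1 / (p : ℚ)) - (1, 0) := by
          ext
          · simp only [Prod.fst_sub]
            field_simp
            ring
          · simp
        rw [e]
        exact H.sub_mem h1 (hKH 1 h1K)
      | zero => simpa using hKH 0 K.zero_mem
      | add x y _ _ ihx ihy =>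
        have e : ((-(x + y), x + y) : ℚ × ℚ) = (-x, x) + (-y, y) := by
          ext <;> simp; ring
        rw [e]
        exact H.add_mem ihx ihy
      | neg x _ ih =>
        have e : ((-(-x), -x) : ℚ × ℚ) = -(-x, x) := by ext <;> simp
        rw [e]
        exact H.neg_mem ih
    have e : x = (x.1 + x.2, 0) + (-x.2, x.2) := by ext <;> simp
    rw [e]
    exact H.add_mem (hKH _ hK) (hRH _ hxR)

/-- For a prime `q`, let `K = ℤ[1/q] ⊆ ℚ`, let `R ⊆ ℚ` be the additive
subgroup generated by the `1/p` for primes `p ≠ q`, and let `G ⊆ ℚ × ℚ` be generated by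
`K × {0}`, `(0,1)`, and the elements `((p-1)/p, 1/p)` for primes `p ≠ q`.  Then
(i) `p - 1 ∈ K \ pK` for every prime `p ≠ q`; (ii) the restriction `π : G → R` of the second
projection is surjective with kernel `K × {0}`, splits, and `G ≅ K ⊕ R`; (iii) `π` is not a
cellular cover. -/
theorem buckner_dugas_example_not_cellular (q : ℕ) (hq : q.Prime)
    (K R : AddSubgroup ℚ) (G : AddSubgroup (ℚ × ℚ))
    (hK : K = AddSubgroup.closure {x : ℚ | ∃ n : ℕ, x = 1 / (q : ℚ) ^ n})
    (hR : R = AddSubgroup.closure {x : ℚ | ∃ p : ℕ, p.Prime ∧ p ≠ q ∧ x = 1 / (p : ℚ)})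
    (hG : G = AddSubgroup.closure ({x : ℚ × ℚ | x.1 ∈ K ∧ x.2 = 0} ∪ {(0, 1)} ∪
        {x : ℚ × ℚ | ∃ p : ℕ, p.Prime ∧ p ≠ q ∧ x = (((p : ℚ) - 1) / (p : ℚ), 1 / (p : ℚ))})) :
    (∀ p : ℕ, p.Prime → p ≠ q →
        ((p : ℚ) - 1) ∈ K ∧ ¬ ∃ y ∈ K, (p : ℚ) * y = (p : ℚ) - 1) ∧
    ∃ π : G →+ R, (∀ g : G, (π g : ℚ) = (g : ℚ × ℚ).2) ∧
      Function.Surjective π ∧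
      (∀ g : G, π g = 0 ↔ ((g : ℚ × ℚ).1 ∈ K ∧ (g : ℚ × ℚ).2 = 0)) ∧
      (∃ s : R →+ G, π.comp s = AddMonoidHom.id R) ∧
      Nonempty (G ≃+ K × R) ∧
      ¬ Function.Bijective (fun φ : G →+ G => π.comp φ) := by
  have h1K : (1 : ℚ) ∈ K := by
    rw [hK]
    exact AddSubgroup.subset_closure ⟨0, by simp⟩
  have h1R : (1 : ℚ) ∈ R := by
    rw [hR]
    exact one_mem_R q
  have hmem : ∀ x : ℚ × ℚ, x ∈ G ↔ x.1 + x.2 ∈ K ∧ x.2 ∈ R := by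
    intro x
    rw [hG]
    exact mem_G_iff q K R h1K h1R hR x
  refine ⟨fun p hp hpq => ⟨?_, ?_⟩, ?_⟩
  · refine K.sub_mem ?_ h1K
    simpa using K.nsmul_mem h1K p
  · rintro ⟨y, hy, hpy⟩
    rw [hK] at hy
    obtain ⟨n, m, hm⟩ := exists_int_of_mem_K hq hy
    have h : (p : ℤ) * m = (q : ℤ) ^ n * ((p : ℤ) - 1) := by
      have h' : (p : ℚ) * m = (q : ℚ) ^ n * ((p : ℚ) - 1) := by
        rw [← hm, ← hpy]
        ring
      exact_mod_cast h'
    have hpZ : Prime (p : ℤ) := Nat.prime_iff_prime_int.mp hp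
    rcases hpZ.dvd_or_dvd (Dvd.intro _ h) with h1 | h1
    · have h2 : p ∣ q := by exact_mod_cast hpZ.dvd_of_dvd_pow h1
      exact hpq ((Nat.prime_dvd_prime_iff_eq hp hq).mp h2)
    · have h2 : (p : ℤ) ∣ 1 := by simpa using dvd_sub (dvd_refl (p : ℤ)) h1
      exact hpZ.not_isUnit (isUnit_of_dvd_one h2)
  let π : G →+ R :=
    { toFun := fun g => ⟨(g : ℚ × ℚ).2, ((hmem _).1 g.2).2⟩
      map_zero' := rfl
      map_add' := fun _ _ => rfl }
  let s : R →+ G :=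
    { toFun := fun b => ⟨(-(b : ℚ), (b : ℚ)), (hmem _).2 ⟨by simp, b.2⟩⟩
      map_zero' := by ext <;> simp
      map_add' := fun x y => by ext <;> simp; ring }
  let e : G ≃+ K × R :=
    { toFun := fun g => (⟨(g : ℚ × ℚ).1 + (g : ℚ × ℚ).2, ((hmem _).1 g.2).1⟩,
        ⟨(g : ℚ × ℚ).2, ((hmem _).1 g.2).2⟩)
      invFun := fun x => ⟨((x.1 : ℚ) - (x.2 : ℚ), (x.2 : ℚ)), (hmem _).2 ⟨by simp, x.2.2⟩⟩
      left_inv := fun g => by ext <;> simp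
      right_inv := fun x => by ext <;> simp
      map_add' := fun x y => by ext <;> simp; ring }
  let φ : G →+ G :=
    { toFun := fun g => ⟨((g : ℚ × ℚ).1 + (g : ℚ × ℚ).2, 0),
        (hmem _).2 ⟨by simpa using ((hmem _).1 g.2).1, R.zero_mem⟩⟩
      map_zero' := by ext <;> simp
      map_add' := fun x y => by ext <;> simp; ring }
  have hs : π.comp s = AddMonoidHom.id R := by ext; rfl
  refine ⟨π, fun _ => rfl, fun r => ⟨s r, DFunLike.congr_fun hs r⟩, fun g => ?_, ⟨s, hs⟩,
    ⟨e⟩, fun hbij => ?_⟩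
  · constructor
    · intro h
      have h2 : (g : ℚ × ℚ).2 = 0 := congrArg Subtype.val h
      have h1 := ((hmem _).1 g.2).1
      rw [h2, add_zero] at h1
      exact ⟨h1, h2⟩
    · rintro ⟨-, h2⟩
      exact Subtype.ext h2
  · have h0 : φ = 0 := hbij.1 (by ext; rfl)
    have h1 := DFunLike.congr_fun h0 ⟨(1, 0), (hmem _).2 ⟨by simpa using h1K, R.zero_mem⟩⟩
    have h2 : (1 : ℚ) + 0 = 0 := congrArg (fun g : G => (g : ℚ × ℚ).1) h1
    norm_num at h2
end

section
/- Let q be a prime and let R ⊆ ℚ be the additive subgroup generated by {1/p : p prime, p ≠ q}. Let K be a torsion-free abelian group such that: K is q-divisible (so K is a ℤ[1/q]-module); every additive endomorphism of K is multiplication by some element of ℤ[1/q]; for every nonzero k ∈ K the set of primes p ≠ q with k ∈ pK is finite; and rK ≠ K for every prime r ≠ q. Then there exists a cellular exact sequence 0 → K → G → R → 0 of abelian groups. -/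
/-!
Write `I` for the set of primes `p ≠ q` and `F` for the free abelian group on symbols `x p`,
`p ∈ I`, mapping onto `R` by `x p ↦ 1/p`.  A relation `∑ n_p x_p` in the kernel `L` of `F → R`
has `p ∣ n_p` for all `p` (`dvd_of_sum_div_eq_zero`), so any family `k_p ∈ K` gives a
homomorphism `L → K`, `∑ n_p x_p ↦ ∑ (n_p / p) k_p`.  The group `G` is the pushout of `F ← L → K`;
it is an extension of `R` by `K` in which `p x_p - k_p` does not depend on `p`.

*Lifting.*  `K` is `q`-divisible and `R` contains no nonzero infinitely `q`-divisible element, so a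
homomorphism `ψ : G → R` kills `K`.  Then `t = p ψ(x_p)` is independent of `p`, and `t / p ∈ R` for
every `p ∈ I` forces `t ∈ ℤ`.  Hence `ψ = t π`, which lifts to `t • id`.

*Uniqueness.*  It suffices that `Hom(G, K) = 0`.  The family is chosen so that `k_p = 0` for the
primes `p ≡ 1 mod 4` and `k_p ∉ pK` for the other ones.  If `θ : G → K` acts on `K` as `a / q^n`,
then `z = q^n p θ(x_p) - a k_p` is independent of `p`.  Now `z ∈ pK` for the infinitely many
`p ≡ 1 mod 4`, so `z = 0`; thus `a k_p ∈ pK` for all `p`, which for `p ≡ 3 mod 4` means `p ∣ a`.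
So `a = 0`, and `θ = 0` because `K` is torsion-free.
-/

/-- The pushout of a presentation `ρ : F → R` along a homomorphism `h` from its group of relations
to `K`, with the properties that are used of it. -/
lemma exists_pushout {K F R : Type} [AddCommGroup K] [AddCommGroup F] [AddCommGroup R]
    (ρ : F →+ R) (hρ : Function.Surjective ρ) (h : ρ.ker →+ K) :
    ∃ (G : Type) (_ : AddCommGroup G) (ι : K →+ G) (π : G →+ R) (σ : F →+ G),
      Function.Injective ι ∧ Function.Surjective π ∧ ι.range = π.ker ∧
      (∀ f, π (σ f) = ρ f) ∧ (∀ l : ρ.ker, σ l = ι (h l)) ∧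
      (∀ g, ∃ k f, g = ι k + σ f) := by
  let N : AddSubgroup (K × F) := ((-h).prod ρ.ker.subtype).range
  have hN : ∀ x : K × F, x ∈ N ↔ ∃ l : ρ.ker, -h l = x.1 ∧ (l : F) = x.2 := by
    intro x
    simp [N, AddMonoidHom.mem_range, Prod.ext_iff]
  let mk := QuotientAddGroup.mk' N
  let π : (K × F) ⧸ N →+ R := QuotientAddGroup.lift N (ρ.comp (AddMonoidHom.snd K F)) (by
    intro x hx
    obtain ⟨l, -, h2⟩ := (hN x).1 hx
    have := l.2
    rw [AddMonoidHom.mem_ker] at this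
    simp [← h2, this])
  have hπ : ∀ x, π (mk x) = ρ x.2 := fun x => rfl
  have hdec : ∀ x : K × F, mk x = mk (x.1, 0) + mk (0, x.2) := fun x => by
    rw [← map_add]; simp
  have hrel : ∀ l : ρ.ker, mk (0, (l : F)) = mk (h l, 0) := fun l => by
    refine (QuotientAddGroup.mk'_eq_mk' N).2 ⟨(h l, -(l : F)), (hN _).2 ⟨-l, ?_, ?_⟩, ?_⟩ <;> simp
  refine ⟨(K × F) ⧸ N, inferInstance, mk.comp (AddMonoidHom.inl K F), π,
    mk.comp (AddMonoidHom.inr K F), ?_, ?_, ?_, ?_, hrel, ?_⟩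
  · rw [injective_iff_map_eq_zero]
    intro k hk
    have : ((k, 0) : K × F) ∈ N := (QuotientAddGroup.eq_zero_iff _).1 hk
    obtain ⟨l, h1, h2⟩ := (hN _).1 this
    have h0 : l = 0 := Subtype.ext h2
    simpa [h0] using h1.symm
  · intro r
    obtain ⟨f, rfl⟩ := hρ r
    exact ⟨mk (0, f), hπ _⟩
  · ext g
    constructor
    · rintro ⟨k, rfl⟩
      rw [AddMonoidHom.mem_ker]
      change π (mk (k, 0)) = 0
      rw [hπ]; simp
    · intro hg
      obtain ⟨x, rfl⟩ := QuotientAddGroup.mk'_surjective N g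
      have hx : ρ x.2 = 0 := hg
      refine ⟨x.1 + h ⟨x.2, hx⟩, ?_⟩
      change mk (_, 0) = mk x
      rw [hdec x, hrel ⟨x.2, hx⟩, ← map_add]
      simp
  · intro f; rfl
  · intro g
    obtain ⟨x, rfl⟩ := QuotientAddGroup.mk'_surjective N g
    exact ⟨x.1, x.2, hdec x⟩

lemma padicNorm_one_div_of_ne {p r : ℕ} (hp : p.Prime) (hr : r.Prime) (h : p ≠ r) :
    padicNorm p (1 / (r : ℚ)) = 1 := by
  have := Fact.mk hp
  have := Fact.mk hr
  rw [padicNorm.div, padicNorm.one, padicNorm.padicNorm_of_prime_of_ne h, div_one]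

lemma dvd_of_sum_div_eq_zero {q : ℕ} (f : {p : ℕ // p.Prime ∧ p ≠ q} →₀ ℤ)
    (hf : (f.sum fun p n => (n : ℚ) * (1 / (p.1 : ℚ))) = 0) (p : {p : ℕ // p.Prime ∧ p ≠ q}) :
    (p.1 : ℤ) ∣ f p := by
  classical
  have := Fact.mk p.2.1
  by_cases hp : p ∈ f.support
  swap
  · simp [Finsupp.notMem_support_iff.1 hp]
  rw [Finsupp.sum, ← Finset.add_sum_erase _ _ hp] at hf
  -- All summands with index different from `p` are `p`-integral, hence so is the one at `p`.
  have h1 : padicNorm p.1 ((f p : ℚ) * (1 / (p.1 : ℚ))) ≤ 1 := by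
    rw [eq_neg_of_add_eq_zero_left hf, padicNorm.neg]
    refine padicNorm.sum_le' (fun r hr => ?_) zero_le_one
    rw [padicNorm.mul, padicNorm_one_div_of_ne p.2.1 r.2.1
      (fun h => (Finset.mem_erase.1 hr).1 (Subtype.ext h.symm)), mul_one]
    exact padicNorm.of_int _
  have hp1 : (1 : ℚ) < p.1 := by exact_mod_cast p.2.1.one_lt
  rw [padicNorm.mul, padicNorm.div, padicNorm.one, padicNorm.padicNorm_p_of_prime, one_div,
    inv_inv] at h1
  rw [← padicNorm.int_lt_one_iff]
  by_contra hc
  nlinarith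

/-- The group generated by the reciprocals of the primes different from `q` is `q`-integral, and
its elements have at most a simple pole at every other prime. -/
lemma padicNorm_le_of_mem_closure {q : ℕ} (p : ℕ) (hp : p.Prime) {x : ℚ}
    (hx : x ∈ AddSubgroup.closure {x : ℚ | ∃ p : ℕ, p.Prime ∧ p ≠ q ∧ x = 1 / (p : ℚ)}) :
    padicNorm p x ≤ if p = q then 1 else (p : ℚ) := by
  have := Fact.mk hp
  have hp1 : (1 : ℚ) < p := by exact_mod_cast hp.one_lt
  have hB : (1 : ℚ) ≤ if p = q then 1 else (p : ℚ) := by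
    split_ifs
    · exact le_rfl
    · exact hp1.le
  induction hx using AddSubgroup.closure_induction with
  | mem x hx =>
    obtain ⟨r, hr, hrq, rfl⟩ := hx
    by_cases h : p = r
    · subst h
      rw [if_neg hrq, padicNorm.div, padicNorm.one, padicNorm.padicNorm_p_of_prime]
      simp
    · rw [padicNorm_one_div_of_ne hp hr h]
      exact hB
  | zero => rw [padicNorm.zero]; linarith
  | add x y _ _ hx hy => exact padicNorm.nonarchimedean.trans (max_le hx hy)
  | neg x _ hx => rwa [padicNorm.neg]

lemma eq_intCast_of_padicNorm_le_one {t : ℚ} (h : ∀ p : ℕ, p.Prime → padicNorm p t ≤ 1) :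
    ∃ n : ℤ, t = n := by
  refine ⟨t.num, (Rat.den_eq_one_iff t).1 ?_ |>.symm⟩
  by_contra hd
  obtain ⟨p, hp, hpd⟩ := Nat.exists_prime_and_dvd hd
  have := Fact.mk hp
  have h1 : padicNorm p (t.num : ℚ) = 1 := by
    rw [padicNorm.int_eq_one_iff]
    intro hn
    exact Nat.not_coprime_of_dvd_of_dvd hp.one_lt (Int.natCast_dvd.1 hn) hpd t.reduced
  have h2 : padicNorm p (t.den : ℚ) < 1 := (padicNorm.nat_lt_one_iff _).2 hpd
  have h3 : t * t.den = t.num := Rat.mul_den_eq_num t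
  have h4 := congrArg (padicNorm p) h3
  rw [padicNorm.mul, h1] at h4
  have := h p hp
  have := padicNorm.nonneg (p := p) (t.den : ℚ)
  nlinarith

lemma eq_zero_of_infinitely_divisible {q : ℕ} (hq : q.Prime) {x : ℚ}
    (hx : ∀ n : ℕ, ∃ y ∈ AddSubgroup.closure
      {x : ℚ | ∃ p : ℕ, p.Prime ∧ p ≠ q ∧ x = 1 / (p : ℚ)}, (q : ℚ) ^ n * y = x) : x = 0 := by
  have := Fact.mk hq
  by_contra h0
  have hpos : 0 < padicNorm q x :=
    lt_of_le_of_ne (padicNorm.nonneg _) (Ne.symm (padicNorm.nonzero h0))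
  have hq1 : (1 : ℚ) < q := by exact_mod_cast hq.one_lt
  obtain ⟨n, hn⟩ := exists_pow_lt_of_lt_one hpos (inv_lt_one_of_one_lt₀ hq1)
  obtain ⟨y, hy, rfl⟩ := hx n
  have h1 := padicNorm_le_of_mem_closure q hq hy
  rw [if_pos rfl] at h1
  have h2 : padicNorm q ((q : ℚ) ^ n) = (q : ℚ)⁻¹ ^ n := by
    rw [← padicNorm.padicNorm_p_of_prime (p := q)]
    exact map_pow (IsAbsoluteValue.toAbsoluteValue (padicNorm q)) _ _
  rw [padicNorm.mul, h2] at hn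
  have : (0 : ℚ) < (q : ℚ)⁻¹ ^ n := by positivity
  nlinarith

/-- `∑ n_p x_p ↦ ∑ (n_p / p) k_p` on a group of vectors with `p ∣ n_p`, where the integer divisions
are exact and the formula is therefore additive. -/
lemma exists_divided_hom {q : ℕ} {K : Type} [AddCommGroup K]
    (k : {p : ℕ // p.Prime ∧ p ≠ q} → K)
    (L : AddSubgroup ({p : ℕ // p.Prime ∧ p ≠ q} →₀ ℤ))
    (hL : ∀ f ∈ L, ∀ p, (p.1 : ℤ) ∣ f p) :
    ∃ h : L →+ K, ∀ l : L, h l = l.1.sum fun p n => (n / (p.1 : ℤ)) • k p := by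
  classical
  refine ⟨⟨⟨fun l => l.1.sum fun p n => (n / (p.1 : ℤ)) • k p, by simp⟩, ?_⟩,
    fun l => rfl⟩
  intro l m
  change ((l.1 + m.1).sum fun p n => (n / (p.1 : ℤ)) • k p) =
    (l.1.sum fun p n => (n / (p.1 : ℤ)) • k p) + m.1.sum fun p n => (n / (p.1 : ℤ)) • k p
  have hs : ∀ g : {p : ℕ // p.Prime ∧ p ≠ q} →₀ ℤ,
      g.support ⊆ l.1.support ∪ m.1.support →
      (g.sum fun p n => (n / (p.1 : ℤ)) • k p) =
        ∑ p ∈ l.1.support ∪ m.1.support, (g p / (p.1 : ℤ)) • k p :=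
    fun g hg => Finsupp.sum_of_support_subset _ hg _ (by simp)
  rw [hs _ Finsupp.support_add, hs _ Finset.subset_union_left, hs _ Finset.subset_union_right,
    ← Finset.sum_add_distrib]
  refine Finset.sum_congr rfl fun p _ => ?_
  rw [Finsupp.add_apply, Int.add_ediv_of_dvd_left (hL _ l.2 p), add_smul]

/-- A family `k_p` that is not a torsion element of `∏ K/pK` modulo the image of `K`: it lies in
`pK` for infinitely many `p`, and outside `pK` for infinitely many `p`. -/
lemma exists_family {q : ℕ} {K : Type} [AddCommGroup K]
    (hfin : ∀ k : K, k ≠ 0 → {p : ℕ | p.Prime ∧ p ≠ q ∧ ∃ y : K, p • y = k}.Finite)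
    (hndiv : ∀ r : ℕ, r.Prime → r ≠ q → ¬ ∀ k : K, ∃ y : K, r • y = k) :
    ∃ k : {p : ℕ // p.Prime ∧ p ≠ q} → K, ∀ (z : K) (a : ℤ),
      (∀ p, ∃ y : K, p.1 • y = z + a • k p) → z = 0 ∧ a = 0 := by
  classical
  have hex : ∀ p : {p : ℕ // p.Prime ∧ p ≠ q}, ∃ x : K, ¬ ∃ y : K, p.1 • y = x := fun p => by
    simpa using hndiv p.1 p.2.1 p.2.2
  choose x hx using hex
  refine ⟨fun p => if p.1 ≡ 1 [MOD 4] then 0 else x p, fun z a h => ?_⟩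
  have hz : z = 0 := by
    by_contra hz
    obtain ⟨B, hB⟩ := (hfin z hz).bddAbove
    obtain ⟨p, hpB, hp, hp1⟩ := Nat.forall_exists_prime_gt_and_modEq (max B q) (q := 4) (a := 1)
      (by norm_num) (by norm_num)
    have hpq : p ≠ q := by have := le_max_right B q; omega
    obtain ⟨y, hy⟩ := h ⟨p, hp, hpq⟩
    have : p ≤ B := hB ⟨hp, hpq, y, by simpa [hp1] using hy⟩
    have := le_max_left B q
    omega
  refine ⟨hz, ?_⟩
  by_contra ha
  obtain ⟨p, hpB, hp, hp3⟩ := Nat.forall_exists_prime_gt_and_modEq (max a.natAbs q) (q := 4)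
    (a := 3) (by norm_num) (by norm_num)
  have hpq : p ≠ q := by have := le_max_right a.natAbs q; omega
  have hpa : a.natAbs < p := by have := le_max_left a.natAbs q; omega
  obtain ⟨y, hy⟩ := h ⟨p, hp, hpq⟩
  have hp1 : ¬ p ≡ 1 [MOD 4] := by unfold Nat.ModEq at *; omega
  simp only [hz, hp1, if_false, zero_add] at hy
  have hcop : IsCoprime (p : ℤ) a := by
    refine (Nat.prime_iff_prime_int.1 hp).coprime_iff_not_dvd.2 fun hd => ?_
    have := Nat.le_of_dvd (Int.natAbs_pos.2 ha) (Int.natCast_dvd.1 hd)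
    omega
  obtain ⟨u, v, huv⟩ := hcop
  -- `x p = (u p + v a) • x p` is divisible by `p`, since `a • x p` is.
  refine hx ⟨p, hp, hpq⟩ ⟨u • x ⟨p, hp, hpq⟩ + v • y, ?_⟩
  have e : x ⟨p, hp, hpq⟩ = (u * p + v * a) • x ⟨p, hp, hpq⟩ := by rw [huv, one_smul]
  conv_rhs => rw [e, add_smul, mul_smul v a, ← hy]
  module

/-- Let `q` be a prime and `R ⊆ ℚ` the additive subgroup generated by the
`1/p` for primes `p ≠ q`.  If `K` is a torsion-free abelian group which is `q`-divisible,
whose endomorphisms are all multiplications by elements of `ℤ[1/q]` (i.e. of the form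
`a / q^n`), such that each nonzero `k ∈ K` is divisible by only finitely many primes `p ≠ q`,
and such that `rK ≠ K` for every prime `r ≠ q`, then there is a cellular exact sequence
`0 → K → G → R → 0`. -/
theorem cellular_cover_with_prescribed_kernel (q : ℕ) (hq : q.Prime)
    (R : AddSubgroup ℚ)
    (hR : R = AddSubgroup.closure {x : ℚ | ∃ p : ℕ, p.Prime ∧ p ≠ q ∧ x = 1 / (p : ℚ)})
    (K : Type) [AddCommGroup K]
    (htf : ∀ k : K, k ≠ 0 → ¬ IsOfFinAddOrder k)
    (hdiv : ∀ k : K, ∃ k' : K, q • k' = k)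
    (hend : ∀ φ : K →+ K, ∃ (a : ℤ) (n : ℕ), ∀ k : K, q ^ n • φ k = a • k)
    (hfin : ∀ k : K, k ≠ 0 → {p : ℕ | p.Prime ∧ p ≠ q ∧ ∃ y : K, p • y = k}.Finite)
    (hndiv : ∀ r : ℕ, r.Prime → r ≠ q → ¬ ∀ k : K, ∃ y : K, r • y = k) :
    ∃ (G : Type) (_ : AddCommGroup G) (ι : K →+ G) (π : G →+ R),
      Function.Injective ι ∧
      Function.Surjective π ∧
      ι.range = π.ker ∧
      Function.Bijective (fun φ : G →+ G => π.comp φ) := by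
  subst hR
  set R := AddSubgroup.closure {x : ℚ | ∃ p : ℕ, p.Prime ∧ p ≠ q ∧ x = 1 / (p : ℚ)} with hRdef
  have htf' : ∀ (n : ℕ) (k : K), n ≠ 0 → n • k = 0 → k = 0 := fun n k hn hk => by
    by_contra h
    exact htf k h (isOfFinAddOrder_iff_nsmul_eq_zero.2 ⟨n, Nat.pos_of_ne_zero hn, hk⟩)
  obtain ⟨k, hk⟩ := exists_family hfin hndiv
  let gen : {p : ℕ // p.Prime ∧ p ≠ q} → R := fun p =>
    ⟨1 / (p.1 : ℚ), AddSubgroup.subset_closure ⟨p.1, p.2.1, p.2.2, rfl⟩⟩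
  let ρ : ({p : ℕ // p.Prime ∧ p ≠ q} →₀ ℤ) →+ R :=
    Finsupp.liftAddHom fun p => zmultiplesHom R (gen p)
  have hρ1 : ∀ p n, ρ (Finsupp.single p n) = n • gen p := fun p n => by simp [ρ]
  have hρ2 : ∀ f, ((ρ f : R) : ℚ) = f.sum fun p n => (n : ℚ) * (1 / (p.1 : ℚ)) := fun f => by
    simp [ρ, gen, Finsupp.sum]
  have hρs : Function.Surjective ρ := by
    have : ∀ x ∈ R, ∃ f, ((ρ f : R) : ℚ) = x := by
      intro x hx
      induction hx using AddSubgroup.closure_induction with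
      | mem x hx =>
        obtain ⟨r, hr, hrq, rfl⟩ := hx
        exact ⟨Finsupp.single ⟨r, hr, hrq⟩ 1, by simp [hρ1, gen]⟩
      | zero => exact ⟨0, by simp⟩
      | add x y _ _ hx hy =>
        obtain ⟨f, rfl⟩ := hx
        obtain ⟨g, rfl⟩ := hy
        exact ⟨f + g, by simp⟩
      | neg x _ hx =>
        obtain ⟨f, rfl⟩ := hx
        exact ⟨-f, by simp⟩
    intro r
    obtain ⟨f, hf⟩ := this r.1 r.2
    exact ⟨f, Subtype.ext hf⟩
  obtain ⟨h, hh⟩ := exists_divided_hom k ρ.ker fun f hf p => by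
    refine dvd_of_sum_div_eq_zero f ?_ p
    rw [← hρ2, (AddMonoidHom.mem_ker).1 hf]
    rfl
  obtain ⟨G, _, ι, π, σ, hι, hπ, hex, hπσ, hσ, hgen⟩ := exists_pushout ρ hρs h
  refine ⟨G, inferInstance, ι, π, hι, hπ, hex, ?_⟩
  have hπι : ∀ c, π (ι c) = 0 := fun c => by
    have : ι c ∈ π.ker := hex ▸ ⟨c, rfl⟩
    exact this
  set X : {p : ℕ // p.Prime ∧ p ≠ q} → G := fun p => σ (Finsupp.single p 1) with hX
  have hπX : ∀ p, ((π (X p) : R) : ℚ) = 1 / (p.1 : ℚ) := fun p => by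
    simp [hX, hπσ, hρ1, gen]
  have hext : ∀ {A : Type} [AddCommGroup A] (α β : G →+ A), (∀ c, α (ι c) = β (ι c)) →
      (∀ p, α (X p) = β (X p)) → α = β := by
    intro A _ α β h1 h2
    have h3 : α.comp σ = β.comp σ := by
      ext p
      simpa using h2 p
    ext g
    obtain ⟨c, f, rfl⟩ := hgen g
    rw [map_add, map_add, h1]
    exact congrArg _ (DFunLike.congr_fun h3 f)
  have hrel : ∀ p r, p.1 • X p - ι (k p) = r.1 • X r - ι (k r) := by
    intro p r
    by_cases hpr : p = r
    · rw [hpr]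
    have hp0 : (p.1 : ℚ) ≠ 0 := by exact_mod_cast p.2.1.ne_zero
    have hr0 : (r.1 : ℚ) ≠ 0 := by exact_mod_cast r.2.1.ne_zero
    let l : {p : ℕ // p.Prime ∧ p ≠ q} →₀ ℤ :=
      Finsupp.single p (p.1 : ℤ) + Finsupp.single r (-(r.1 : ℤ))
    have hl : l ∈ ρ.ker := by
      rw [AddMonoidHom.mem_ker]
      apply Subtype.ext
      simp [l, hρ1, gen, hp0, hr0]
    have e1 := hσ ⟨l, hl⟩
    have e2 : h ⟨l, hl⟩ = k p - k r := by
      rw [hh]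
      have hp0' : (p.1 : ℤ) ≠ 0 := by exact_mod_cast p.2.1.ne_zero
      have hr0' : (r.1 : ℤ) ≠ 0 := by exact_mod_cast r.2.1.ne_zero
      have hd : Disjoint (Finsupp.single p (p.1 : ℤ)).support
          (Finsupp.single r (-(r.1 : ℤ))).support := by
        rw [Finsupp.support_single _ hp0', Finsupp.support_single _ (neg_ne_zero.2 hr0')]
        simpa using hpr
      change l.sum _ = _
      rw [Finsupp.sum_add_index_of_disjoint hd, Finsupp.sum_single_index (by simp),
        Finsupp.sum_single_index (by simp), Int.ediv_self hp0',
        Int.neg_ediv_of_dvd dvd_rfl, Int.ediv_self hr0']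
      module
    have e3 : ∀ (s : {p : ℕ // p.Prime ∧ p ≠ q}) (n : ℤ), σ (Finsupp.single s n) = n • X s := by
      intro s n
      rw [hX, ← map_zsmul]
      simp
    rw [e2] at e1
    simp only [l, map_add, e3, map_sub] at e1
    rw [sub_eq_sub_iff_add_eq_add]
    have e4 : p.1 • X p - r.1 • X r = ι (k p) - ι (k r) := by
      rw [← e1]; module
    rw [sub_eq_iff_eq_add] at e4
    rw [e4]; abel
  have hpow : ∀ (n : ℕ) (c : K), ∃ c', q ^ n • c' = c := by
    intro n
    induction n with
    | zero => exact fun c => ⟨c, by simp⟩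
    | succ n ih =>
      intro c
      obtain ⟨d, hd⟩ := ih c
      obtain ⟨e, he⟩ := hdiv d
      exact ⟨e, by rw [pow_succ, mul_smul, he, hd]⟩
  -- `P` is an arbitrary index, used to name the elements `p x_p - k_p` and `p ψ(x_p)` below.
  obtain ⟨p₀, hp₀g, hp₀⟩ := Nat.exists_infinite_primes (q + 1)
  let P : {p : ℕ // p.Prime ∧ p ≠ q} := ⟨p₀, hp₀, by omega⟩
  have hHom : ∀ θ : G →+ K, θ = 0 := by
    intro θ
    obtain ⟨a, n, han⟩ := hend (θ.comp ι)
    -- `z + a k_p = p q^n θ(x_p)` with `z = q^n θ(p x_p - k_p)`, which does not depend on `p`.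
    have key := hk (q ^ n • θ (P.1 • X P - ι (k P))) a fun p => ⟨q ^ n • θ (X p), by
      rw [hrel P p, map_sub, map_nsmul, smul_sub, ← han, smul_comm]
      simp⟩
    obtain ⟨hz, rfl⟩ := key
    have hqn : q ^ n ≠ 0 := pow_ne_zero _ hq.ne_zero
    have h0 : ∀ c, θ (ι c) = 0 := fun c => htf' _ _ hqn (by simpa using han c)
    refine hext _ _ (by simpa using h0) fun p => ?_
    have h1 := htf' _ _ hqn hz
    rw [hrel P p, map_sub, h0, sub_zero, map_nsmul] at h1
    simpa using htf' _ _ p.2.1.ne_zero h1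
  constructor
  · intro φ₁ φ₂ h12
    have hmem : ∀ g, (φ₁ - φ₂) g ∈ ι.range := fun g => by
      rw [hex, AddMonoidHom.mem_ker, AddMonoidHom.sub_apply, map_sub, sub_eq_zero]
      exact DFunLike.congr_fun h12 g
    -- `φ₁ - φ₂` takes values in `ι K`, so it factors through a map `G → K`.
    let θ : G →+ K := ((AddMonoidHom.ofInjective hι).symm : ι.range →+ K).comp
      ((φ₁ - φ₂).codRestrict ι.range hmem)
    have hθ : ∀ g, ι (θ g) = (φ₁ - φ₂) g := fun g =>
      congrArg Subtype.val ((AddMonoidHom.ofInjective hι).apply_symm_apply ⟨_, hmem g⟩)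
    ext g
    have := hθ g
    rw [hHom θ] at this
    exact sub_eq_zero.1 (by simpa using this.symm)
  · intro ψ
    have hψι : ∀ c, ψ (ι c) = 0 := fun c => by
      apply Subtype.ext
      refine eq_zero_of_infinitely_divisible hq fun n => ?_
      obtain ⟨d, rfl⟩ := hpow n c
      exact ⟨ψ (ι d), (ψ (ι d)).2, by simp⟩
    let t : ℚ := P.1 * (ψ (X P) : R)
    have ht : ∀ p : {p : ℕ // p.Prime ∧ p ≠ q}, (p.1 : ℚ) * (ψ (X p) : R) = t := fun p => by
      have := congrArg (fun g => ((ψ g : R) : ℚ)) (hrel p P)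
      simpa [hψι] using this
    obtain ⟨m, hm⟩ : ∃ m : ℤ, t = m := by
      refine eq_intCast_of_padicNorm_le_one fun p hp => ?_
      have : Fact p.Prime := ⟨hp⟩
      by_cases hpq : p = q
      · have htR : t ∈ R := by
          have := R.nsmul_mem (ψ (X P)).2 P.1
          simpa [t] using this
        simpa [hpq] using padicNorm_le_of_mem_closure p hp htR
      · have h1 := padicNorm_le_of_mem_closure p hp (ψ (X ⟨p, hp, hpq⟩)).2
        rw [if_neg hpq] at h1
        have hp0 : (0 : ℚ) < p := by exact_mod_cast hp.pos
        rw [← ht ⟨p, hp, hpq⟩, padicNorm.mul, padicNorm.padicNorm_p_of_prime]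
        exact (mul_le_mul_of_nonneg_left h1 (by positivity)).trans
          (inv_mul_cancel₀ hp0.ne').le
    refine ⟨m • AddMonoidHom.id G, hext _ _ (fun c => ?_) fun p => ?_⟩
    · simp [hψι, hπι]
    · have hp0 : (p.1 : ℚ) ≠ 0 := by exact_mod_cast p.2.1.ne_zero
      apply Subtype.ext
      have h1 := ht p
      rw [hm] at h1
      simp only [AddMonoidHom.comp_apply, AddMonoidHom.smul_apply, AddMonoidHom.id_apply,
        map_zsmul, AddSubgroup.coe_zsmul, hπX, zsmul_eq_mul]
      rw [← h1]
      field_simp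
end

section
/- Let H be an additive subgroup of ℚ containing 1 that is not closed under multiplication (H is not a ring), and let H₀ = {r ∈ ℚ : rH ⊆ H} be its nucleus, a subring of ℚ. Then H does not admit any cellular cover with free kernel over the nucleus: there is no cellular exact sequence 0 → F → G → H → 0 of abelian groups in which the kernel F is isomorphic, as an abelian group, to a nonzero direct sum of copies of H₀ (a nonzero free H₀-module). -/
/-!
Write `H₀` for the nucleus. Suppose `0 → F → G → H → 0` is cellular with `F` a nonzero direct sum
of copies of `H₀`. Let `α : F → H₀` be a coordinate, `e ∈ F` with `α e = 1`, and `g ∈ G` over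
`1 ∈ H`. As `ℚ` is injective, `α` extends to `A : G → ℚ` with `A g = 0`.

* `A` takes values in `H`: if `π y = m / n` in lowest terms, then `1 / n ∈ H`, so `H₀ / n ⊆ H`.
  Hence `A` lifts to an endomorphism `ψ` of `G`, and `ψ e = g + v` with `v ∈ F`.
* If `π z = 1 / n` and `r = n A(z) ∈ H₀`, then `(A - r π) / n` also takes values in `H`, and lifts
  to some `χ`. By uniqueness of lifts, `ψ - n χ` is multiplication by `r`. Evaluating at `e` and
  applying `A` gives `A v - 2 r ∈ n H₀`, where `v` does not depend on `n`.
* Therefore `2 A - (A v) π` maps `G` into `H₀`; it sends `e` to `2`. Composing with an embedding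
  of `H₀` in `F` gives a nonzero endomorphism of `G` killed by `π`, contrary to uniqueness of lifts.
-/


/-- The nucleus of an additive subgroup `H` of `ℚ`: the set of rationals `r` with `rH ⊆ H`,
viewed as an additive subgroup of `ℚ` (it is in fact the largest subring of `ℚ` over which
`H` is a module). -/
def AddSubgroup.nucleus (H : AddSubgroup ℚ) : AddSubgroup ℚ where
  carrier := {r : ℚ | ∀ h ∈ H, r * h ∈ H}
  zero_mem' := by
    intro h hh
    simpa using H.zero_mem
  add_mem' := by
    intro a b ha hb h hh
    rw [add_mul]
    exact H.add_mem (ha h hh) (hb h hh)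
  neg_mem' := by
    intro a ha h hh
    rw [neg_mul]
    exact H.neg_mem (ha h hh)

namespace CellularCover

theorem inv_den_mem {H : AddSubgroup ℚ} (h1 : (1 : ℚ) ∈ H) {q : ℚ} (hq : q ∈ H) :
    (1 : ℚ) / q.den ∈ H := by
  have hd : (q.den : ℚ) ≠ 0 := by exact_mod_cast q.den_nz
  have hb : (1 : ℤ) = q.num * Int.gcdA q.num q.den + q.den * Int.gcdB q.num q.den := by
    rw [← Int.gcd_eq_gcd_ab]
    have := q.reduced
    simp only [Nat.Coprime] at this
    simp [Int.gcd, this]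
  have hb' : (1 : ℚ) = q.num * Int.gcdA q.num q.den + q.den * Int.gcdB q.num q.den := by
    exact_mod_cast hb
  have hm := H.add_mem (H.zsmul_mem hq (Int.gcdA q.num q.den))
    (H.zsmul_mem h1 (Int.gcdB q.num q.den))
  convert hm using 1
  have hqe : q * q.den = q.num := Rat.mul_den_eq_num q
  simp only [zsmul_eq_mul, mul_one]
  rw [div_eq_iff hd]
  linear_combination hb' - (Int.gcdA q.num q.den : ℚ) * hqe

theorem inv_lcm_mem {H : AddSubgroup ℚ} {n k : ℕ} (hn0 : n ≠ 0) (hk0 : k ≠ 0)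
    (hn : (1 : ℚ) / n ∈ H) (hk : (1 : ℚ) / k ∈ H) : (1 : ℚ) / (n.lcm k : ℕ) ∈ H := by
  have hb : ((n.gcd k : ℕ) : ℚ) = n * Nat.gcdA n k + k * Nat.gcdB n k := by
    exact_mod_cast Nat.gcd_eq_gcd_ab n k
  have hl : ((n.gcd k : ℕ) : ℚ) * (n.lcm k : ℕ) = n * k := by
    exact_mod_cast Nat.gcd_mul_lcm n k
  have hm := H.add_mem (H.zsmul_mem hk (Nat.gcdA n k)) (H.zsmul_mem hn (Nat.gcdB n k))
  convert hm using 1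
  have hn' : (n : ℚ) ≠ 0 := by exact_mod_cast hn0
  have hk' : (k : ℚ) ≠ 0 := by exact_mod_cast hk0
  have hl' : ((n.lcm k : ℕ) : ℚ) ≠ 0 := by exact_mod_cast Nat.lcm_ne_zero hn0 hk0
  simp only [zsmul_eq_mul]
  field_simp
  linear_combination -hl + ((n.lcm k : ℕ) : ℚ) * hb

/-- Every element of `H` is an integer multiple of some `1 / (n * M) ∈ H`, where `1 / n ∈ H` is
prescribed. -/
theorem exists_common_den {H : AddSubgroup ℚ} (h1 : (1 : ℚ) ∈ H) {n : ℕ} (hn0 : n ≠ 0)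
    (hn : (1 : ℚ) / n ∈ H) {q : ℚ} (hq : q ∈ H) :
    ∃ (M : ℕ) (m : ℤ), M ≠ 0 ∧ (1 : ℚ) / (n * M : ℕ) ∈ H ∧ q = m * (1 / (n * M : ℕ)) := by
  obtain ⟨M, hM⟩ := Nat.dvd_lcm_left n q.den
  obtain ⟨M', hM'⟩ := Nat.dvd_lcm_right n q.den
  have hl0 : n.lcm q.den ≠ 0 := Nat.lcm_ne_zero hn0 q.den_nz
  refine ⟨M, q.num * M', ?_, ?_, ?_⟩
  · rintro rfl
    exact hl0 (by simpa using hM)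
  · rw [← hM]
    exact inv_lcm_mem hn0 q.den_nz hn (inv_den_mem h1 hq)
  · rw [← hM]
    have hl : ((n.lcm q.den : ℕ) : ℚ) ≠ 0 := by exact_mod_cast hl0
    have hc : ((n.lcm q.den : ℕ) : ℚ) = q.den * M' := by exact_mod_cast hM'
    have hqe : q * q.den = q.num := Rat.mul_den_eq_num q
    rw [mul_one_div, eq_div_iff hl, hc]
    push_cast
    linear_combination (M' : ℚ) * hqe

/-- A homomorphism to `ℚ` with values in `H` lifts along a cellular cover of `H`. -/
theorem exists_lift {H : AddSubgroup ℚ} {G : Type} [AddCommGroup G] {π : G →+ H}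
    (hsurj : Function.Surjective (fun φ : G →+ G => π.comp φ)) (B : G →+ ℚ)
    (hB : ∀ y, B y ∈ H) : ∃ φ : G →+ G, ∀ y, (π (φ y) : ℚ) = B y := by
  obtain ⟨φ, hφ⟩ := hsurj (B.codRestrict H hB)
  exact ⟨φ, fun y => congrArg Subtype.val (DFunLike.congr_fun hφ y)⟩

/-- The nonzero homomorphism `2 A - (A v) π : G → H₀` attached to a rational functional `A` on `G`
which is `H₀`-valued on `ker π`. -/
theorem exists_hom_nucleus {H : AddSubgroup ℚ} (h1 : (1 : ℚ) ∈ H) {G : Type} [AddCommGroup G]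
    {π : G →+ H} (hπ : Function.Surjective π)
    (hbij : Function.Bijective (fun φ : G →+ G => π.comp φ))
    (A : G →+ ℚ) {g e : G} (hg : (π g : ℚ) = 1) (hAg : A g = 0) (he : (π e : ℚ) = 0)
    (hAe : A e = 1) (hA : ∀ k, (π k : ℚ) = 0 → A k ∈ H.nucleus) :
    ∃ D : G →+ ℚ, D e = 2 ∧ ∀ y, D y ∈ H.nucleus := by
  let p : G →+ ℚ := H.subtype.comp π
  have hp : ∀ y, p y = π y := fun _ => rfl
  have huniq : ∀ φ φ' : G →+ G, (∀ y, p (φ y) = p (φ' y)) → φ = φ' := fun φ φ' h =>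
    hbij.1 (AddMonoidHom.ext fun y => Subtype.ext (h y))
  have hsec : ∀ {q : ℚ}, q ∈ H → ∃ y, p y = q := fun {q} hq => by
    obtain ⟨y, hy⟩ := hπ ⟨q, hq⟩
    exact ⟨y, by rw [hp, hy]⟩
  -- If `π z = 1 / n`, then `n z - g` lies in the kernel, so `n A(z) ∈ H₀`.
  have hr : ∀ {n : ℕ}, n ≠ 0 → ∀ {z : G}, p z = 1 / n → (n : ℚ) * A z ∈ H.nucleus := by
    intro n hn z hz
    have hn' : (n : ℚ) ≠ 0 := by exact_mod_cast hn
    have := hA (n • z - g) (by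
      rw [← hp, map_sub, map_nsmul, hz, hp, hg, nsmul_eq_mul]
      field_simp
      ring)
    simpa [hAg] using this
  have hone : (1 : ℚ) / (1 : ℕ) ∈ H := by simpa using h1
  have hAH : ∀ y, A y ∈ H := by
    intro y
    obtain ⟨M, m, hM, hMH, hy⟩ := exists_common_den h1 one_ne_zero hone (π y).2
    rw [one_mul] at hMH hy
    have hM' : (M : ℚ) ≠ 0 := by exact_mod_cast hM
    obtain ⟨z, hz⟩ := hsec hMH
    have hk := hA (y - m • z) (by
      rw [← hp, map_sub, map_zsmul, hz, hp, hy, zsmul_eq_mul, sub_self])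
    have h2 := H.add_mem (H.zsmul_mem (hr hM hz _ hMH) m) (hk 1 h1)
    convert h2 using 1
    simp only [map_sub, map_zsmul, zsmul_eq_mul]
    field_simp
    ring
  obtain ⟨ψ, hψ⟩ := exists_lift hbij.2 A hAH
  have hv : (π (ψ e - g) : ℚ) = 0 := by
    rw [← hp, map_sub, hp, hp, hψ, hg, hAe, sub_self]
  have key : ∀ {n : ℕ}, n ≠ 0 → (1 : ℚ) / n ∈ H → ∀ {z : G}, p z = 1 / n →
      ∃ s ∈ H.nucleus, A (ψ e - g) - 2 * (n * A z) = n * s := by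
    intro n hn hnH z hz
    have hn' : (n : ℚ) ≠ 0 := by exact_mod_cast hn
    obtain ⟨r, hrdef⟩ : ∃ r : ℚ, r = n * A z := ⟨_, rfl⟩
    have hrH : r ∈ H.nucleus := hrdef ▸ hr hn hz
    let C : G →+ ℚ := (AddMonoidHom.mulLeft (1 / (n : ℚ))).comp
      (A - (AddMonoidHom.mulLeft r).comp p)
    have hC : ∀ y, C y = 1 / n * (A y - r * p y) := fun _ => rfl
    have hCH : ∀ y, C y ∈ H := by
      intro y
      obtain ⟨M, m, hM, hMH, hy⟩ := exists_common_den h1 hn hnH (π y).2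
      have hM' : (M : ℚ) ≠ 0 := by exact_mod_cast hM
      obtain ⟨w, hw⟩ := hsec hMH
      have hk := hA (y - m • w) (by
        rw [← hp, map_sub, map_zsmul, hw, hp, hy, zsmul_eq_mul, sub_self])
      have hk' := hA (z - M • w) (by
        rw [← hp, map_sub, map_nsmul, hz, hw, nsmul_eq_mul]
        push_cast
        field_simp
        ring)
      have h2 := H.sub_mem (hk _ hnH) (H.zsmul_mem (hk' _ hMH) m)
      convert h2 using 1
      rw [hC, hp, hy]
      simp only [map_sub, map_zsmul, map_nsmul, zsmul_eq_mul, nsmul_eq_mul, hrdef]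
      push_cast
      field_simp
      ring
    obtain ⟨χ, hχ⟩ := exists_lift hbij.2 C hCH
    obtain ⟨ρ, hρ⟩ := exists_lift hbij.2 ((AddMonoidHom.mulLeft r).comp p)
      (fun y => hrH _ (π y).2)
    have hρ' : ∀ y, p (ρ y) = r * p y := hρ
    have hsum : ψ = n • χ + ρ := huniq _ _ fun y => by
      rw [AddMonoidHom.add_apply, AddMonoidHom.nsmul_apply, map_add, map_nsmul, hρ', hp, hp (χ y),
        hψ, hχ, hC, nsmul_eq_mul]
      field_simp
      ring
    -- `ρ` multiplies by `r`: clear the denominator of `r` and use uniqueness of lifts.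
    have hden : r.den • ρ = r.num • AddMonoidHom.id G := huniq _ _ fun y => by
      rw [AddMonoidHom.nsmul_apply, AddMonoidHom.zsmul_apply, map_nsmul, map_zsmul, hρ',
        AddMonoidHom.id_apply, nsmul_eq_mul, zsmul_eq_mul, ← Rat.mul_den_eq_num r]
      ring
    have hAρ : A (ρ e) = r := by
      have h3 := congrArg A (DFunLike.congr_fun hden e)
      rw [AddMonoidHom.nsmul_apply, AddMonoidHom.zsmul_apply, map_nsmul, map_zsmul,
        AddMonoidHom.id_apply, hAe, nsmul_eq_mul, zsmul_eq_mul, ← Rat.mul_den_eq_num r] at h3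
      have hd : (r.den : ℚ) ≠ 0 := by exact_mod_cast r.den_nz
      apply mul_left_cancel₀ hd
      linear_combination h3
    refine ⟨A (χ e - z), hA _ ?_, ?_⟩
    · rw [← hp, map_sub, hz, hp, hχ, hC, hAe, hp, he]
      ring
    · have h4 : ψ e = n • χ e + ρ e := DFunLike.congr_fun hsum e
      rw [h4]
      simp only [map_sub, map_add, map_nsmul, nsmul_eq_mul, hAg, hAρ]
      rw [hrdef]
      ring
  refine ⟨(AddMonoidHom.mulLeft 2).comp A - (AddMonoidHom.mulLeft (A (ψ e - g))).comp p, ?_, ?_⟩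
  · change 2 * A e - A (ψ e - g) * p e = 2
    rw [hAe, hp, he]
    ring
  · intro y
    change 2 * A y - A (ψ e - g) * p y ∈ H.nucleus
    obtain ⟨M, m, hM, hMH, hy⟩ := exists_common_den h1 one_ne_zero hone (π y).2
    rw [one_mul] at hMH hy
    have hM' : (M : ℚ) ≠ 0 := by exact_mod_cast hM
    obtain ⟨z, hz⟩ := hsec hMH
    obtain ⟨s, hs, hse⟩ := key hM hMH hz
    have hk := hA (y - m • z) (by
      rw [← hp, map_sub, map_zsmul, hz, hp, hy, zsmul_eq_mul, sub_self])
    have h2 := H.nucleus.sub_mem (H.nucleus.zsmul_mem hk 2) (H.nucleus.zsmul_mem hs m)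
    convert h2 using 1
    rw [hp, hy, eq_add_of_sub_eq hse]
    simp only [map_sub, map_zsmul, zsmul_eq_mul]
    push_cast
    field_simp
    ring

/-- `ℚ` is an injective abelian group. -/
theorem exists_extension_rat {F G : Type} [AddCommGroup F] [AddCommGroup G] (ι : F →+ G)
    (hι : Function.Injective ι) (α : F →+ ℚ) : ∃ A : G →+ ℚ, ∀ x, A (ι x) = α x := by
  obtain ⟨A, hA⟩ := (Module.Baer.of_divisible (A := ℚ)).extension_property_addMonoidHom ι hι α
  exact ⟨A, fun x => DFunLike.congr_fun hA x⟩

end CellularCover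

/-- If `H ⊆ ℚ` is an additive subgroup containing `1` that is not closed
under multiplication, and `H₀` is its nucleus, then there is no cellular exact sequence
`0 → F → G → H → 0` whose kernel `F` is (as abelian group) a nonzero free `H₀`-module, i.e.
a nonzero direct sum of copies of `H₀`. -/
theorem no_cellular_cover_with_free_nucleus_kernel (H : AddSubgroup ℚ) (h1 : (1 : ℚ) ∈ H)
    (hnotring : ¬ ∀ x ∈ H, ∀ y ∈ H, x * y ∈ H) :
    ¬ ∃ (I : Type) (_ : Nonempty I) (F G : Type) (_ : AddCommGroup F) (_ : AddCommGroup G)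
        (ι : F →+ G) (π : G →+ H),
        Nonempty (F ≃+ (I →₀ H.nucleus)) ∧
        Function.Injective ι ∧
        Function.Surjective π ∧
        ι.range = π.ker ∧
        Function.Bijective (fun φ : G →+ G => π.comp φ) := by
  rintro ⟨I, ⟨i⟩, F, G, _, _, ι, π, ⟨E⟩, hι, hπ, hker, hbij⟩
  have hπι : ∀ x, π (ι x) = 0 := fun x => by
    have : ι x ∈ π.ker := hker ▸ ⟨x, rfl⟩
    exact this
  have hone : (1 : ℚ) ∈ H.nucleus := fun h hh => by rwa [one_mul]
  let α : F →+ ℚ := H.nucleus.subtype.comp ((Finsupp.applyAddHom i).comp E.toAddMonoidHom)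
  have hα : ∀ x, α x = (E x i : ℚ) := fun _ => rfl
  obtain ⟨A', hA'⟩ := CellularCover.exists_extension_rat ι hι α
  obtain ⟨g, hg⟩ := hπ ⟨1, h1⟩
  have hg' : (π g : ℚ) = 1 := by rw [hg]
  let A : G →+ ℚ := A' - (AddMonoidHom.mulLeft (A' g)).comp (H.subtype.comp π)
  have hA : ∀ y, A y = A' y - A' g * (π y : ℚ) := fun _ => rfl
  have hAι : ∀ x, A (ι x) = α x := fun x => by rw [hA, hπι, hA']; simp
  let j : H.nucleus →+ F := E.symm.toAddMonoidHom.comp (Finsupp.singleAddHom i)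
  have hj : ∀ r, α (j r) = r := fun r => by
    rw [hα]
    simp [j]
  obtain ⟨D, hDe, hD⟩ := CellularCover.exists_hom_nucleus h1 hπ hbij A (g := g)
    (e := ι (j ⟨1, hone⟩)) hg' (by rw [hA, hg']; ring) (by rw [hπι]; rfl) (by rw [hAι, hj])
    (fun k hk => by
      have : k ∈ π.ker := Subtype.ext hk
      rw [← hker] at this
      obtain ⟨x, rfl⟩ := this
      rw [hAι, hα]
      exact (E x i).2)
  have hzero : (ι.comp (j.comp (D.codRestrict H.nucleus hD))) = 0 := hbij.1 (by
    ext y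
    simp [hπι])
  have h5 := congrArg A (DFunLike.congr_fun hzero (ι (j ⟨1, hone⟩)))
  simp only [AddMonoidHom.comp_apply, hAι, hj, AddMonoidHom.zero_apply, map_zero] at h5
  exact two_ne_zero (hDe.symm.trans h5)
end

section
/- Let K be a torsion-free reduced abelian group of rank κ with 1 ≤ κ < 2^ℵ₀. Then there exists a cotorsion-free abelian group G containing K as a subgroup, of rank 3 if κ = 1 and of rank 3κ + 1 if κ ≥ 2, such that Hom(G, K) = 0 and every homomorphism G → G/K is an integer multiple of the canonical projection π : G → G/K. In particular, 0 → K → G → G/K → 0 is a cellular exact sequence. -/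
/-!
Write `Ẑ = ∏_p ℤ_p`. A torsion-free reduced group `K` is a pure subgroup of a power of `Ẑ`: for `x`
not divisible by `p`, coordinate functions on finitely generated subgroups, glued by compactness of
`ℤ_p`, give a homomorphism `K → ℤ_p` that is nonzero at `x` modulo `p` (`exists_characters`). Choose
elements `k t` (`t ∈ T`) generating `K` up to torsion, and elements `α t, β t` of `Ẑ` such that in each
`ℤ_p` their components are algebraically independent over the ring generated by all coordinates of
elements of `K`; there is room for this since `K` and `T` have fewer than `2^ℵ₀` elements
(`exists_datum`). Let `G` be the pure subgroup of `Ẑ^K × Ẑ` generated by `K`, by `f = (0, 1)` and by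
the elements `e t = (α t * k t, β t)`. Its rank is `#T + 1 + κ`, so `#T = 1` works if `κ = 1`, and
`#T = 2κ` otherwise. The second projection `σ : G → Ẑ` has kernel `K` and so embeds `G / K` into `Ẑ`.

The key point is that every homomorphism `h : G → Ẑ` satisfies
`h (e t) = α t * h (k t) + β t * h f`, because `ℤ` is dense in `Ẑ`, `G` is pure, and `Ẑ` is Hausdorff
in its `ℤ`-adic topology (`Datum.hom_e`).
* If `h` comes from a homomorphism `G → K` followed by a coordinate, then `h (e t)`, `h (k t)` and
  `h f` are coordinates of elements of `K`, and genericity forces `h (k t) = h f = 0`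
  (`generic_linear`); hence `Hom(G, K) = 0`.
* If `h` comes from a homomorphism `G → G / K ⊆ Ẑ`, then up to integer factors these three elements
  are integral combinations of `1` and the `β s`; comparing coefficients gives `h (k t) = 0` and
  `h f ∈ ℤ` (`generic_bilinear`), so `h` is the multiple `h f` of `σ`.

Finally `G` has fewer than `2^ℵ₀` elements and is separated by homomorphisms to `Ẑ`. A nonzero
`Ẑ → G` followed by one of these is `Ẑ`-linear, so it would be injective on a copy of some `ℤ_p`, which
is too large. So `G` is cotorsion-free.
-/

open TensorProduct

/-- `Ẑ = ∏_p ℤ_p`, the product over all primes of the `p`-adic integers. -/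
abbrev ZHat : Type := (p : Nat.Primes) → @PadicInt p.1 ⟨p.2⟩

namespace CellularCover

/-! ### The ring `Ẑ` -/

lemma factPrimes (p : Nat.Primes) : Fact p.1.Prime := ⟨p.2⟩

attribute [local instance] factPrimes

lemma zhat_tf {n : ℕ} (hn : n ≠ 0) {x : ZHat} (h : n • x = 0) : x = 0 := by
  funext p
  have := congrFun h p
  simpa [hn] using this

lemma zhat_dvd_of_prime (p : Nat.Primes) (x : ZHat) (h : ((p.1 : ℕ) : ℤ_[p.1]) ∣ x p) :
    ∃ y : ZHat, p.1 • y = x := by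
  have : ∀ q : Nat.Primes, ∃ y : ℤ_[q.1], p.1 • y = x q := by
    intro q
    by_cases hq : q = p
    · subst hq
      obtain ⟨y, hy⟩ := h
      exact ⟨y, by rw [hy, nsmul_eq_mul]⟩
    · have hu : IsUnit ((p.1 : ℕ) : ℤ_[q.1]) := by
        rw [PadicInt.isUnit_iff]
        by_contra hne
        have h1 : ‖(((p.1 : ℕ) : ℤ) : ℤ_[q.1])‖ < 1 :=
          lt_of_le_of_ne (PadicInt.norm_le_one _) (by simpa using hne)
        rw [PadicInt.norm_int_lt_one_iff_dvd, Int.natCast_dvd_natCast] at h1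
        exact hq (Subtype.ext ((Nat.prime_dvd_prime_iff_eq q.2 p.2).1 h1))
      obtain ⟨u, hu⟩ := hu
      exact ⟨↑u⁻¹ * x q, by rw [nsmul_eq_mul, ← hu, Units.mul_inv_cancel_left]⟩
  choose y hy using this
  exact ⟨y, funext hy⟩

/-- `ℤ` is dense in `Ẑ`. -/
lemma zhat_approx (n : ℕ) (hn : n ≠ 0) (x : ZHat) : ∃ (a : ℤ) (y : ZHat), n • y = x - a := by
  induction n using induction_on_primes with
  | zero => exact absurd rfl hn
  | one => exact ⟨0, x, by simp⟩
  | prime_mul p m hp ih =>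
    obtain ⟨q, rfl⟩ : ∃ q : Nat.Primes, p = q.1 := ⟨⟨p, hp⟩, rfl⟩
    obtain ⟨a, y, hy⟩ := ih (by rintro rfl; simp at hn)
    obtain ⟨c, -, hc⟩ := PadicInt.exists_mem_range (y q)
    rw [PadicInt.maximalIdeal_eq_span_p, Ideal.mem_span_singleton] at hc
    obtain ⟨z, hz⟩ := zhat_dvd_of_prime q (y - (c : ℤ)) (by simpa using hc)
    refine ⟨a + m * c, z, ?_⟩
    rw [mul_comm, mul_smul, hz, smul_sub, hy]
    simp only [nsmul_eq_mul]
    push_cast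
    ring

/-- The `ℤ`-adic topology of `Ẑ` is Hausdorff. -/
lemma zhat_hausdorff {x : ZHat} (h : ∀ n : ℕ, n ≠ 0 → ∃ y : ZHat, n • y = x) : x = 0 := by
  funext p
  by_contra hx
  have h1 : ∀ k : ℕ, ‖x p‖ ≤ (p.1 : ℝ) ^ (-(k : ℤ)) := by
    intro k
    obtain ⟨y, hy⟩ := h (p.1 ^ k) (pow_ne_zero _ p.2.ne_zero)
    rw [PadicInt.norm_le_pow_iff_mem_span_pow, Ideal.mem_span_singleton]
    exact ⟨y p, by rw [← hy, Pi.smul_apply, nsmul_eq_mul]; push_cast; rfl⟩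
  obtain ⟨k, hk⟩ := PadicInt.exists_pow_neg_lt p.1 (norm_pos_iff.2 hx)
  exact absurd (h1 k) (not_le.2 hk)

/-- `ℤ` is pure in `Ẑ`. -/
lemma zhat_int_pure (n : ℕ) (hn : n ≠ 0) (y : ZHat) (a : ℤ) (h : n • y = (a : ZHat)) :
    ∃ b : ℤ, y = b := by
  induction n using induction_on_primes generalizing a with
  | zero => exact absurd rfl hn
  | one => exact ⟨a, by simpa using h⟩
  | prime_mul p m hp ih =>
    obtain ⟨q, rfl⟩ : ∃ q : Nat.Primes, p = q.1 := ⟨⟨p, hp⟩, rfl⟩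
    have h1 : ((q.1 : ℕ) : ℤ_[q.1]) ^ 1 ∣ (a : ℤ_[q.1]) := by
      have := congrFun h q
      refine ⟨m * y q, ?_⟩
      rw [Pi.smul_apply, Pi.intCast_apply, nsmul_eq_mul, Nat.cast_mul] at this
      rw [← this]; ring
    rw [PadicInt.pow_p_dvd_int_iff] at h1
    obtain ⟨b, rfl⟩ := h1
    refine ih (by rintro rfl; simp at hn) b ?_
    have h2 : q.1 • (m • y - (b : ZHat)) = 0 := by
      rw [smul_sub, ← mul_smul, h]
      simp
    exact sub_eq_zero.1 (zhat_tf hp.ne_zero h2)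

/-- Additive maps into `ZHat` automatically respect `ZHat`-linear relations: if `e - a • x - b • y`
is divisible by `n` whenever `α ≡ a` and `β ≡ b` modulo `n`, then `h e = α * h x + β * h y`. -/
lemma zhat_continuity {A : Type*} [AddCommGroup A] (h : A →+ ZHat) (α β : ZHat) (e x y : A)
    (H : ∀ (n : ℕ), n ≠ 0 → ∀ (a b : ℤ) (α' β' : ZHat), n • α' = α - a → n • β' = β - b →
      ∃ g : A, n • g = e - a • x - b • y) :
    h e = α * h x + β * h y := by
  rw [← sub_eq_zero]
  refine zhat_hausdorff fun n hn => ?_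
  obtain ⟨a, α', ha⟩ := zhat_approx n hn α
  obtain ⟨b, β', hb⟩ := zhat_approx n hn β
  obtain ⟨g, hg⟩ := H n hn a b α' β' ha hb
  refine ⟨h g - α' * h x - β' * h y, ?_⟩
  rw [smul_sub, smul_sub, ← map_nsmul, hg, ← smul_mul_assoc, ← smul_mul_assoc, ha, hb]
  simp only [map_sub, map_zsmul, zsmul_eq_mul]
  ring

lemma zhat_linear (h : ZHat →+ ZHat) (r x : ZHat) : h (r * x) = r * h x := by
  have := zhat_continuity h r 0 (r * x) x 0 (fun n _ a b α' β' ha _ =>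
    ⟨α' * x, by rw [← smul_mul_assoc, ha, zsmul_eq_mul]; ring_nf⟩)
  simpa using this

lemma continuum_le_padicInt (p : ℕ) [Fact p.Prime] : Cardinal.continuum ≤ Cardinal.mk ℤ_[p] := by
  have := continuum_le_cardinal_of_isOpen ℚ_[p] (s := Metric.ball (0 : ℚ_[p]) 1)
    Metric.isOpen_ball ⟨0, by simp⟩
  refine this.trans (Cardinal.mk_le_mk_of_subset (t := {x : ℚ_[p] | ‖x‖ ≤ 1}) ?_)
  intro x hx
  exact le_of_lt (by simpa using hx)

/-- A group of size below the continuum separated by homomorphisms to `ZHat` is cotorsion-free: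
if `χ (f x)` has a nonzero `p`-component, then `r ↦ f (r * x)` embeds `ℤ_p` into the group. -/
lemma cotorsionFree_of_card_lt {A : Type} [AddCommGroup A] (hA : Cardinal.mk A < Cardinal.continuum)
    (sep : ∀ a : A, (∀ χ : A →+ ZHat, χ a = 0) → a = 0) (f : ZHat →+ A) : f = 0 := by
  ext x
  refine sep _ fun χ => ?_
  by_contra hne
  obtain ⟨p, hp⟩ := Function.ne_iff.1 hne
  refine absurd hA (not_lt.2 ((continuum_le_padicInt p.1).trans ?_))
  refine Cardinal.mk_le_of_injective (f := fun s : ℤ_[p.1] => f (Pi.single p s * x)) ?_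
  intro s s' hs
  have h1 := congrArg (fun a => χ a p) hs
  have h2 : ∀ r : ZHat, χ (f (r * x)) = r * χ (f x) := fun r => zhat_linear (χ.comp f) r x
  simp only [h2, Pi.mul_apply, Pi.single_eq_same] at h1
  exact mul_right_cancel₀ hp h1

/-! ### Homomorphisms to `Ẑ` and generic elements -/

/-- In a torsion-free group every `x` not divisible by `p` is detected modulo `p` by a homomorphism
to `ℤ_p`. On a finitely generated subgroup a coordinate function does this; compactness of `ℤ_p`
glues these along an ultrafilter on the finite subsets. -/
lemma exists_padic_character {K : Type} [AddCommGroup K] [Module.IsTorsionFree ℤ K]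
    (p : ℕ) [Fact p.Prime] (x : K) (hx : ¬ ∃ y, p • y = x) :
    ∃ φ : K →+ ℤ_[p], ¬ (p : ℤ_[p]) ∣ φ x := by
  have key : ∀ s : Finset K, ∃ φ : K → ℤ, ¬ (p : ℤ) ∣ φ x ∧
      ∀ a ∈ s, ∀ b ∈ s, φ (a + b) = φ a + φ b := by
    classical
    intro s
    let A : Submodule ℤ K := Submodule.span ℤ (insert x s : Finset K)
    have : Module.Finite ℤ A := Module.Finite.span_finset ℤ _
    have : Module.Free ℤ A := Module.free_of_finite_type_torsion_free'
    have hxA : x ∈ A := Submodule.subset_span (by simp)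
    have hsA : ∀ a ∈ s, a ∈ A := fun a ha => Submodule.subset_span (by simp [ha])
    let B := Module.Free.chooseBasis ℤ A
    have : ∃ i, ¬ (p : ℤ) ∣ B.repr ⟨x, hxA⟩ i := by
      by_contra! hall
      choose c hc using hall
      refine hx ⟨((∑ i, c i • B i : A) : K), ?_⟩
      have : p • (∑ i, c i • B i : A) = ⟨x, hxA⟩ := by
        conv_rhs => rw [← B.sum_repr ⟨x, hxA⟩]
        rw [Finset.smul_sum]
        refine Finset.sum_congr rfl fun i _ => ?_
        rw [hc i, mul_smul, natCast_zsmul]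
      simpa using congrArg Subtype.val this
    obtain ⟨i, hi⟩ := this
    refine ⟨fun k => if h : k ∈ A then B.repr ⟨k, h⟩ i else 0, by simpa [hxA] using hi, ?_⟩
    intro a ha b hb
    have ha := hsA a ha
    have hb := hsA b hb
    have hab := A.add_mem ha hb
    simp only [ha, hb, hab, dif_pos]
    rw [← Finsupp.add_apply, ← map_add]
    rfl
  choose φ hφx hφ using key
  let U : Ultrafilter (Finset K) := Ultrafilter.of Filter.atTop
  have hU : (U : Filter (Finset K)) ≤ Filter.atTop := Ultrafilter.of_le _
  have hlim : ∀ k : K, ∃ l : ℤ_[p],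
      Filter.Tendsto (fun s => (φ s k : ℤ_[p])) U (nhds l) := fun k =>
    ⟨_, (U.map fun s => (φ s k : ℤ_[p])).le_nhds_lim⟩
  choose Φ hΦ using hlim
  have hadd : ∀ a b, Φ (a + b) = Φ a + Φ b := by
    intro a b
    refine tendsto_nhds_unique (hΦ (a + b)) (((hΦ a).add (hΦ b)).congr' ?_)
    refine hU ?_
    classical
    filter_upwards [Filter.eventually_ge_atTop ({a, b} : Finset K)] with s hs
    rw [hφ s a (hs (by simp)) b (hs (by simp))]
    push_cast
    rfl
  refine ⟨AddMonoidHom.mk' Φ hadd, ?_⟩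
  rw [← PadicInt.norm_lt_one_iff_dvd, not_lt]
  refine ge_of_tendsto' (hΦ x).norm fun s => ?_
  rw [← not_lt, PadicInt.norm_int_lt_one_iff_dvd]
  exact hφx s

/-- A family of homomorphisms `K → Ẑ`, small because it is indexed by `K`, embeds a torsion-free
group purely modulo its divisible part. -/
lemma exists_characters (K : Type) [AddCommGroup K] [Module.IsTorsionFree ℤ K] :
    ∃ c : K → K →+ ZHat, ∀ n : ℕ, n ≠ 0 → ∀ k : K,
      (∀ i, ∃ y, n • y = c i k) → ∃ k', n • k' = k := by
  have : ∀ (p : Nat.Primes) (k : K), ∃ φ : K →+ ℤ_[p.1],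
      (p.1 : ℤ_[p.1]) ∣ φ k → ∃ y, p.1 • y = k := by
    intro p k
    by_cases h : ∃ y, p.1 • y = k
    · exact ⟨0, fun _ => h⟩
    · obtain ⟨φ, hφ⟩ := exists_padic_character p.1 k h
      exact ⟨φ, fun h => absurd h hφ⟩
  choose φ hφ using this
  refine ⟨fun i => AddMonoidHom.pi fun p => φ p i, ?_⟩
  intro n
  induction n using induction_on_primes with
  | zero => exact fun h => absurd rfl h
  | one => exact fun _ k _ => ⟨k, by simp⟩
  | prime_mul p m hp ih =>
    obtain ⟨q, rfl⟩ : ∃ q : Nat.Primes, p = q.1 := ⟨⟨p, hp⟩, rfl⟩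
    intro hn k hk
    obtain ⟨k₁, rfl⟩ := hφ q k (by
      obtain ⟨y, hy⟩ := hk k
      have := congrFun hy q
      refine ⟨m * y q, ?_⟩
      rw [Pi.smul_apply, nsmul_eq_mul, Nat.cast_mul, mul_assoc] at this
      exact this.symm)
    obtain ⟨k', rfl⟩ := ih (by rintro rfl; simp at hn) k₁ (fun i => by
      obtain ⟨y, hy⟩ := hk i
      refine ⟨y, sub_eq_zero.1 (zhat_tf hp.ne_zero ?_)⟩
      rw [smul_sub, ← mul_smul, hy, ← map_nsmul, sub_self])
    exact ⟨k', by rw [mul_smul]⟩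

/-- By cardinality: a transcendence basis of `ℤ_p` over a subring with fewer than `2^ℵ₀` elements has at
least `2^ℵ₀` elements. -/
lemma exists_algebraicIndependent (p : ℕ) [Fact p.Prime] (S : Set ℤ_[p])
    (hS : Cardinal.mk S < Cardinal.continuum) (T : Type) (hT : Cardinal.mk T < Cardinal.continuum) :
    ∃ u : T → ℤ_[p], AlgebraicIndependent (Algebra.adjoin ℤ S) u := by
  obtain ⟨B, hB⟩ := exists_isTranscendenceBasis (Algebra.adjoin ℤ S) ℤ_[p]
  have halg := hB.isAlgebraic
  have h1 := Algebra.IsAlgebraic.cardinalMk_le_max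
    (Algebra.adjoin (Algebra.adjoin ℤ S) (Set.range (Subtype.val : B → ℤ_[p]))) ℤ_[p]
  have h2 := Algebra.cardinalMk_adjoin_le (Algebra.adjoin ℤ S) (Set.range (Subtype.val : B → ℤ_[p]))
  have h3 := Algebra.cardinalMk_adjoin_le ℤ S
  have hc := Cardinal.aleph0_lt_continuum
  have hB' : Cardinal.continuum ≤ Cardinal.mk B := by
    by_contra! hlt
    refine absurd ((continuum_le_padicInt p).trans h1) (not_le.2 (max_lt (h2.trans_lt ?_) hc))
    refine max_lt (max_lt (h3.trans_lt (max_lt (max_lt ?_ hS) hc)) ?_) hc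
    · simpa using hc
    · simpa using hlt
  obtain ⟨f⟩ := (hT.le.trans hB')
  exact ⟨_, hB.1.comp f f.injective⟩

/-- A relation `y = α_t x + β_t w` over the base ring forces `x = w = 0`; `Sum.inl` indexes the `α`s and
`Sum.inr` the `β`s. -/
lemma generic_linear {F A T : Type} [CommRing F] [CommRing A] [Algebra F A]
    {u : T ⊕ T → A} (hu : AlgebraicIndependent F u) (t : T) (x y w : F)
    (h : algebraMap F A y = u (.inl t) * algebraMap F A x + u (.inr t) * algebraMap F A w) :
    x = 0 ∧ w = 0 := by
  classical
  open MvPolynomial in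
  have h0 : (C y : MvPolynomial (T ⊕ T) F) = X (.inl t) * C x + X (.inr t) * C w := by
    apply hu
    simpa [AlgebraicIndependent] using h
  constructor
  · have := congrArg (MvPolynomial.coeff (Finsupp.single (Sum.inl t) 1)) h0
    have h1 : (0 : T ⊕ T →₀ ℕ) ≠ Finsupp.single (Sum.inl t) 1 :=
      (Finsupp.single_ne_zero.2 one_ne_zero).symm
    simpa [MvPolynomial.coeff_X_mul', MvPolynomial.coeff_C, h1] using this.symm
  · have := congrArg (MvPolynomial.coeff (Finsupp.single (Sum.inr t) 1)) h0
    have h1 : (0 : T ⊕ T →₀ ℕ) ≠ Finsupp.single (Sum.inr t) 1 :=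
      (Finsupp.single_ne_zero.2 one_ne_zero).symm
    simpa [MvPolynomial.coeff_X_mul', MvPolynomial.coeff_C, h1] using this.symm

/-- If the `α`s and `β`s are algebraically independent, then a relation `y = α_t x + β_t w` between
elements of the span of `1` and the `β`s forces `x = 0` and `w` constant. Here `none` indexes `1` and
`some s` indexes `β_s`. -/
lemma generic_bilinear {A T : Type} [CommRing A] {u : T ⊕ T → A} (hu : AlgebraicIndependent ℤ u)
    (t : T) (x y w : Option T →₀ ℤ) (b : Option T → A) (hb1 : b none = 1)
    (hb : ∀ s, b (some s) = u (.inr s))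
    (h : Finsupp.linearCombination ℤ b y = u (.inl t) * Finsupp.linearCombination ℤ b x
      + u (.inr t) * Finsupp.linearCombination ℤ b w) :
    x = 0 ∧ ∀ s, w (some s) = 0 := by
  classical
  let m : Option T → (T ⊕ T →₀ ℕ) := fun o => o.elim 0 fun s => Finsupp.single (Sum.inr s) 1
  have hm : Function.Injective m := by
    rintro (_ | s) (_ | s') h
    · rfl
    · exact absurd h.symm (Finsupp.single_ne_zero.2 one_ne_zero)
    · exact absurd h (Finsupp.single_ne_zero.2 one_ne_zero)
    · have := Finsupp.single_left_injective one_ne_zero h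
      simpa using this
  let P : Option T → MvPolynomial (T ⊕ T) ℤ := fun o => MvPolynomial.monomial (m o) 1
  have hP : ∀ v : Option T →₀ ℤ, MvPolynomial.aeval u (Finsupp.linearCombination ℤ P v) =
      Finsupp.linearCombination ℤ b v := by
    intro v
    have : (MvPolynomial.aeval u).toLinearMap ∘ₗ Finsupp.linearCombination ℤ P =
        Finsupp.linearCombination ℤ b := by
      ext o
      rcases o with _ | s
      · simp [P, m, hb1]
      · simp [P, m, hb, MvPolynomial.aeval_monomial]
    exact LinearMap.congr_fun this v
  have hc : ∀ (v : Option T →₀ ℤ) (o : Option T),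
      MvPolynomial.coeff (m o) (Finsupp.linearCombination ℤ P v) = v o := by
    intro v o
    simp only [Finsupp.linearCombination_apply, Finsupp.sum, MvPolynomial.coeff_sum,
      MvPolynomial.coeff_smul, P, MvPolynomial.coeff_monomial, hm.eq_iff]
    simp [eq_comm]
  have hc' : ∀ (v : Option T →₀ ℤ) (d : T ⊕ T →₀ ℕ), d ∉ Set.range m →
      MvPolynomial.coeff d (Finsupp.linearCombination ℤ P v) = 0 := by
    intro v d hd
    simp only [Finsupp.linearCombination_apply, Finsupp.sum, MvPolynomial.coeff_sum,
      MvPolynomial.coeff_smul, P, MvPolynomial.coeff_monomial]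
    refine Finset.sum_eq_zero fun o _ => ?_
    rw [if_neg fun h => hd ⟨o, h⟩, smul_zero]
  have hα : ∀ d : T ⊕ T →₀ ℕ, d (Sum.inl t) ≠ 0 → d ∉ Set.range m := by
    rintro _ hd ⟨o, rfl⟩
    rcases o with _ | s <;> simp [m] at hd
  have h0 : Finsupp.linearCombination ℤ P y =
      MvPolynomial.X (.inl t) * Finsupp.linearCombination ℤ P x
      + MvPolynomial.X (.inr t) * Finsupp.linearCombination ℤ P w := by
    apply hu
    simpa [hP] using h
  constructor
  · ext o
    have := congrArg (MvPolynomial.coeff (Finsupp.single (Sum.inl t) 1 + m o)) h0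
    rw [MvPolynomial.coeff_add, MvPolynomial.coeff_X_mul, hc, hc' _ _ (hα _ (by simp)),
      MvPolynomial.coeff_X_mul'] at this
    split_ifs at this with h1
    · rw [hc' _ _ (hα _ (by simp))] at this
      simpa using this.symm
    · simpa using this.symm
  · intro s
    have := congrArg (MvPolynomial.coeff (Finsupp.single (Sum.inr t) 1 + m (some s))) h0
    rw [MvPolynomial.coeff_add, MvPolynomial.coeff_X_mul, hc, MvPolynomial.coeff_X_mul',
      if_neg (by simp [m]), hc', zero_add] at this
    · exact this.symm
    · rintro ⟨o, ho⟩
      have := congrArg Finsupp.degree ho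
      rcases o with _ | s' <;> simp [m, map_add] at this

/-! ### Rank and cardinality -/

lemma rank_tensor (A : Type) [AddCommGroup A] :
    Module.rank ℚ (ℚ ⊗[ℤ] A) = Module.rank ℤ A := by
  have : IsLocalizedModule (nonZeroDivisors ℤ) (TensorProduct.mk ℤ ℚ A 1) := inferInstance
  refine (IsFractionRing.rank_right_eq ℤ (N := ℚ ⊗[ℤ] A) (S := ℚ)).trans
    (Eq.trans ?_ (IsLocalizedModule.rank_eq (nonZeroDivisors ℤ) le_rfl (TensorProduct.mk ℤ ℚ A 1)))
  congr!

/-- A linearly independent family generating a group up to torsion computes its rank. -/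
lemma rank_eq_of_quasiBasis {A ι : Type} [AddCommGroup A] (v : ι → A) (hv : LinearIndependent ℤ v)
    (h : ∀ a : A, ∃ n : ℤ, n ≠ 0 ∧ n • a ∈ Submodule.span ℤ (Set.range v)) :
    Module.rank ℤ A = Cardinal.mk ι := by
  rw [← rank_quotient_add_rank_of_isDomain (Submodule.span ℤ (Set.range v)), rank_span hv,
    Cardinal.mk_range_eq _ hv.injective, rank_eq_zero_iff.2, zero_add]
  intro x
  obtain ⟨a, rfl⟩ := Submodule.mkQ_surjective _ x
  obtain ⟨n, hn, hna⟩ := h a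
  exact ⟨n, hn, by rwa [← map_smul, Submodule.mkQ_apply, Submodule.Quotient.mk_eq_zero]⟩

lemma exists_quasiBasis (A : Type) [AddCommGroup A] :
    ∃ (ι : Type) (v : ι → A), LinearIndependent ℤ v ∧ Cardinal.mk ι = Module.rank ℤ A ∧
      ∀ a : A, ∃ n : ℤ, n ≠ 0 ∧ n • a ∈ Submodule.span ℤ (Set.range v) := by
  obtain ⟨s, hs, hmax⟩ := exists_maximal_linearIndepOn ℤ (id : A → A)
  have h : ∀ a : A, ∃ n : ℤ, n ≠ 0 ∧
      n • a ∈ Submodule.span ℤ (Set.range (fun i : s => id (i : A))) := by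
    intro a
    by_cases ha : a ∈ s
    · exact ⟨1, one_ne_zero, by rw [one_smul]; exact Submodule.subset_span ⟨⟨a, ha⟩, rfl⟩⟩
    · obtain ⟨n, hn, h⟩ := hmax a ha
      exact ⟨n, hn, by simpa using h⟩
  exact ⟨s, _, hs, (rank_eq_of_quasiBasis _ hs h).symm, h⟩

lemma card_lt_continuum {A : Type} [AddCommGroup A] (htf : ∀ n : ℤ, n ≠ 0 → ∀ a : A, n • a = 0 → a = 0)
    (hr : Module.rank ℤ A < Cardinal.continuum) : Cardinal.mk A < Cardinal.continuum := by
  obtain ⟨ι, v, -, hι, h⟩ := exists_quasiBasis A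
  choose n hn hv using h
  simp only [Finsupp.mem_span_range_iff_exists_finsupp] at hv
  choose c hc using hv
  have hinj : Function.Injective fun a => (n a, c a) := by
    intro a a' haa
    obtain ⟨h1, h2⟩ := Prod.mk.inj haa
    refine sub_eq_zero.1 (htf (n a) (hn a) _ ?_)
    rw [smul_sub, ← hc a]
    rw [h1, ← hc a', h2, sub_self]
  have hfin : Cardinal.mk (ι →₀ ℤ) < Cardinal.continuum := by
    rcases finite_or_infinite ι with hf | hf
    · exact (Cardinal.mk_le_aleph0 (α := ι →₀ ℤ)).trans_lt Cardinal.aleph0_lt_continuum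
    · rw [Cardinal.mk_finsupp_of_infinite]
      exact max_lt (hι ▸ hr) (by simpa using Cardinal.aleph0_lt_continuum)
  refine (Cardinal.mk_le_of_injective hinj).trans_lt ?_
  rw [Cardinal.mk_prod, Cardinal.lift_id, Cardinal.lift_id]
  exact Cardinal.mul_lt_of_lt Cardinal.aleph0_lt_continuum.le
    (by simpa using Cardinal.aleph0_lt_continuum) hfin

/-! ### The construction of `G` -/

/-- The input of the construction: homomorphisms `c i : K → Ẑ` embedding `K` as a pure subgroup of
`Ẑ^K`, elements `k t` generating `K` up to torsion, and elements `α t, β t` of `Ẑ` which are generic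
with respect to `K` and to each other. Finitely supported functions on `Option T` encode linear
combinations of `1` (index `none`) and the `β t` (index `some t`). -/
structure Datum (K T : Type) [AddCommGroup K] where
  /-- The homomorphisms embedding `K` into `Ẑ^K`. -/
  c : K → K →+ ZHat
  /-- The generators of `K` up to torsion. -/
  k : T → K
  /-- The coefficients attached to the generators of `K`. -/
  α : T → ZHat
  /-- The coefficients attached to the generator `f`. -/
  β : T → ZHat
  c_pure : ∀ n : ℕ, n ≠ 0 → ∀ x : K, (∀ i, ∃ y, n • y = c i x) → ∃ x', n • x' = x
  c_sep : ∀ x : K, (∀ i, c i x = 0) → x = 0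
  k_span : ∀ x : K, ∃ n : ℤ, n ≠ 0 ∧ n • x ∈ Submodule.span ℤ (Set.range k)
  generic_K : ∀ (t : T) (i x y w : K), c i y = α t * c i x + β t * c i w → c i x = 0 ∧ c i w = 0
  generic_β : ∀ (t : T) (x y w : Option T →₀ ℤ),
    Finsupp.linearCombination ℤ (fun o : Option T => o.elim 1 β) y =
      α t * Finsupp.linearCombination ℤ (fun o : Option T => o.elim 1 β) x +
      β t * Finsupp.linearCombination ℤ (fun o : Option T => o.elim 1 β) w →
    x = 0 ∧ ∀ s, w (some s) = 0

namespace Datum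

variable {K T : Type} [AddCommGroup K] (D : Datum K T)

/-- The family `1, β t` in `Ẑ`. -/
noncomputable def b : Option T → ZHat := fun o => o.elim 1 D.β

/-- The embedding of `K` into `Ẑ^K × Ẑ`. -/
noncomputable def ιM : K →+ (K → ZHat) × ZHat := (AddMonoidHom.pi D.c).prod 0

/-- The elements `f = (0, 1)` and `e t = (α t * k t, β t)` of `Ẑ^K × Ẑ`. -/
noncomputable def E : Option T → (K → ZHat) × ZHat :=
  fun o => o.elim (0, 1) fun t => (fun i => D.α t * D.c i (D.k t), D.β t)

/-- The parametrization of the subgroup generated by `K`, `f` and the `e t`. -/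
noncomputable def Λ : K × (Option T →₀ ℤ) →ₗ[ℤ] (K → ZHat) × ZHat :=
  D.ιM.toIntLinearMap.coprod (Finsupp.linearCombination ℤ D.E)

/-- The group `G`: the pure subgroup of `Ẑ^K × Ẑ` generated by `K`, `f` and the `e t`. -/
def G : AddSubgroup ((K → ZHat) × ZHat) where
  carrier := {g | ∃ n : ℕ, n ≠ 0 ∧ ∃ a, n • g = D.Λ a}
  zero_mem' := ⟨1, one_ne_zero, 0, by simp⟩
  add_mem' := by
    rintro g g' ⟨n, hn, a, ha⟩ ⟨n', hn', a', ha'⟩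
    refine ⟨n * n', mul_ne_zero hn hn', n' • a + n • a', ?_⟩
    rw [map_add, map_nsmul, map_nsmul, ← ha, ← ha', smul_add, mul_smul, mul_smul, smul_comm n n' g]
  neg_mem' := by
    rintro g ⟨n, hn, a, ha⟩
    exact ⟨n, hn, -a, by rw [smul_neg, map_neg, ha]⟩

lemma Λ_mem (a) : D.Λ a ∈ D.G := ⟨1, one_ne_zero, a, one_smul _ _⟩

lemma Λ_ι (x : K) : D.Λ (x, 0) = D.ιM x := by simp [Λ]

lemma Λ_E (o : Option T) : D.Λ (0, Finsupp.single o 1) = D.E o := by simp [Λ]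

lemma G_pure {n : ℕ} (hn : n ≠ 0) {g : (K → ZHat) × ZHat} (h : n • g ∈ D.G) : g ∈ D.G := by
  obtain ⟨m, hm, a, ha⟩ := h
  exact ⟨m * n, mul_ne_zero hm hn, a, by rw [mul_smul, ha]⟩

/-- The inclusion of `K` into `G`. -/
noncomputable def ι : K →+ D.G := D.ιM.codRestrict D.G fun x => D.Λ_ι x ▸ D.Λ_mem _

/-- The elements `f` and `e t` of `G`. -/
noncomputable def e (o : Option T) : D.G := ⟨D.E o, D.Λ_E o ▸ D.Λ_mem _⟩

/-- The projection of `G` to `Ẑ`; its kernel is `K`. -/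
noncomputable def σ : D.G →+ ZHat := (AddMonoidHom.snd _ _).comp D.G.subtype

lemma σ_ι (x : K) : D.σ (D.ι x) = 0 := rfl

lemma σ_e (o : Option T) : D.σ (D.e o) = D.b o := by cases o <;> rfl

lemma snd_Λ (a) : (D.Λ a).2 = Finsupp.linearCombination ℤ D.b a.2 := by
  have : (LinearMap.snd ℤ (K → ZHat) ZHat) ∘ₗ D.Λ =
      Finsupp.linearCombination ℤ D.b ∘ₗ LinearMap.snd ℤ K _ := by
    refine LinearMap.prod_ext (LinearMap.ext fun x => ?_)
      (Finsupp.lhom_ext' fun o => LinearMap.ext_ring ?_)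
    · simp [Λ, ιM]
    · cases o <;> simp [Λ, E, b]
  exact LinearMap.congr_fun this a

lemma ι_injective : Function.Injective D.ι := by
  rw [injective_iff_map_eq_zero]
  intro x hx
  refine D.c_sep x fun i => ?_
  exact congrFun (congrArg (fun g : D.G => g.1.1) hx) i

lemma G_tf {n : ℕ} (hn : n ≠ 0) {g : D.G} (h : n • g = 0) : g = 0 := by
  apply Subtype.ext
  have h1 : n • g.1 = 0 := congrArg Subtype.val h
  exact Prod.ext (funext fun i => zhat_tf hn (congrFun (congrArg Prod.fst h1) i))
    (zhat_tf hn (congrArg Prod.snd h1))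

lemma b_linearIndependent [Nonempty T] : LinearIndependent ℤ D.b := by
  obtain ⟨t⟩ := ‹Nonempty T›
  rw [linearIndependent_iff]
  intro x hx
  refine (D.generic_β t x 0 0 ?_).1
  change _ = _ * Finsupp.linearCombination ℤ D.b x + _
  simp [hx]

/-- The coordinate projections of `G` separate its points. -/
lemma G_sep (g : D.G) (h : ∀ χ : D.G →+ ZHat, χ g = 0) : g = 0 := by
  apply Subtype.ext
  refine Prod.ext (funext fun i => ?_) (h D.σ)
  exact h ((Pi.evalAddMonoidHom _ i).comp ((AddMonoidHom.fst _ _).comp D.G.subtype))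

lemma ker_σ [Nonempty T] (g : D.G) (h : D.σ g = 0) : ∃ x, D.ι x = g := by
  obtain ⟨g, n, hn, ⟨x, v⟩, ha⟩ := g
  have h2 : g.2 = 0 := h
  have hv : v = 0 := by
    refine linearIndependent_iff.1 D.b_linearIndependent v ?_
    rw [← D.snd_Λ (x, v), ← ha, Prod.smul_snd, h2, smul_zero]
  subst hv
  rw [Λ_ι] at ha
  have h1 : ∀ i, n • g.1 i = D.c i x := fun i => congrFun (congrArg Prod.fst ha) i
  obtain ⟨x', rfl⟩ := D.c_pure n hn x fun i => ⟨g.1 i, h1 i⟩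
  refine ⟨x', sub_eq_zero.1 (D.G_tf hn ?_)⟩
  rw [smul_sub, sub_eq_zero, ← map_nsmul]
  exact Subtype.ext ha.symm

/-- Homomorphisms from `G` to torsion-free groups are determined by their values on the `k t`, on `f`
and on the `e t`. -/
lemma hom_ext {A : Type*} [AddCommGroup A] (hA : ∀ n : ℕ, n ≠ 0 → ∀ a : A, n • a = 0 → a = 0)
    (h : D.G →+ A) (hk : ∀ t, h (D.ι (D.k t)) = 0) (he : ∀ o, h (D.e o) = 0) : h = 0 := by
  have hK : ∀ x, h (D.ι x) = 0 := by
    intro x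
    obtain ⟨n, hn, hx⟩ := D.k_span x
    have h1 : Submodule.span ℤ (Set.range D.k) ≤
        LinearMap.ker (h.comp D.ι).toIntLinearMap := by
      rw [Submodule.span_le]
      rintro _ ⟨t, rfl⟩
      exact hk t
    have h2 : n • h (D.ι x) = 0 := by
      have : h (D.ι (n • x)) = 0 := h1 hx
      simpa using this
    refine hA n.natAbs (by simpa using hn) _ ?_
    rcases Int.natAbs_eq n with h3 | h3
    · rw [h3] at h2; simpa using h2
    · rw [h3] at h2; simpa using h2
  let Λ' : K × (Option T →₀ ℤ) →ₗ[ℤ] D.G :=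
    D.Λ.codRestrict (AddSubgroup.toIntSubmodule D.G) D.Λ_mem
  have hΛ : h.toIntLinearMap ∘ₗ Λ' = 0 := by
    refine LinearMap.prod_ext ?_ (Finsupp.lhom_ext' fun o => LinearMap.ext_ring ?_)
    · ext x
      have : Λ' (x, 0) = D.ι x := Subtype.ext (D.Λ_ι x)
      simpa [this] using hK x
    · have : Λ' (0, Finsupp.single o 1) = D.e o := Subtype.ext (D.Λ_E o)
      simpa [this] using he o
  ext ⟨g, n, hn, a, ha⟩
  refine hA n hn _ ?_
  rw [← map_nsmul]
  have : n • (⟨g, n, hn, a, ha⟩ : D.G) = Λ' a := Subtype.ext ha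
  rw [this]
  exact LinearMap.congr_fun hΛ a

/-- The relation `e t = α t * k t + β t * f` is preserved by every homomorphism to `Ẑ`, although its
coefficients are not integers. -/
lemma hom_e (h : D.G →+ ZHat) (t : T) :
    h (D.e (some t)) = D.α t * h (D.ι (D.k t)) + D.β t * h (D.e none) := by
  refine zhat_continuity h _ _ _ _ _ fun n hn a b α' β' hα hβ => ?_
  let g : (K → ZHat) × ZHat := (fun i => α' * D.c i (D.k t), β')
  have hg : n • g = D.E (some t) - a • D.ιM (D.k t) - b • D.E none := by
    refine Prod.ext (funext fun i => ?_) ?_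
    · change n • (α' * D.c i (D.k t)) = D.α t * D.c i (D.k t) - a • D.c i (D.k t) - b • 0
      rw [← smul_mul_assoc, hα, zsmul_eq_mul]
      ring_nf
    · change n • β' = D.β t - a • 0 - b • 1
      rw [hβ]
      simp
  have hmem : n • g ∈ D.G := by
    rw [hg]
    exact (D.e (some t) - a • D.ι (D.k t) - b • D.e none).2
  exact ⟨⟨g, D.G_pure hn hmem⟩, Subtype.ext hg⟩

/-- `Hom(G, K) = 0`: after composing `h` with `c i`, the relation `hom_e` relates elements of
`c i K`, so by genericity `h` vanishes on the `k t` and on `f`. -/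
lemma hom_K [Nonempty T] (hK : ∀ n : ℕ, n ≠ 0 → ∀ a : K, n • a = 0 → a = 0) (h : D.G →+ K) :
    h = 0 := by
  have key : ∀ t i, D.c i (h (D.ι (D.k t))) = 0 ∧ D.c i (h (D.e none)) = 0 := fun t i =>
    D.generic_K t i _ _ _ (D.hom_e ((D.c i).comp h) t)
  have hk : ∀ t, h (D.ι (D.k t)) = 0 := fun t => D.c_sep _ fun i => (key t i).1
  have hf : h (D.e none) = 0 := D.c_sep _ fun i => (key (Classical.arbitrary T) i).2
  refine D.hom_ext hK h hk ?_
  rintro (_ | t)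
  · exact hf
  · refine D.c_sep _ fun i => ?_
    have := D.hom_e ((D.c i).comp h) t
    simpa [hk, hf] using this

/-- A homomorphism from `G` to `Ẑ` with values in the image of `σ` is an integer multiple of `σ`. -/
lemma hom_σ [Nonempty T] (h : D.G →+ ZHat) (hr : ∀ g, ∃ g', h g = D.σ g') :
    ∃ n : ℤ, h = n • D.σ := by
  have hr' : ∀ g, ∃ n : ℕ, n ≠ 0 ∧ ∃ v, n • h g = Finsupp.linearCombination ℤ D.b v := by
    intro g
    obtain ⟨⟨g', n, hn, a, ha⟩, hg⟩ := hr g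
    refine ⟨n, hn, a.2, ?_⟩
    rw [← snd_Λ, ← ha, hg]
    rfl
  have key : ∀ t, h (D.ι (D.k t)) = 0 ∧ ∃ n : ℤ, h (D.e none) = n := by
    intro t
    obtain ⟨n₁, hn₁, x, hx⟩ := hr' (D.ι (D.k t))
    obtain ⟨n₂, hn₂, w, hw⟩ := hr' (D.e none)
    obtain ⟨n₃, hn₃, y, hy⟩ := hr' (D.e (some t))
    obtain ⟨h1, h2⟩ := D.generic_β t ((n₂ * n₃) • x) ((n₁ * n₂) • y) ((n₁ * n₃) • w) (by
      change Finsupp.linearCombination ℤ D.b _ = _ * Finsupp.linearCombination ℤ D.b _ +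
        _ * Finsupp.linearCombination ℤ D.b _
      rw [map_nsmul, map_nsmul, map_nsmul, ← hx, ← hy, ← hw, D.hom_e h t]
      simp only [nsmul_eq_mul]
      push_cast
      ring)
    have hx0 : x = 0 := (smul_eq_zero.1 h1).resolve_left (mul_ne_zero hn₂ hn₃)
    have hw0 : ∀ s, w (some s) = 0 := fun s => by
      have := h2 s
      simpa [hn₁, hn₃] using this
    constructor
    · exact zhat_tf hn₁ (by rw [hx, hx0, map_zero])
    · refine zhat_int_pure n₂ hn₂ _ (w none) ?_
      have hw1 : w = Finsupp.single none (w none) := by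
        ext o
        cases o <;> simp [hw0]
      rw [hw, hw1]
      simp [b]
  obtain ⟨n, hn⟩ := (key (Classical.arbitrary T)).2
  refine ⟨n, sub_eq_zero.1 (D.hom_ext (fun _ hn _ => zhat_tf hn) _ ?_ ?_)⟩
  · intro t
    simp [(key t).1, σ_ι]
  · rintro (_ | t)
    · simp [hn, σ_e, b]
    · simp [D.hom_e h t, (key t).1, hn, σ_e, b, mul_comm]

lemma ker_σ_eq [Nonempty T] : D.σ.ker = D.ι.range := by
  ext g
  constructor
  · exact fun h => D.ker_σ g h
  · rintro ⟨x, rfl⟩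
    exact D.σ_ι x

/-- The embedding of `G / K` into `Ẑ` induced by `σ`. -/
noncomputable def j : D.G ⧸ D.ι.range →+ ZHat :=
  QuotientAddGroup.lift D.ι.range D.σ (by rintro _ ⟨x, rfl⟩; exact D.σ_ι x)

lemma j_mk (g : D.G) : D.j (QuotientAddGroup.mk' D.ι.range g) = D.σ g := rfl

lemma j_injective [Nonempty T] : Function.Injective D.j := by
  rw [injective_iff_map_eq_zero]
  intro q hq
  obtain ⟨g, rfl⟩ := QuotientAddGroup.mk'_surjective _ q
  rw [j_mk] at hq
  exact (QuotientAddGroup.eq_zero_iff g).2 (D.ker_σ g hq)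

lemma hom_quotient [Nonempty T] (φ : D.G →+ D.G ⧸ D.ι.range) :
    ∃ n : ℤ, φ = n • QuotientAddGroup.mk' D.ι.range := by
  obtain ⟨n, hn⟩ := D.hom_σ (D.j.comp φ) fun g => by
    obtain ⟨g', hg'⟩ := QuotientAddGroup.mk'_surjective _ (φ g)
    exact ⟨g', by rw [← j_mk, hg']; rfl⟩
  refine ⟨n, AddMonoidHom.ext fun g => D.j_injective ?_⟩
  have := DFunLike.congr_fun hn g
  rw [AddMonoidHom.comp_apply] at this
  rw [this]
  exact (map_zsmul D.j n (QuotientAddGroup.mk' D.ι.range g)).symm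

lemma cellular [Nonempty T] (hK : ∀ n : ℕ, n ≠ 0 → ∀ a : K, n • a = 0 → a = 0) :
    Function.Bijective fun ψ : D.G →+ D.G => (QuotientAddGroup.mk' D.ι.range).comp ψ := by
  constructor
  · intro ψ χ hψ
    -- The difference has values in the kernel `K`, and `Hom(G, K) = 0`.
    have hmem : ∀ g, ∃ x, D.ι x = ψ g - χ g := fun g => by
      have : QuotientAddGroup.mk' D.ι.range (ψ g - χ g) = 0 := by
        rw [map_sub, sub_eq_zero]
        exact DFunLike.congr_fun hψ g
      exact (QuotientAddGroup.eq_zero_iff _).1 this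
    choose δ hδ using hmem
    let δ' : D.G →+ K := AddMonoidHom.mk' δ fun g g' => D.ι_injective (by
      rw [map_add, hδ, hδ, hδ, map_add, map_add]; abel)
    ext1 g
    have h0 : δ g = 0 := DFunLike.congr_fun (D.hom_K hK δ') g
    rw [← sub_eq_zero, ← hδ g, h0, map_zero]
  · intro φ
    obtain ⟨n, rfl⟩ := D.hom_quotient φ
    exact ⟨n • AddMonoidHom.id _, by ext g; rfl⟩

lemma rank_G [Nonempty T] : Module.rank ℤ D.G = Cardinal.mk T + 1 + Module.rank ℤ K := by
  let R : Submodule ℤ D.G := LinearMap.range D.ι.toIntLinearMap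
  rw [← rank_quotient_add_rank_of_isDomain R]
  congr 1
  · let v : Option T → D.G ⧸ R := fun o => R.mkQ (D.e o)
    let J : D.G ⧸ R →ₗ[ℤ] ZHat := R.liftQ D.σ.toIntLinearMap (by
      rintro _ ⟨x, rfl⟩; exact D.σ_ι x)
    have hJ : J ∘ v = D.b := funext fun o => D.σ_e o
    have hv : LinearIndependent ℤ v := LinearIndependent.of_comp J (hJ ▸ D.b_linearIndependent)
    rw [rank_eq_of_quasiBasis v hv, Cardinal.mk_option]
    intro q
    obtain ⟨⟨g, n, hn, ⟨x, w⟩, ha⟩, rfl⟩ := R.mkQ_surjective q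
    refine ⟨n, by exact_mod_cast hn, ?_⟩
    rw [Finsupp.mem_span_range_iff_exists_finsupp]
    refine ⟨w, ?_⟩
    have h1 : n • (⟨g, n, hn, ⟨x, w⟩, ha⟩ : D.G) = D.ι x + w.sum fun o a => a • D.e o := by
      apply Subtype.ext
      change n • g = D.ιM x + D.G.subtype _
      rw [ha, map_finsuppSum]
      simp [Λ, Finsupp.linearCombination_apply, e]
    have h2 : R.mkQ (D.ι x) = 0 := (Submodule.Quotient.mk_eq_zero R).2 ⟨x, rfl⟩
    rw [natCast_zsmul, ← map_nsmul, h1, map_add, h2, zero_add, map_finsuppSum]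
    simp [v]
  · exact (LinearEquiv.ofInjective D.ι.toIntLinearMap D.ι_injective).rank_eq.symm

end Datum

/-! ### Existence of the generic data -/

/-- The data of the construction exist, because over a subring of `ℤ_p` of cardinality less than `2^ℵ₀`
there are `2^ℵ₀` many algebraically independent elements. -/
lemma exists_datum {K T : Type} [AddCommGroup K] [Module.IsTorsionFree ℤ K]
    (hred : ∀ D : AddSubgroup K, (∀ n : ℤ, n ≠ 0 → ∀ d ∈ D, ∃ d' ∈ D, n • d' = d) → D = ⊥)
    (hK : Cardinal.mk K < Cardinal.continuum) (hT : Cardinal.mk T < Cardinal.continuum) (k : T → K)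
    (hk : ∀ x : K, ∃ n : ℤ, n ≠ 0 ∧ n • x ∈ Submodule.span ℤ (Set.range k)) :
    Nonempty (Datum K T) := by
  obtain ⟨c, hc⟩ := exists_characters K
  let S : ∀ p : Nat.Primes, Set ℤ_[p.1] := fun p => Set.range fun q : K × K => c q.1 q.2 p
  have hS : ∀ p, Cardinal.mk (S p) < Cardinal.continuum := fun p =>
    Cardinal.mk_range_le.trans_lt (by
      rw [Cardinal.mk_prod, Cardinal.lift_id]
      exact Cardinal.mul_lt_of_lt Cardinal.aleph0_lt_continuum.le hK hK)
  have hTT : Cardinal.mk (T ⊕ T) < Cardinal.continuum := by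
    rw [Cardinal.mk_sum, Cardinal.lift_id]
    exact Cardinal.add_lt_of_lt Cardinal.aleph0_lt_continuum.le hT hT
  choose u hu using fun p : Nat.Primes => exists_algebraicIndependent p.1 (S p) (hS p) (T ⊕ T) hTT
  have hmem : ∀ i x p, c i x p ∈ Algebra.adjoin ℤ (S p) := fun i x p =>
    Algebra.subset_adjoin ⟨(i, x), rfl⟩
  refine ⟨{
    c := c
    k := k
    α := fun t p => u p (.inl t)
    β := fun t p => u p (.inr t)
    c_pure := hc
    c_sep := ?_
    k_span := hk
    generic_K := ?_
    generic_β := ?_ }⟩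
  · intro x hx
    -- The common kernel of the `c i` is a divisible subgroup, by purity.
    let D : AddSubgroup K := ⨅ i, (c i).ker
    have hD : ∀ y, y ∈ D ↔ ∀ i, c i y = 0 := fun y => by simp [D, AddSubgroup.mem_iInf]
    have hbot : D = ⊥ := by
      refine hred D fun n hn d hd => ?_
      rw [hD] at hd
      obtain ⟨d', hd'⟩ := hc n.natAbs (by simpa using hn) d fun i => ⟨0, by rw [hd i, smul_zero]⟩
      have h0 : d' ∈ D := (hD d').2 fun i => zhat_tf (n := n.natAbs) (by simpa using hn) (by
        rw [← map_nsmul, hd', hd i])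
      rcases Int.natAbs_eq n with h3 | h3
      · exact ⟨d', h0, by rw [h3, natCast_zsmul, hd']⟩
      · exact ⟨-d', neg_mem h0, by rw [h3, neg_smul, smul_neg, neg_neg, natCast_zsmul, hd']⟩
    have : x ∈ D := (hD x).2 hx
    rwa [hbot, AddSubgroup.mem_bot] at this
  · intro t i x y w h
    have key : ∀ p, c i x p = 0 ∧ c i w p = 0 := fun p => by
      obtain ⟨h1, h2⟩ := generic_linear (hu p) t ⟨_, hmem i x p⟩ ⟨_, hmem i y p⟩ ⟨_, hmem i w p⟩
        (congrFun h p)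
      exact ⟨congrArg Subtype.val h1, congrArg Subtype.val h2⟩
    exact ⟨funext fun p => (key p).1, funext fun p => (key p).2⟩
  · intro t x y w h
    let p : Nat.Primes := ⟨2, Nat.prime_two⟩
    have hu' : AlgebraicIndependent ℤ (u p) :=
      (hu p).restrictScalars (FaithfulSMul.algebraMap_injective ℤ _)
    let β : Option T → ZHat := fun o => o.elim 1 fun t p => u p (.inr t)
    have hev : ∀ v : Option T →₀ ℤ, Finsupp.linearCombination ℤ β v p =
        Finsupp.linearCombination ℤ (fun o => β o p) v := fun v => by
      simp [Finsupp.linearCombination_apply, Finsupp.sum, Finset.sum_apply]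
    refine generic_bilinear hu' t x y w (fun o => β o p) rfl (fun _ => rfl) ?_
    rw [← hev, ← hev, ← hev]
    exact congrFun h p

end CellularCover

/-- Every torsion-free reduced abelian group `K` of rank `κ` with
`1 ≤ κ < 2^ℵ₀` embeds in a cotorsion-free abelian group `G` of rank `3` (if `κ = 1`)
resp. `3κ + 1` (if `κ ≥ 2`) with `Hom(G, K) = 0` and `Hom(G, G/K) = ℤ·π`, where
`π : G → G/K` is the canonical projection; in particular `0 → K → G → G/K → 0` is a
cellular exact sequence. -/
theorem cellular_cover_of_cotorsion_free (K : Type) [AddCommGroup K]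
    (htf : ∀ k : K, k ≠ 0 → ¬ IsOfFinAddOrder k)
    (hred : ∀ D : AddSubgroup K, (∀ n : ℤ, n ≠ 0 → ∀ d ∈ D, ∃ d' ∈ D, n • d' = d) → D = ⊥)
    (κ : Cardinal) (hκ1 : 1 ≤ κ) (hκ2 : κ < 2 ^ Cardinal.aleph0)
    (hrank : Module.rank ℚ (ℚ ⊗[ℤ] K) = κ) :
    ∃ (G : Type) (_ : AddCommGroup G) (ι : K →+ G),
      Function.Injective ι ∧
      (∀ f : ZHat →+ G, f = 0) ∧
      Module.rank ℚ (ℚ ⊗[ℤ] G) = (if κ = 1 then 3 else 3 * κ + 1) ∧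
      (∀ φ : G →+ K, φ = 0) ∧
      (∀ φ : G →+ G ⧸ ι.range, ∃ n : ℤ, φ = n • (QuotientAddGroup.mk' ι.range)) ∧
      Function.Bijective
        (fun ψ : G →+ G => (QuotientAddGroup.mk' ι.range).comp ψ) := by
  classical
  have hZ : ∀ n : ℕ, n ≠ 0 → ∀ a : K, n • a = 0 → a = 0 := fun n hn a ha => by
    by_contra h0
    exact htf a h0 (isOfFinAddOrder_iff_nsmul_eq_zero.2 ⟨n, Nat.pos_of_ne_zero hn, ha⟩)
  have htfK : ∀ n : ℤ, n ≠ 0 → ∀ a : K, n • a = 0 → a = 0 := fun n hn a ha => by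
    refine hZ n.natAbs (by simpa using hn) a ?_
    rcases Int.natAbs_eq n with h | h
    · rwa [h, natCast_zsmul] at ha
    · rwa [h, neg_smul, neg_eq_zero, natCast_zsmul] at ha
  have : Module.IsTorsionFree ℤ K := Module.IsTorsionFree.of_smul_eq_zero fun n a h => by
    by_cases hn : n = 0
    · exact Or.inl hn
    · exact Or.inr (htfK n hn a h)
  rw [CellularCover.rank_tensor] at hrank
  rw [Cardinal.two_power_aleph0] at hκ2
  have hc := Cardinal.aleph0_lt_continuum.le
  have hK : Cardinal.mk K < Cardinal.continuum :=
    CellularCover.card_lt_continuum htfK (hrank ▸ hκ2)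
  obtain ⟨J, v, -, hJ, hv⟩ := CellularCover.exists_quasiBasis K
  rw [hrank] at hJ
  -- One generator `e t` for each element of the quasi-basis if `κ = 1`, and two otherwise.
  obtain ⟨T, k, hT, hk⟩ : ∃ (T : Type) (k : T → K),
      Cardinal.mk T = (if κ = 1 then 1 else κ + κ) ∧ Set.range k = Set.range v := by
    split_ifs with h
    · exact ⟨J, v, by rw [hJ, h], rfl⟩
    · exact ⟨J ⊕ J, Sum.elim v v, by simp [hJ], by simp⟩
  have hT1 : 1 ≤ Cardinal.mk T := by
    rw [hT]
    split_ifs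
    · exact le_rfl
    · exact hκ1.trans le_self_add
  have hTc : Cardinal.mk T < Cardinal.continuum := by
    rw [hT]
    split_ifs
    · exact Cardinal.one_lt_aleph0.trans_le hc
    · exact Cardinal.add_lt_of_lt hc hκ2 hκ2
  have : Nonempty T := by
    rw [← Cardinal.mk_ne_zero_iff]
    exact (zero_lt_one.trans_le hT1).ne'
  obtain ⟨D⟩ := CellularCover.exists_datum hred hK hTc k (by rwa [hk])
  have hrG : Module.rank ℤ D.G < Cardinal.continuum := by
    rw [D.rank_G, hrank]
    exact Cardinal.add_lt_of_lt hc
      (Cardinal.add_lt_of_lt hc hTc (Cardinal.one_lt_aleph0.trans_le hc)) hκ2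
  have htfG : ∀ n : ℤ, n ≠ 0 → ∀ a : D.G, n • a = 0 → a = 0 := fun n hn a ha => by
    refine D.G_tf (n := n.natAbs) (by simpa using hn) ?_
    rcases Int.natAbs_eq n with h | h
    · rwa [h, natCast_zsmul] at ha
    · rwa [h, neg_smul, neg_eq_zero, natCast_zsmul] at ha
  refine ⟨D.G, inferInstance, D.ι, D.ι_injective,
    CellularCover.cotorsionFree_of_card_lt (CellularCover.card_lt_continuum htfG hrG) D.G_sep, ?_,
    D.hom_K hZ, D.hom_quotient, D.cellular hZ⟩
  rw [CellularCover.rank_tensor, D.rank_G, hrank, hT]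
  split_ifs with h
  · rw [h]; norm_num
  · ring
end

section
/- Let K be a cotorsion-free reduced abelian group of finite rank κ ≥ 1. Then there exists a cellular exact sequence 0 → K → G → H → 0 of abelian groups in which G is cotorsion-free of rank κ + 2 and H has rank 2. -/
/-!
The group `K` is torsion-free, countable and satisfies `⋂ n! K = 0`; choose `u₁, …, u_κ` in `K`
with `K / ⟨u₁, …, u_κ⟩` torsion. Let `s, t₁, …, t_κ` be elements of `Ẑ`, chosen generically, and put
`y = s e + ∑ tᵢ uᵢ` in `Ẑ e ⊕ K̂`, where `K̂` is the `ℤ`-adic completion of `K`. The group `G` is the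
pure closure of `K ⊕ ℤ e ⊕ ℤ y`, of rank `κ + 2`, and `H = G / K` is the pure closure of `ℤ ⊕ ℤ s`
in `Ẑ`, of rank `2`.

* A homomorphism `f : G → K` satisfies `f y = s f(e) + ∑ tᵢ f(uᵢ)` in `K̂`. For generic parameters
  this forces `f e = 0`, `f uᵢ = 0` and then `f y = 0`, so `f = 0` (`hom_to_kernel_eq_zero`).
* A homomorphism `f : G → H` satisfies the same identity in `Ẑ`. After clearing denominators, it is
  an integral polynomial relation of degree two between `s, t₁, …, t_κ`, which must be trivial.
  This gives `f = m • π` for some integer `m` (`hom_eq_zsmul_proj`), which lifts to `m • id`.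

Together these say that `π : G → H` is a cellular cover. Since `H` is countable, torsion-free and
reduced, it receives no nonzero homomorphism from `Ẑ` (`zhat_hom_eq_zero`); hence a homomorphism
from `Ẑ` to `G` lands in `K` and vanishes.

No completion is used in the formal development. An element of `Ẑ` is replaced by a sequence of
integers `σ n` with `σ m ≡ σ n` modulo `n!` for `n ≤ m`, and `G` and `H` are subgroups of rational
vector spaces, obtained by adjoining the elements `(y - c n) / n!` (`extension`), where `c n` is the
`n`-th approximation of `y`. Genericity means that countably many identities are violated at some
finite stage, which is achieved by diagonalization (`exists_generic_sequence`).
-/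

open TensorProduct

/-! ### Generic profinite parameters -/

open Nat in
/-- Diagonalization. If each of countably many conditions `Fail j` can be met at a finite stage
after a change of the parameters modulo an arbitrary `n!`, and depends at stage `N` only on residues
modulo `N!`, then one coherent sequence meets all of them. This is the Baire category theorem for
`ι → Ẑ`. -/
theorem exists_generic_sequence {ι J : Type*} [Countable J] (Fail : J → ℕ → (ι → ℤ) → Prop)
    (h1 : ∀ j N (s s' : ι → ℤ), (∀ i, (N ! : ℤ) ∣ s' i - s i) → Fail j N s → Fail j N s')
    (h2 : ∀ j n (s : ι → ℤ), ∃ N ≥ n, ∃ s' : ι → ℤ, (∀ i, (n ! : ℤ) ∣ s' i - s i) ∧ Fail j N s') :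
    ∃ σ : ℕ → ι → ℤ, (∀ n m, n ≤ m → ∀ i, (n ! : ℤ) ∣ σ m i - σ n i) ∧
      ∀ j, ∃ N, Fail j N (σ N) := by
  rcases isEmpty_or_nonempty J with hJ | hJ
  · exact ⟨fun _ _ => 0, by simp, fun j => (hJ.false j).elim⟩
  obtain ⟨e, he⟩ := exists_surjective_nat J
  have h3 : ∀ j (x : ℕ × (ι → ℤ)), ∃ y : ℕ × (ι → ℤ), x.1 + 1 ≤ y.1 ∧
      (∀ i, (x.1 ! : ℤ) ∣ y.2 i - x.2 i) ∧ Fail j y.1 y.2 := by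
    intro j x
    obtain ⟨N, hN, s', hs', hF⟩ := h2 j (x.1 + 1) x.2
    refine ⟨(N, s'), hN, fun i => ?_, hF⟩
    exact (Int.natCast_dvd_natCast.2 (Nat.factorial_dvd_factorial (Nat.le_succ _))).trans (hs' i)
  choose next hn1 hn2 hn3 using h3
  let st : ℕ → ℕ × (ι → ℤ) := fun k => Nat.rec (0, 0) (fun k x => next (e k) x) k
  have st_succ : ∀ k, st (k + 1) = next (e k) (st k) := fun k => rfl
  have hge : ∀ k, k ≤ (st k).1 := by
    intro k
    induction k with
    | zero => simp
    | succ k ih =>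
      rw [st_succ]
      have := hn1 (e k) (st k)
      omega
  have hmono : ∀ k m, k ≤ m → (st k).1 ≤ (st m).1 := by
    intro k m hkm
    induction m, hkm using Nat.le_induction with
    | base => exact le_rfl
    | succ m hm ih =>
      rw [st_succ]
      have := hn1 (e m) (st m)
      omega
  have hcong : ∀ k m, k ≤ m → ∀ i, ((st k).1 ! : ℤ) ∣ (st m).2 i - (st k).2 i := by
    intro k m hkm i
    induction m, hkm using Nat.le_induction with
    | base => simp
    | succ m hm ih =>
      have h : ((st k).1 ! : ℤ) ∣ (st (m + 1)).2 i - (st m).2 i :=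
        (Int.natCast_dvd_natCast.2 (Nat.factorial_dvd_factorial (hmono k m hm))).trans
          (by rw [st_succ]; exact hn2 (e m) (st m) i)
      have := dvd_add h ih
      simpa using this
  refine ⟨fun k => (st k).2, fun n m hnm i => ?_, fun j => ?_⟩
  · exact (Int.natCast_dvd_natCast.2 (Nat.factorial_dvd_factorial (hge n))).trans (hcong n m hnm i)
  · obtain ⟨k, rfl⟩ := he j
    refine ⟨(st (k + 1)).1, h1 _ _ _ _ (hcong (k + 1) _ (hge (k + 1))) ?_⟩
    rw [st_succ]
    exact hn3 _ _

open Nat in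
/-- A nonzero `K`-linear form can be made non-divisible by some `N!` by moving the parameters
within their residue classes modulo `n!`: if `n! • a j ∉ N! K`, then the values at `s` and at `s`
shifted by `n!` in the coordinate `j` are not both in `N! K`. -/
theorem exists_fail_linear {ι K : Type*} [Fintype ι] [AddCommGroup K]
    (htf : ∀ (n : ℕ) (x : K), n ≠ 0 → n • x = 0 → x = 0)
    (hred : ∀ x : K, (∀ n : ℕ, ∃ y, x = n ! • y) → x = 0)
    (a₀ : K) (a : ι → K) (ha : a ≠ 0) (n : ℕ) (s : ι → ℤ) :
    ∃ N ≥ n, ∃ s' : ι → ℤ, (∀ i, (n ! : ℤ) ∣ s' i - s i) ∧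
      ¬ ∃ x, a₀ - ∑ i, s' i • a i = N ! • x := by
  classical
  obtain ⟨j, hj⟩ := Function.ne_iff.1 ha
  have h1 : n ! • a j ≠ 0 := fun h => hj (htf _ _ (Nat.factorial_ne_zero n) h)
  have h2 : ∃ N, ¬ ∃ y, n ! • a j = N ! • y := by
    by_contra! h
    exact h1 (hred _ h)
  obtain ⟨N, hN⟩ := h2
  have hN' : ¬ ∃ y, n ! • a j = (max n N)! • y := by
    rintro ⟨y, hy⟩
    obtain ⟨d, hd⟩ := Nat.factorial_dvd_factorial (le_max_right n N)
    exact hN ⟨d • y, by rw [hy, hd, mul_smul]⟩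
  refine ⟨max n N, le_max_left _ _, ?_⟩
  by_contra! h
  obtain ⟨x, hx⟩ := h s (by simp)
  obtain ⟨x', hx'⟩ := h (s + Pi.single j (n ! : ℤ)) (fun i => by
    by_cases hi : i = j
    · subst hi; simp
    · simp [hi])
  apply hN'
  refine ⟨x - x', ?_⟩
  rw [smul_sub, ← hx, ← hx']
  simp [add_smul, Finset.sum_add_distrib, Pi.single_apply, ite_smul]

/-- The value of the polynomial `p + q s - ∑ i, sᵢ (aᵢ + bᵢ s)`, where `s` is the coordinate of the
parameter vector at `none`. Its vanishing expresses, after clearing denominators, the identity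
`f y = s f(e) + ∑ tᵢ f(uᵢ)` for a homomorphism `f : G → H`, with `p + q s` the value at `y` and
`aᵢ + bᵢ s` the values at `e` and the `uᵢ`. -/
def quadTest {ι : Type*} [Fintype ι] (p q : ℤ) (a b : Option ι → ℤ) (s : Option ι → ℤ) : ℤ :=
  p + q * s none - ∑ i, s i * (a i + b i * s none)

open Nat in
/-- Unless the polynomial `quadTest p q a b` is identically zero, it takes a nonzero value on every
residue class modulo `n!`, and a nonzero integer is not divisible by `N!` for large `N`. -/
theorem exists_fail_quad {ι : Type*} [Fintype ι] (p q : ℤ) (a b : Option ι → ℤ)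
    (hne : ¬ (p = 0 ∧ a none = q ∧ b none = 0 ∧ ∀ i, a (some i) = 0 ∧ b (some i) = 0))
    (n : ℕ) (s : Option ι → ℤ) :
    ∃ N ≥ n, ∃ s' : Option ι → ℤ, (∀ i, (n ! : ℤ) ∣ s' i - s i) ∧
      ¬ (N ! : ℤ) ∣ quadTest p q a b s' := by
  classical
  have key : ∃ s' : Option ι → ℤ, (∀ i, (n ! : ℤ) ∣ s' i - s i) ∧ quadTest p q a b s' ≠ 0 := by
    by_contra! h
    apply hne
    have hd : (n ! : ℤ) ≠ 0 := by exact_mod_cast Nat.factorial_ne_zero n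
    have hf : ∀ (k : ℤ) (l : ι → ℤ),
        quadTest p q a b (fun i => i.elim (s none + k * n !) (fun i => s (some i) + l i * n !)) = 0 := by
      intro k l
      apply h
      rintro (_ | i) <;> simp
    simp only [quadTest, Fintype.sum_option, Option.elim] at hf
    have hlin : ∀ i k, a (some i) + b (some i) * (s none + k * n !) = 0 := by
      intro i k
      have e1 := hf k 0
      have e2 := hf k (Pi.single i 1)
      have e3 : ∑ x, (s (some x) + (Pi.single i 1 : ι → ℤ) x * n !) *
            (a (some x) + b (some x) * (s none + k * n !)) =
          ∑ x, (s (some x) + (0 : ι → ℤ) x * n !) *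
            (a (some x) + b (some x) * (s none + k * n !)) +
            n ! * (a (some i) + b (some i) * (s none + k * n !)) := by
        simp [Pi.single_apply, add_mul, Finset.sum_add_distrib, ite_mul]
      rw [e3] at e2
      have : (n ! : ℤ) * (a (some i) + b (some i) * (s none + k * n !)) = 0 := by linarith
      exact (mul_eq_zero.1 this).resolve_left hd
    have hzero : ∀ i, a (some i) = 0 ∧ b (some i) = 0 := by
      intro i
      have e0 := hlin i 0
      have e1 := hlin i 1
      have : b (some i) * (n ! : ℤ) = 0 := by linarith
      have hb := (mul_eq_zero.1 this).resolve_right hd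
      rw [hb] at e0
      exact ⟨by linarith, hb⟩
    have e0 := hf 0 0
    have e1 := hf 1 0
    have e2 := hf (-1) 0
    simp only [(hzero _).1, (hzero _).2, zero_mul, add_zero, mul_zero, Finset.sum_const_zero] at e0 e1 e2
    have hb : b none = 0 := by
      have : b none * ((n ! : ℤ) * n !) = 0 := by linarith
      exact (mul_eq_zero.1 this).resolve_right (mul_ne_zero hd hd)
    rw [hb] at e0 e1 e2
    have ha : a none = q := by
      have : (a none - q) * (n ! : ℤ) = 0 := by linarith
      exact sub_eq_zero.1 ((mul_eq_zero.1 this).resolve_right hd)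
    rw [ha] at e0
    exact ⟨by linarith, ha, hb, hzero⟩
  obtain ⟨s', hs', hne'⟩ := key
  refine ⟨max n ((quadTest p q a b s').natAbs + 1), le_max_left _ _, s', hs', fun hdvd => ?_⟩
  have h1 := Int.natAbs_dvd_natAbs.2 hdvd
  have h2 := Nat.le_of_dvd (Int.natAbs_pos.2 hne') h1
  have h3 := Nat.self_le_factorial (max n ((quadTest p q a b s').natAbs + 1))
  have h4 := le_max_right n ((quadTest p q a b s').natAbs + 1)
  simp only [Int.natAbs_natCast] at h2
  omega

/-! ### Homomorphisms from `Ẑ` -/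

/-- A nonzero torsion element would give an element of prime order `p`, hence a nonzero
homomorphism `Ẑ → ℤ_p → ℤ/p → A`. -/
theorem smul_eq_zero_of_cotorsionFree {A : Type*} [AddCommGroup A] (h : ∀ f : ZHat →+ A, f = 0)
    (n : ℕ) (x : A) (hn : n ≠ 0) (hx : n • x = 0) : x = 0 := by
  by_contra hx0
  have hpos : 0 < addOrderOf x := addOrderOf_pos_iff.2
    (isOfFinAddOrder_iff_nsmul_eq_zero.2 ⟨n, Nat.pos_of_ne_zero hn, hx⟩)
  have hne : addOrderOf x ≠ 1 := fun h1 => hx0 (AddMonoid.addOrderOf_eq_one_iff.1 h1)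
  obtain ⟨p, hp, d, hd⟩ := Nat.exists_prime_and_dvd hne
  have : Fact p.Prime := ⟨hp⟩
  have hy : p • d • x = 0 := by rw [smul_smul, ← hd, addOrderOf_nsmul_eq_zero]
  have hy0 : d • x ≠ 0 := by
    intro h0
    have hd0 : 0 < d := Nat.pos_of_ne_zero (by rintro rfl; omega)
    have h1 := Nat.le_of_dvd hd0 (addOrderOf_dvd_of_nsmul_eq_zero h0)
    have := hp.two_le
    nlinarith
  let g : ZMod p →+ A := ZMod.lift p ⟨zmultiplesHom A (d • x), by simpa using hy⟩
  let ev : ZHat →+ ℤ_[p] := Pi.evalAddMonoidHom (fun q : Nat.Primes => @PadicInt q.1 ⟨q.2⟩) ⟨p, hp⟩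
  let F : ZHat →+ A := g.comp ((PadicInt.toZMod (p := p)).toAddMonoidHom.comp ev)
  have hF : F 1 = d • x := by
    have h1 : F 1 = g 1 := by
      change g (PadicInt.toZMod (p := p) 1) = g 1
      rw [map_one]
    have h2 := ZMod.lift_coe p (A := A) ⟨zmultiplesHom A (d • x), by simpa using hy⟩ 1
    rw [h1]
    simpa [g] using h2
  rw [h F] at hF
  exact hy0 hF.symm

open Nat in
/-- A series `∑ d k * c k` with `k! ∣ c k` and `c k ∣ c (k + 1)` converges in `Ẑ`, and its `n`-th
tail is divisible by `c n`. -/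
theorem exists_zhat_sum (c : ℕ → ℕ) (hc : ∀ k, k ! ∣ c k)
    (hcc : ∀ k l, k ≤ l → c k ∣ c l) (d : ℕ → ℤ) :
    ∃ S : ZHat, ∀ n, ∃ T : ZHat, S = (∑ k ∈ Finset.range n, d k * c k : ℤ) + (c n : ZHat) * T := by
  have key : ∀ p : Nat.Primes, ∃ S : @PadicInt p.1 ⟨p.2⟩, ∀ n, ∃ T : @PadicInt p.1 ⟨p.2⟩,
      S = (∑ k ∈ Finset.range n, d k * c k : ℤ) + (c n) * T := by
    rintro ⟨p, hp⟩
    have : Fact p.Prime := ⟨hp⟩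
    change ∃ S : ℤ_[p], ∀ n, ∃ T : ℤ_[p], S = (∑ k ∈ Finset.range n, d k * c k : ℤ) + (c n) * T
    have hsum : Summable fun k => ((d k * c k : ℤ) : ℤ_[p]) := by
      refine NonarchimedeanAddGroup.summable_of_tendsto_cofinite_zero ?_
      rw [Nat.cofinite_eq_atTop, tendsto_zero_iff_norm_tendsto_zero, Metric.tendsto_atTop]
      intro ε hε
      obtain ⟨j, hj⟩ := PadicInt.exists_pow_neg_lt p hε
      refine ⟨p ^ j, fun k hk => ?_⟩
      rw [Real.dist_eq, sub_zero, abs_norm]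
      refine lt_of_le_of_lt (PadicInt.norm_int_le_pow_iff_dvd.2 ?_) hj
      have h1 : p ^ j ∣ c k := (Nat.dvd_factorial (pow_pos hp.pos _) hk).trans (hc k)
      exact dvd_mul_of_dvd_right (by exact_mod_cast h1) _
    refine ⟨∑' k, ((d k * c k : ℤ) : ℤ_[p]), fun n => ?_⟩
    -- the tail lies in `c n * ℤ_p`, which is compact, hence closed
    have hclosed : IsClosed ((AddMonoidHom.mulLeft (c n : ℤ_[p])).range : Set ℤ_[p]) := by
      rw [AddMonoidHom.coe_range]
      exact (isCompact_range (continuous_const.mul continuous_id)).isClosed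
    have htail : ∑' k, ((d (k + n) * c (k + n) : ℤ) : ℤ_[p]) ∈
        (AddMonoidHom.mulLeft (c n : ℤ_[p])).range := by
      refine tsum_mem hclosed fun k => ?_
      obtain ⟨e, he⟩ := hcc n (k + n) (Nat.le_add_left _ _)
      refine ⟨d (k + n) * e, ?_⟩
      rw [he]
      push_cast [AddMonoidHom.coe_mulLeft]
      ring
    obtain ⟨T, hT⟩ := htail
    refine ⟨T, ?_⟩
    rw [← hsum.sum_add_tsum_nat_add n, ← hT]
    push_cast [AddMonoidHom.coe_mulLeft]
    rfl
  choose S hS using key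
  choose T hT using hS
  refine ⟨S, fun n => ⟨fun p => T p n, ?_⟩⟩
  funext p
  simpa using hT p n

open Nat in
/-- There is no nonzero homomorphism `f` from `Ẑ` to a countable reduced torsion-free group. If
`f x ≠ 0`, choose factorials `c k` with `c k • f x ∉ c (k + 1) • A`. By countability two distinct
`0`-`1` sequences give series `∑ εₖ cₖ` for which `f (x * ∑ εₖ cₖ)` agrees; at the first index `k`
where they differ, `c k • f x` would be divisible by `c (k + 1)`. -/
theorem zhat_hom_eq_zero {A : Type*} [AddCommGroup A] [Countable A]
    (htf : ∀ (n : ℕ) (x : A), n ≠ 0 → n • x = 0 → x = 0)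
    (hred : ∀ x : A, (∀ n : ℕ, ∃ y, x = n ! • y) → x = 0) (f : ZHat →+ A) : f = 0 := by
  classical
  by_contra hf
  obtain ⟨x, hx⟩ := DFunLike.ne_iff.1 hf
  change f x ≠ 0 at hx
  have hstep : ∀ m : ℕ, ∃ N, m + 1 ≤ N ∧ ¬ ∃ y, m ! • f x = N ! • y := by
    intro m
    by_contra! h
    refine hx (htf _ _ (Nat.factorial_ne_zero m) (hred _ fun n => ?_))
    obtain ⟨y, hy⟩ := h (max n (m + 1)) (le_max_right _ _)
    obtain ⟨e, he⟩ := Nat.factorial_dvd_factorial (le_max_left n (m + 1))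
    exact ⟨e • y, by rw [hy, he, mul_smul]⟩
  choose next hn1 hn2 using hstep
  let m : ℕ → ℕ := fun k => Nat.rec 0 (fun _ x => next x) k
  have m_succ : ∀ k, m (k + 1) = next (m k) := fun k => rfl
  have hmono : StrictMono m := strictMono_nat_of_lt_succ fun k => hn1 (m k)
  choose S hS using fun d : ℕ → ℤ => exists_zhat_sum (fun k => (m k)!)
    (fun k => Nat.factorial_dvd_factorial (hmono.le_apply))
    (fun k l hkl => Nat.factorial_dvd_factorial (hmono.monotone hkl)) d
  obtain ⟨e, he⟩ := exists_injective_nat A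
  obtain ⟨ind, hind⟩ : ∃ ind : Set ℕ → ℕ → ℤ,
      ∀ s k, (k ∈ s ∧ ind s k = 1) ∨ (k ∉ s ∧ ind s k = 0) := by
    refine ⟨fun s k => if k ∈ s then 1 else 0, fun s k => ?_⟩
    by_cases h : k ∈ s <;> simp [h]
  apply Function.cantor_injective (fun s : Set ℕ => e (f (x * S (ind s))))
  intro s t hst
  have hst' : f (x * S (ind s)) = f (x * S (ind t)) := he hst
  by_contra hne
  have hex : ∃ k, ind s k ≠ ind t k := by
    by_contra! h
    apply hne
    ext k
    have := h k
    rcases hind s k with ⟨h1, h1'⟩ | ⟨h1, h1'⟩ <;> rcases hind t k with ⟨h2, h2'⟩ | ⟨h2, h2'⟩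
    · exact iff_of_true h1 h2
    · omega
    · omega
    · exact iff_of_false h1 h2
  obtain ⟨k, hk, hlt⟩ : ∃ k, ind s k ≠ ind t k ∧ ∀ l < k, ind s l = ind t l :=
    ⟨Nat.find hex, Nat.find_spec hex, fun l hl => not_not.1 (Nat.find_min hex hl)⟩
  obtain ⟨T1, hT1⟩ := hS (ind s) (k + 1)
  obtain ⟨T2, hT2⟩ := hS (ind t) (k + 1)
  have hsum : ∑ l ∈ Finset.range k, ind s l * ((m l)! : ℤ) = ∑ l ∈ Finset.range k, ind t l * ((m l)! : ℤ) :=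
    Finset.sum_congr rfl fun l hl => by rw [hlt l (Finset.mem_range.1 hl)]
  rw [Finset.sum_range_succ] at hT1 hT2
  have hdiff : x * S (ind s) - x * S (ind t) =
      ((ind s k - ind t k) * ((m k)! : ℤ)) • x + (m (k + 1))! • (x * (T1 - T2)) := by
    rw [hT1, hT2, hsum, zsmul_eq_mul, nsmul_eq_mul]
    push_cast
    ring
  have h0 : f (x * S (ind s) - x * S (ind t)) = 0 := by rw [map_sub, hst', sub_self]
  rw [hdiff, map_add, map_zsmul, map_nsmul] at h0
  have hpm : ind s k - ind t k = 1 ∨ ind s k - ind t k = -1 := by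
    rcases hind s k with ⟨-, h1⟩ | ⟨-, h1⟩ <;> rcases hind t k with ⟨-, h2⟩ | ⟨-, h2⟩ <;> omega
  apply hn2 (m k)
  rw [← m_succ]
  rcases hpm with h | h
  · refine ⟨- f (x * (T1 - T2)), ?_⟩
    rw [h, one_mul, natCast_zsmul] at h0
    rw [smul_neg]
    exact eq_neg_of_add_eq_zero_left h0
  · refine ⟨f (x * (T1 - T2)), ?_⟩
    rw [h, neg_one_mul, neg_smul, natCast_zsmul] at h0
    exact (neg_add_eq_zero.1 h0)

/-! ### The extension construction -/

/-- `v = (x, r)`, thought of as `x + r y`, lies in the group generated by `L` and `(y - c n) / n!`. -/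
def AtLevel {W : Type*} [AddCommGroup W] [Module ℚ W] (L : AddSubgroup W) (c : ℕ → W)
    (n : ℕ) (v : W × ℚ) : Prop :=
  (∃ b : ℤ, (n.factorial : ℚ) * v.2 = b) ∧ v.1 + v.2 • c n ∈ L

open Nat in
/-- The sequence `c` lies in `L` and is Cauchy for the factorial topology, with `c n` determined
modulo `n!` by its limit. -/
def Coherent {W : Type*} [AddCommGroup W] (L : AddSubgroup W) (c : ℕ → W) : Prop :=
  (∀ n, c n ∈ L) ∧ ∀ n m, n ≤ m → ∃ l ∈ L, c m - c n = n ! • l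

section Extension

variable {W : Type*} [AddCommGroup W] [Module ℚ W] {L : AddSubgroup W} {c : ℕ → W}

open Nat in
theorem AtLevel.mono (hc : Coherent L c) {n m : ℕ} (hnm : n ≤ m) {v : W × ℚ}
    (h : AtLevel L c n v) : AtLevel L c m v := by
  obtain ⟨⟨b, hb⟩, hL⟩ := h
  obtain ⟨d, hd⟩ := Nat.factorial_dvd_factorial hnm
  refine ⟨⟨d * b, ?_⟩, ?_⟩
  · rw [hd]
    push_cast
    rw [← hb]
    ring
  · obtain ⟨l, hl, hcl⟩ := hc.2 n m hnm
    have : v.1 + v.2 • c m = (v.1 + v.2 • c n) + b • l := by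
      have h1 : c m = c n + n ! • l := by rw [← hcl]; abel
      rw [h1, smul_add, ← Nat.cast_smul_eq_nsmul ℚ, smul_smul, mul_comm, hb, Int.cast_smul_eq_zsmul]
      abel
    rw [this]
    exact L.add_mem hL (L.zsmul_mem hl b)

variable (L c) in
/-- The subgroup of `W × ℚ = W ⊕ ℚ y` generated by `L` and all the elements `(y - c n) / n!`. -/
def extension (hc : Coherent L c) : AddSubgroup (W × ℚ) where
  carrier := {v | ∃ n, AtLevel L c n v}
  zero_mem' := ⟨0, ⟨0, by simp⟩, by simp⟩
  add_mem' := by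
    rintro v w ⟨n, hn⟩ ⟨m, hm⟩
    obtain ⟨⟨a, ha⟩, h1⟩ := hn.mono hc (le_max_left n m)
    obtain ⟨⟨b, hb⟩, h2⟩ := hm.mono hc (le_max_right n m)
    refine ⟨max n m, ⟨a + b, ?_⟩, ?_⟩
    · simp only [Prod.snd_add, mul_add, ha, hb, Int.cast_add]
    · convert L.add_mem h1 h2 using 1
      simp only [Prod.fst_add, Prod.snd_add, add_smul]
      abel
  neg_mem' := by
    rintro v ⟨n, ⟨a, ha⟩, h1⟩
    refine ⟨n, ⟨-a, by simp [ha]⟩, ?_⟩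
    convert L.neg_mem h1 using 1
    simp only [Prod.fst_neg, Prod.snd_neg, neg_smul]
    abel

variable (hc : Coherent L c)

theorem mem_extension {v : W × ℚ} : v ∈ extension L c hc ↔ ∃ n, AtLevel L c n v := Iff.rfl

/-- The inclusion of `L` into the extension. -/
def baseIncl : L →+ extension L c hc where
  toFun l := ⟨(l.1, 0), 0, ⟨0, by simp⟩, by simp⟩
  map_zero' := rfl
  map_add' x y := by ext <;> simp

/-- The adjoined element `y`. -/
def adjoined : extension L c hc := ⟨(0, 1), 0, ⟨1, by simp⟩, by simpa using hc.1 0⟩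

open Nat in
theorem extension_factorial_smul (n : ℕ) : ∃ y : extension L c hc,
    adjoined hc - baseIncl hc ⟨c n, hc.1 n⟩ = n ! • y := by
  have hn : (n ! : ℚ) ≠ 0 := by exact_mod_cast Nat.factorial_ne_zero n
  refine ⟨⟨(-((n ! : ℚ)⁻¹ • c n), (n ! : ℚ)⁻¹), n, ⟨1, by simp [hn]⟩, by simp⟩, ?_⟩
  apply Subtype.ext
  refine Prod.ext ?_ ?_
  · simp [adjoined, baseIncl, ← Nat.cast_smul_eq_nsmul ℚ, smul_smul, hn]
  · simp [adjoined, baseIncl, hn]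

open Nat in
theorem extension_hom_ext {A : Type*} [AddCommGroup A]
    (htf : ∀ (n : ℕ) (x : A), n ≠ 0 → n • x = 0 → x = 0) (f : extension L c hc →+ A)
    (hL : ∀ l, f (baseIncl hc l) = 0) (hy : f (adjoined hc) = 0) : f = 0 := by
  ext ⟨v, n, ⟨b, hb⟩, hv⟩
  apply htf _ _ (Nat.factorial_ne_zero n)
  have key : n ! • (⟨v, n, ⟨b, hb⟩, hv⟩ : extension L c hc) =
      n ! • baseIncl hc ⟨_, hv⟩ + b • (adjoined hc - baseIncl hc ⟨c n, hc.1 n⟩) := by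
    apply Subtype.ext
    refine Prod.ext ?_ ?_
    · simp only [adjoined, baseIncl, AddSubgroup.coe_nsmul, AddSubgroup.coe_add, AddSubgroup.coe_zsmul,
        AddSubgroup.coe_sub, AddMonoidHom.coe_mk, ZeroHom.coe_mk, Prod.fst_add, Prod.smul_fst, Prod.fst_sub]
      rw [← Int.cast_smul_eq_zsmul ℚ, ← hb, smul_add, ← Nat.cast_smul_eq_nsmul ℚ,
        ← Nat.cast_smul_eq_nsmul ℚ, smul_smul, zero_sub, smul_neg]
      abel
    · simpa [adjoined, baseIncl] using hb
  rw [← map_nsmul, key, map_add, map_nsmul, map_zsmul, map_sub, hL, hL, hy]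
  simp

end Extension

/-- The integers as a subgroup of `ℚ`. -/
abbrev intLine : AddSubgroup ℚ := (Int.castAddHom ℚ).range

open Nat in
theorem coherent_intLine (s : ℕ → ℤ) (hs : ∀ n m, n ≤ m → (n ! : ℤ) ∣ s m - s n) :
    Coherent intLine (fun n => (s n : ℚ)) := by
  refine ⟨fun n => ⟨s n, rfl⟩, fun n m hnm => ?_⟩
  obtain ⟨d, hd⟩ := hs n m hnm
  refine ⟨d, ⟨d, rfl⟩, ?_⟩
  rw [nsmul_eq_mul]
  change (s m : ℚ) - s n = n ! * (d : ℚ)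
  exact_mod_cast hd

open Nat in
/-- If `p + q y` is divisible by `n!` in the extension of `ℤ` by `y = lim s n`, then `p + q s n` is
divisible by `n!` in `ℤ`. -/
theorem dvd_of_divisible_intLine {s : ℕ → ℤ} (hs : ∀ n m, n ≤ m → (n ! : ℤ) ∣ s m - s n)
    (n : ℕ) (p q : ℤ) (h : extension intLine _ (coherent_intLine s hs))
    (hpq : ((p : ℚ), (q : ℚ)) = n ! • (h : ℚ × ℚ)) : (n ! : ℤ) ∣ p + q * s n := by
  obtain ⟨⟨x, r⟩, m, hm⟩ := h
  obtain ⟨-, l, hl⟩ := hm.mono (coherent_intLine s hs) (le_max_left m n)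
  obtain ⟨d, hd⟩ := hs n (max m n) (le_max_right _ _)
  simp only [Prod.smul_mk, Prod.mk.injEq, nsmul_eq_mul] at hpq
  obtain ⟨h1, h2⟩ := hpq
  simp only [Int.coe_castAddHom, smul_eq_mul] at hl
  have : p + q * s (max m n) = n ! * l := by
    have : (p : ℚ) + q * s (max m n) = n ! * l := by rw [h1, h2, hl]; ring
    exact_mod_cast this
  refine ⟨l - q * d, ?_⟩
  have h3 : s (max m n) = s n + n ! * d := by linarith
  rw [h3] at this
  linarith

/-! ### Rank, countability and divisibility -/

theorem rank_tensor (A : Type) [AddCommGroup A] : Module.rank ℚ (ℚ ⊗[ℤ] A) = Module.rank ℤ A := by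
  rw [← IsLocalizedModule.rank_eq (nonZeroDivisors ℤ) le_rfl (TensorProduct.mk ℤ ℚ A 1)]
  exact IsFractionRing.rank_right_eq ℤ ℚ (ℚ ⊗[ℤ] A)

theorem rank_extension_intLine {c : ℕ → ℚ} (hc : Coherent intLine c) :
    Module.rank ℤ (extension intLine c hc) = 2 := by
  have h2 : Module.rank ℤ (ℚ × ℚ) = 2 := by
    rw [← IsFractionRing.rank_right_eq ℤ ℚ, rank_prod']
    simp
    norm_num
  apply le_antisymm
  · rw [← h2]
    exact LinearMap.rank_le_of_injective (extension intLine c hc).subtype.toIntLinearMap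
      Subtype.val_injective
  · have h3 : Module.rank ℤ (ℤ × ℤ) = 2 := by
      rw [rank_prod']
      simp
      norm_num
    rw [← h3]
    let f : ℤ × ℤ →+ ℚ × ℚ := (Int.castAddHom ℚ).prodMap (Int.castAddHom ℚ)
    have hf : ∀ x, f x ∈ extension intLine c hc := by
      rintro ⟨a, b⟩
      refine ⟨0, ⟨b, by simp [f]⟩, ?_⟩
      refine AddSubgroup.add_mem _ ⟨a, rfl⟩ ?_
      have := AddSubgroup.zsmul_mem _ (hc.1 0) b
      simpa [f] using this
    refine LinearMap.rank_le_of_injective (f.codRestrict _ hf).toIntLinearMap ?_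
    rintro ⟨a, b⟩ ⟨a', b'⟩ h
    have := congrArg Subtype.val h
    simpa [f] using this

theorem rank_of_exact {K G H : Type} [AddCommGroup K] [AddCommGroup G] [AddCommGroup H]
    (ι : K →+ G) (π : G →+ H) (hι : Function.Injective ι) (hπ : Function.Surjective π)
    (h : ι.range = π.ker) : Module.rank ℤ G = Module.rank ℤ K + Module.rank ℤ H := by
  have h1 := LinearMap.rank_range_add_rank_ker π.toIntLinearMap
  rw [rank_range_of_surjective _ hπ] at h1
  rw [← h1, add_comm]
  congr 1
  have h2 : LinearMap.ker π.toIntLinearMap = LinearMap.range ι.toIntLinearMap := by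
    ext x
    have := SetLike.ext_iff.1 h x
    change π x = 0 ↔ ∃ y, ι y = x
    exact this.symm
  rw [h2, rank_range_of_injective _ hι]

/-- A group of rank `κ` is torsion over a subgroup generated by `κ` elements. -/
theorem exists_fintype_torsion {K : Type} [AddCommGroup K] (κ : ℕ) (h : Module.rank ℤ K = κ) :
    ∃ u : Fin κ → K, ∀ x : K, ∃ n : ℤ, n ≠ 0 ∧ n • x ∈ Submodule.span ℤ (Set.range u) := by
  obtain ⟨s, hs, hli⟩ := exists_set_linearIndependent_of_isDomain (R := ℤ) (M := K)
  rw [h] at hs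
  have e : Nonempty (Fin κ ≃ s) := by
    rw [← Cardinal.eq, hs]; simp
  obtain ⟨e⟩ := e
  refine ⟨fun i => e i, fun x => ?_⟩
  have hr : Set.range (fun i => (e i : K)) = s := by
    have := e.surjective.range_comp (Subtype.val : s → K)
    simpa [Function.comp_def] using this
  rw [hr]
  have h1 := rank_quotient_add_rank_of_isDomain (Submodule.span ℤ s)
  have h3 : Module.rank ℤ (Submodule.span ℤ s) = κ := by
    rw [← hs]; exact rank_span_set hli
  rw [h3, h] at h1
  have h4 : Module.rank ℤ (K ⧸ Submodule.span ℤ s) = 0 := by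
    have := (Cardinal.add_right_inj_of_lt_aleph0 (Cardinal.natCast_lt_aleph0 (n := κ))).1
      (h1.trans (zero_add _).symm)
    exact this
  obtain ⟨n, hn, hx⟩ := rank_eq_zero_iff.1 h4 (Submodule.Quotient.mk x)
  refine ⟨n, hn, ?_⟩
  rwa [← Submodule.Quotient.mk_smul, Submodule.Quotient.mk_eq_zero] at hx

theorem tensor_mk_injective {K : Type} [AddCommGroup K]
    (htf : ∀ (n : ℕ) (x : K), n ≠ 0 → n • x = 0 → x = 0) :
    Function.Injective (TensorProduct.mk ℤ ℚ K 1) := by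
  rw [injective_iff_map_eq_zero]
  intro x hx
  obtain ⟨⟨m, hm⟩, h⟩ := (IsLocalizedModule.eq_zero_iff (nonZeroDivisors ℤ) (TensorProduct.mk ℤ ℚ K 1)).1 hx
  have hm0 : m ≠ 0 := nonZeroDivisors.ne_zero hm
  apply htf m.natAbs x (Int.natAbs_ne_zero.2 hm0)
  change m • x = 0 at h
  rcases Int.natAbs_eq m with h' | h' <;> rw [h'] at h <;> simpa using h

theorem countable_of_rank {K : Type} [AddCommGroup K] (κ : ℕ)
    (htf : ∀ (n : ℕ) (x : K), n ≠ 0 → n • x = 0 → x = 0)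
    (hrank : Module.rank ℚ (ℚ ⊗[ℤ] K) = κ) : Countable K := by
  have b := Module.Free.chooseBasis ℚ (ℚ ⊗[ℤ] K)
  have hf : Module.Finite ℚ (ℚ ⊗[ℤ] K) :=
    Module.rank_lt_aleph0_iff.1 (hrank ▸ Cardinal.natCast_lt_aleph0)
  have : Countable (ℚ ⊗[ℤ] K) := b.equivFun.injective.countable
  exact (tensor_mk_injective htf).countable

open Nat in
/-- In a torsion-free group, `⋂ n! K` is divisible, hence zero if the group is reduced. -/
theorem eq_zero_of_factorial_divisible {K : Type*} [AddCommGroup K]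
    (htf : ∀ (n : ℕ) (x : K), n ≠ 0 → n • x = 0 → x = 0)
    (hred : ∀ D : AddSubgroup K, (∀ n : ℤ, n ≠ 0 → ∀ d ∈ D, ∃ d' ∈ D, n • d' = d) → D = ⊥)
    (x : K) (hx : ∀ n : ℕ, ∃ y, x = n ! • y) : x = 0 := by
  let D : AddSubgroup K := ⨅ n : ℕ, (nsmulAddMonoidHom (n !) : K →+ K).range
  have hD : ∀ z, z ∈ D ↔ ∀ n : ℕ, ∃ y, n ! • y = z := by
    intro z; simp [D, AddSubgroup.mem_iInf]
  have : D = ⊥ := by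
    apply hred
    intro n hn d hd
    rw [hD] at hd
    have hn' : n.natAbs ≠ 0 := Int.natAbs_ne_zero.2 hn
    have hdvd : (n.natAbs : ℤ) ∣ n := Int.natAbs_dvd.2 dvd_rfl
    -- divide `d` by `|n|`, which divides `(m + |n|)! / m!`
    have key : ∀ m : ℕ, ∃ y, n.natAbs • m ! • y = d := by
      intro m
      obtain ⟨y, hy⟩ := hd (m + n.natAbs)
      have h1 : n.natAbs * m ! ∣ (m + n.natAbs)! := by
        rw [mul_comm]
        exact (Nat.mul_dvd_mul_left _ (Nat.dvd_factorial (Nat.pos_of_ne_zero hn') le_rfl)).trans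
          (Nat.factorial_mul_factorial_dvd_factorial_add _ _)
      obtain ⟨e, he⟩ := h1
      exact ⟨e • y, by rw [← hy, he, mul_smul, mul_smul]⟩
    obtain ⟨y, hy⟩ := key 0
    have hy' : n.natAbs • y = d := by simpa using hy
    have hyD : y ∈ D := by
      rw [hD]
      intro m
      obtain ⟨z, hz⟩ := key m
      refine ⟨z, sub_eq_zero.1 (htf _ _ hn' ?_)⟩
      rw [smul_sub, hz, hy', sub_self]
    rcases Int.natAbs_eq n with h' | h'
    · exact ⟨y, hyD, by rw [h', natCast_zsmul, hy']⟩
    · exact ⟨-y, D.neg_mem hyD, by rw [h', neg_smul, smul_neg, neg_neg, natCast_zsmul, hy']⟩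
  have hxD : x ∈ D := (hD x).2 fun n => (hx n).imp fun y h => h.symm
  rw [this] at hxD
  exact hxD

/-! ### Extensions along a combination of generators -/

section Generic

variable {W : Type*} [AddCommGroup W] {L : AddSubgroup W}
  {ι : Type*} [Fintype ι] {w : ι → L} {σ : ℕ → ι → ℤ}

variable (w σ) in
/-- The element `∑ i, σ n i • w i` of `L`, viewed in `W`. -/
def comb (n : ℕ) : W := ((∑ i, σ n i • w i : L) : W)

open Nat in
theorem coherent_comb (hσ : ∀ n m, n ≤ m → ∀ i, (n ! : ℤ) ∣ σ m i - σ n i) :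
    Coherent L (comb w σ) := by
  refine ⟨fun n => (∑ i, σ n i • w i : L).2, fun n m hnm => ?_⟩
  choose d hd using hσ n m hnm
  refine ⟨_, (∑ i, d i • w i : L).2, ?_⟩
  rw [comb, comb, ← AddSubgroup.coe_sub, ← AddSubgroup.coe_nsmul, ← Finset.sum_sub_distrib,
    Finset.smul_sum]
  congr 1
  refine Finset.sum_congr rfl fun i _ => ?_
  rw [← sub_smul, hd, mul_smul, natCast_zsmul]

variable [Module ℚ W]

open Nat in
/-- The finite stages of the identity `f y = ∑ σᵢ f(wᵢ)`. -/
theorem hom_divisible (hc : Coherent L (comb w σ)) {A : Type*} [AddCommGroup A]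
    (f : extension L (comb w σ) hc →+ A) (n : ℕ) :
    ∃ x, f (adjoined hc) - ∑ i, σ n i • f (baseIncl hc (w i)) = n ! • x := by
  obtain ⟨y, hy⟩ := extension_factorial_smul hc n
  refine ⟨f y, ?_⟩
  rw [← map_nsmul, ← hy, map_sub]
  congr 1
  change _ = f (baseIncl hc (∑ i, σ n i • w i))
  simp only [map_sum, map_zsmul]

theorem hom_eq_zero (hc : Coherent L (comb w σ))
    (hw : ∀ l : L, ∃ n : ℤ, n ≠ 0 ∧ n • l ∈ Submodule.span ℤ (Set.range w))
    {A : Type*} [AddCommGroup A]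
    (htf : ∀ (n : ℕ) (x : A), n ≠ 0 → n • x = 0 → x = 0)
    (f : extension L (comb w σ) hc →+ A)
    (hf : ∀ i, f (baseIncl hc (w i)) = 0) (hy : f (adjoined hc) = 0) : f = 0 := by
  refine extension_hom_ext hc htf f (fun l => ?_) hy
  obtain ⟨n, hn, hl⟩ := hw l
  have hspan : Submodule.span ℤ (Set.range w) ≤
      LinearMap.ker (f.comp (baseIncl hc)).toIntLinearMap := by
    rw [Submodule.span_le]
    rintro _ ⟨i, rfl⟩
    exact hf i
  have h1 : f (baseIncl hc (n • l)) = 0 := hspan hl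
  rw [map_zsmul, map_zsmul] at h1
  apply htf n.natAbs _ (Int.natAbs_ne_zero.2 hn)
  rcases Int.natAbs_eq n with h' | h' <;> rw [h'] at h1 <;> simpa using h1

end Generic

/-! ### Choice of parameters -/

open Nat in
/-- Parameters for which neither a nontrivial `K`-linear relation nor a nontrivial relation of the
shape `quadTest` holds at all finite stages. -/
theorem exists_parameters (K : Type) [AddCommGroup K] [Countable K] (ι : Type) [Fintype ι]
    (htf : ∀ (n : ℕ) (x : K), n ≠ 0 → n • x = 0 → x = 0)
    (hred : ∀ x : K, (∀ n : ℕ, ∃ y, x = n ! • y) → x = 0) :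
    ∃ σ : ℕ → Option ι → ℤ, (∀ n m, n ≤ m → ∀ i, (n ! : ℤ) ∣ σ m i - σ n i) ∧
      (∀ (a₀ : K) (a : Option ι → K),
        (∀ n, ∃ x, a₀ - ∑ i, σ n i • a i = n ! • x) → a = 0) ∧
      (∀ (p q : ℤ) (a b : Option ι → ℤ), (∀ n, (n ! : ℤ) ∣ quadTest p q a b (σ n)) →
        p = 0 ∧ a none = q ∧ b none = 0 ∧ ∀ i, a (some i) = 0 ∧ b (some i) = 0) := by
  let J₁ := {t : K × (Option ι → K) // t.2 ≠ 0}
  let J₂ := {t : (ℤ × ℤ) × (Option ι → ℤ) × (Option ι → ℤ) //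
    ¬ (t.1.1 = 0 ∧ t.2.1 none = t.1.2 ∧ t.2.2 none = 0 ∧
      ∀ i, t.2.1 (some i) = 0 ∧ t.2.2 (some i) = 0)}
  let Fail : J₁ ⊕ J₂ → ℕ → (Option ι → ℤ) → Prop := Sum.elim
    (fun t N s => ¬ ∃ x, t.1.1 - ∑ i, s i • t.1.2 i = N ! • x)
    (fun t N s => ¬ (N ! : ℤ) ∣ quadTest t.1.1.1 t.1.1.2 t.1.2.1 t.1.2.2 s)
  obtain ⟨σ, h1, h2⟩ := exists_generic_sequence Fail (by
    rintro (t | t) N s s' hs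
    · intro h
      rintro ⟨x, hx⟩
      choose d hd using hs
      refine h ⟨x + ∑ i, d i • t.1.2 i, ?_⟩
      rw [smul_add, ← hx, Finset.smul_sum]
      have : ∀ i, s' i • t.1.2 i = s i • t.1.2 i + N ! • d i • t.1.2 i := by
        intro i
        rw [← natCast_zsmul, smul_smul, ← hd, ← add_smul]
        congr 1
        ring
      simp only [this, Finset.sum_add_distrib]
      abel
    · intro h hdvd
      refine h ?_
      have hmod : ∀ i, s' i ≡ s i [ZMOD N !] := fun i => (Int.modEq_iff_dvd.2 (hs i)).symm
      have : quadTest t.1.1.1 t.1.1.2 t.1.2.1 t.1.2.2 s' ≡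
          quadTest t.1.1.1 t.1.1.2 t.1.2.1 t.1.2.2 s [ZMOD N !] := by
        refine Int.ModEq.sub (((hmod none).mul_left _).add_left _) ?_
        exact Int.ModEq.sum fun i _ => (hmod i).mul (((hmod none).mul_left _).add_left _)
      exact (Int.ModEq.dvd_iff this).1 hdvd) (by
    rintro (t | t) n s
    · exact exists_fail_linear htf hred _ _ t.2 n s
    · exact exists_fail_quad _ _ _ _ t.2 n s)
  refine ⟨σ, h1, fun a₀ a h => ?_, fun p q a b h => ?_⟩
  · by_contra ha
    obtain ⟨N, hN⟩ := h2 (Sum.inl ⟨(a₀, a), ha⟩)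
    exact hN (h N)
  · by_contra ha
    obtain ⟨N, hN⟩ := h2 (Sum.inr ⟨((p, q), (a, b)), ha⟩)
    exact hN (h N)

theorem exists_common_denominator {ι : Type*} [Fintype ι] (v : ι → ℚ × ℚ) :
    ∃ (M : ℕ) (a b : ι → ℤ), M ≠ 0 ∧ ∀ i, M • v i = ((a i : ℚ), (b i : ℚ)) := by
  classical
  have key : ∀ i, ∃ a b : ℤ, ((∏ i, (v i).1.den * (v i).2.den : ℕ)) • v i = ((a : ℚ), (b : ℚ)) := by
    intro i
    obtain ⟨d, hd⟩ := Finset.dvd_prod_of_mem (fun i => (v i).1.den * (v i).2.den) (Finset.mem_univ i)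
    rw [hd]
    have h1 := Rat.den_mul_eq_num (v i).1
    have h2 := Rat.den_mul_eq_num (v i).2
    refine ⟨(v i).2.den * d * (v i).1.num, (v i).1.den * d * (v i).2.num, Prod.ext ?_ ?_⟩
    · rw [Prod.smul_fst, nsmul_eq_mul]
      push_cast
      rw [← h1]; ring
    · rw [Prod.smul_snd, nsmul_eq_mul]
      push_cast
      rw [← h2]; ring
  choose a b hab using key
  refine ⟨_, a, b, ?_, hab⟩
  exact Finset.prod_ne_zero_iff.2 fun i _ => mul_ne_zero (v i).1.den_nz (v i).2.den_nz

/-! ### The exact sequence -/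

section ExactSequence

variable {K V : Type} [AddCommGroup K] [AddCommGroup V] (j : K →+ V)
  {ι : Type} (u : ι → K)

/-- The subgroup `K ⊕ ℤ e` of `V ⊕ ℚ e`, where `K` is embedded by `j`. -/
abbrev base : AddSubgroup (V × ℚ) := j.range.prod intLine

/-- The element `e` (at `none`) and the elements `uᵢ` (at `some i`) of `K ⊕ ℤ e`. -/
def baseGen : Option ι → base j
  | none => ⟨(0, 1), ⟨0, map_zero j⟩, ⟨1, by simp⟩⟩
  | some i => ⟨(j (u i), 0), ⟨u i, rfl⟩, ⟨0, by simp⟩⟩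

theorem baseGen_torsion
    (hu : ∀ x : K, ∃ n : ℤ, n ≠ 0 ∧ n • x ∈ Submodule.span ℤ (Set.range u)) (l : base j) :
    ∃ n : ℤ, n ≠ 0 ∧ n • l ∈ Submodule.span ℤ (Set.range (baseGen j u)) := by
  obtain ⟨⟨x, y⟩, ⟨k, hk⟩, ⟨a, ha⟩⟩ := l
  change j k = x at hk
  change (a : ℚ) = y at ha
  subst hk ha
  obtain ⟨n, hn, hnk⟩ := hu k
  refine ⟨n, hn, ?_⟩
  let g : K →+ base j :=
    { toFun := fun k => ⟨(j k, 0), ⟨k, rfl⟩, ⟨0, by simp⟩⟩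
      map_zero' := by ext <;> simp
      map_add' := fun x y => by ext <;> simp }
  have hspan : Submodule.span ℤ (Set.range u) ≤
      (Submodule.span ℤ (Set.range (baseGen j u))).comap g.toIntLinearMap := by
    rw [Submodule.span_le]
    rintro _ ⟨i, rfl⟩
    exact Submodule.subset_span ⟨some i, rfl⟩
  have h1 : g (n • k) ∈ Submodule.span ℤ (Set.range (baseGen j u)) := hspan hnk
  have h2 : (n * a) • baseGen j u none ∈ Submodule.span ℤ (Set.range (baseGen j u)) :=
    Submodule.smul_mem _ _ (Submodule.subset_span ⟨none, rfl⟩)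
  convert Submodule.add_mem _ h1 h2 using 1
  apply Subtype.ext
  refine Prod.ext ?_ ?_
  · simp [g, baseGen]
  · simp [g, baseGen]

variable [Fintype ι] {σ : ℕ → Option ι → ℤ}

theorem comb_baseGen_snd (n : ℕ) : (comb (baseGen j u) σ n).2 = (σ n none : ℚ) := by
  simp [comb, Fintype.sum_option, baseGen, AddSubgroup.coe_add, Prod.snd_sum]

variable [Module ℚ V] (hG : Coherent (base j) (comb (baseGen j u) σ))
  (hH : Coherent intLine (fun n => (σ n none : ℚ)))

/-- The projection `π : G → H` that forgets the component in `V`. -/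
def proj : extension _ _ hG →+ extension _ _ hH where
  toFun v := ⟨(v.1.1.2, v.1.2), by
    obtain ⟨v, n, hb, hv⟩ := v
    refine ⟨n, hb, ?_⟩
    have h := hv.2
    simp only [Prod.snd_add, Prod.smul_snd, comb_baseGen_snd] at h
    exact h⟩
  map_zero' := rfl
  map_add' x y := rfl

/-- The inclusion of `K` into `G`. -/
def kernelIncl : K →+ extension _ _ hG where
  toFun k := baseIncl hG ⟨(j k, 0), ⟨k, rfl⟩, ⟨0, by simp⟩⟩
  map_zero' := by apply Subtype.ext; simp [baseIncl]
  map_add' x y := by apply Subtype.ext; simp [baseIncl]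

theorem proj_surjective : Function.Surjective (proj j u hG hH) := by
  rintro ⟨⟨x, r⟩, n, hb, hx⟩
  refine ⟨⟨((-(r • (comb (baseGen j u) σ n).1), x), r), n, hb, ?_, ?_⟩, rfl⟩
  · exact ⟨0, by simp⟩
  · simp only [Prod.snd_add, Prod.smul_snd, comb_baseGen_snd]
    exact hx

theorem range_kernelIncl : (kernelIncl j u hG).range = (proj j u hG hH).ker := by
  ext v
  constructor
  · rintro ⟨k, rfl⟩
    rfl
  · obtain ⟨⟨⟨v, x⟩, r⟩, n, hb, hv, hv'⟩ := v
    intro h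
    have h' : (x, r) = ((0 : ℚ), (0 : ℚ)) := congrArg Subtype.val h
    obtain ⟨rfl, rfl⟩ := Prod.mk.inj h'
    simp only [zero_smul, add_zero] at hv
    obtain ⟨k, rfl⟩ := hv
    exact ⟨k, rfl⟩

theorem kernelIncl_injective (hj : Function.Injective j) :
    Function.Injective (kernelIncl j u hG) := by
  intro x y h
  have h' : ((j x, (0 : ℚ)), (0 : ℚ)) = ((j y, (0 : ℚ)), (0 : ℚ)) := congrArg Subtype.val h
  simp only [Prod.mk.injEq, and_true] at h'
  exact hj h'

end ExactSequence

theorem extension_intLine_torsionFree {c : ℕ → ℚ} (hc : Coherent intLine c) (n : ℕ)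
    (x : extension intLine c hc) (hn : n ≠ 0) (h : n • x = 0) : x = 0 := by
  have h' : n • (x : ℚ × ℚ) = 0 := congrArg Subtype.val h
  exact Subtype.ext ((smul_eq_zero.1 h').resolve_left hn)

open Nat in
theorem extension_intLine_reduced {ι : Type} [Fintype ι] {σ : ℕ → Option ι → ℤ}
    (hσ : ∀ n m, n ≤ m → ∀ i, (n ! : ℤ) ∣ σ m i - σ n i)
    (hB : ∀ (p q : ℤ) (a b : Option ι → ℤ), (∀ n, (n ! : ℤ) ∣ quadTest p q a b (σ n)) →
        p = 0 ∧ a none = q ∧ b none = 0 ∧ ∀ i, a (some i) = 0 ∧ b (some i) = 0)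
    (x : extension intLine _ (coherent_intLine (fun n => σ n none) (fun n m h => hσ n m h none)))
    (hx : ∀ n : ℕ, ∃ y, x = n ! • y) : x = 0 := by
  obtain ⟨M, a, b, hM, hab⟩ := exists_common_denominator (fun _ : Unit => (x : ℚ × ℚ))
  have hdvd : ∀ n, (n ! : ℤ) ∣ quadTest (a ()) (b ()) 0 0 (σ n) := by
    intro n
    obtain ⟨y, hy⟩ := hx n
    have := dvd_of_divisible_intLine (s := fun n => σ n none) (fun n m h => hσ n m h none) n
      (a ()) (b ()) (M • y) (by
        rw [← hab ()]
        conv_lhs => rw [hy]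
        rw [AddSubgroup.coe_nsmul, AddSubgroup.coe_nsmul, smul_comm])
    simpa [quadTest] using this
  obtain ⟨ha, hb, -⟩ := hB _ _ _ _ hdvd
  apply extension_intLine_torsionFree _ M x hM
  apply Subtype.ext
  rw [AddSubgroup.coe_nsmul, hab (), ha, ← hb]
  simp

/-! ### Homomorphisms from `G` to `K` and to `H` -/

section Homomorphisms

variable {K V : Type} [AddCommGroup K] [AddCommGroup V] [Module ℚ V] (j : K →+ V)
  {ι : Type} [Fintype ι] (u : ι → K) {σ : ℕ → Option ι → ℤ}

open Nat in
theorem hom_to_kernel_eq_zero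
    (htf : ∀ (n : ℕ) (x : K), n ≠ 0 → n • x = 0 → x = 0)
    (hred : ∀ x : K, (∀ n : ℕ, ∃ y, x = n ! • y) → x = 0)
    (hu : ∀ x : K, ∃ n : ℤ, n ≠ 0 ∧ n • x ∈ Submodule.span ℤ (Set.range u))
    (hA : ∀ (a₀ : K) (a : Option ι → K),
        (∀ n, ∃ x, a₀ - ∑ i, σ n i • a i = n ! • x) → a = 0)
    (hG : Coherent (base j) (comb (baseGen j u) σ))
    (f : extension _ _ hG →+ K) : f = 0 := by
  have hdiv := hom_divisible hG f
  have h0 := hA _ _ hdiv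
  have h0' : ∀ i, f (baseIncl hG (baseGen j u i)) = 0 := fun i => congrFun h0 i
  refine hom_eq_zero hG (baseGen_torsion j u hu) htf f h0' (hred _ fun n => ?_)
  obtain ⟨x, hx⟩ := hdiv n
  exact ⟨x, by simpa [h0'] using hx⟩

open Nat in
theorem hom_eq_zsmul_proj
    (hu : ∀ x : K, ∃ n : ℤ, n ≠ 0 ∧ n • x ∈ Submodule.span ℤ (Set.range u))
    (hσ : ∀ n m, n ≤ m → ∀ i, (n ! : ℤ) ∣ σ m i - σ n i)
    (hB : ∀ (p q : ℤ) (a b : Option ι → ℤ), (∀ n, (n ! : ℤ) ∣ quadTest p q a b (σ n)) →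
        p = 0 ∧ a none = q ∧ b none = 0 ∧ ∀ i, a (some i) = 0 ∧ b (some i) = 0)
    (hG : Coherent (base j) (comb (baseGen j u) σ))
    (f : extension _ _ hG →+ extension intLine _
      (coherent_intLine (fun n => σ n none) (fun n m h => hσ n m h none))) :
    ∃ m : ℤ, f = m • proj j u hG _ := by
  have hHtf := extension_intLine_torsionFree
    (coherent_intLine (fun n => σ n none) (fun n m h => hσ n m h none))
  obtain ⟨M, a, b, hM, hab⟩ := exists_common_denominator
    (fun i : Option (Option ι) => (i.elim (f (adjoined hG))
      (fun i => f (baseIncl hG (baseGen j u i))) : ℚ × ℚ))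
  have hy : M • (f (adjoined hG) : ℚ × ℚ) = ((a none : ℚ), (b none : ℚ)) := hab none
  have hw : ∀ i, M • (f (baseIncl hG (baseGen j u i)) : ℚ × ℚ) =
      ((a (some i) : ℚ), (b (some i) : ℚ)) := fun i => hab (some i)
  have hdvd : ∀ n, (n ! : ℤ) ∣
      quadTest (a none) (b none) (fun i => a (some i)) (fun i => b (some i)) (σ n) := by
    intro n
    obtain ⟨x, hx⟩ := hom_divisible hG f n
    have := dvd_of_divisible_intLine (s := fun n => σ n none) (fun n m h => hσ n m h none) n
      (a none - ∑ i, σ n i * a (some i)) (b none - ∑ i, σ n i * b (some i)) (M • x) (by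
        rw [AddSubgroup.coe_nsmul, smul_comm, ← AddSubgroup.coe_nsmul, ← hx, AddSubgroup.coe_sub,
          AddSubgroup.val_finsetSum, smul_sub, hy, Finset.smul_sum]
        simp only [AddSubgroup.coe_zsmul, smul_comm M (σ n _), hw]
        refine Prod.ext ?_ ?_
        · simp [Prod.fst_sum]
        · simp [Prod.snd_sum])
    convert this using 1
    simp only [quadTest, sub_mul, mul_add, Finset.sum_add_distrib, Finset.sum_mul, mul_assoc]
    ring
  obtain ⟨hp, hq, hb, hz⟩ := hB _ _ _ _ hdvd
  -- `f e` has no `y`-component, and `H` meets `ℚ e` in `ℤ e`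
  obtain ⟨m, hm⟩ : ∃ m : ℤ, (f (baseIncl hG (baseGen j u none)) : ℚ × ℚ) = ((m : ℚ), (0 : ℚ)) := by
    have hr : M • (f (baseIncl hG (baseGen j u none)) : ℚ × ℚ).2 = ((0 : ℤ) : ℚ) := by
      rw [← hb]; exact congrArg Prod.snd (hw none)
    rw [Int.cast_zero] at hr
    have hr0 := (smul_eq_zero.1 hr).resolve_left hM
    obtain ⟨n, -, m, hm⟩ := (f (baseIncl hG (baseGen j u none))).2
    refine ⟨m, Prod.ext ?_ hr0⟩
    rw [hr0] at hm
    simpa using hm.symm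
  have hMm : (M : ℚ) * m = (b none : ℚ) := by
    have h1 := hw none
    rw [hm, hq] at h1
    simpa using congrArg Prod.fst h1
  refine ⟨m, sub_eq_zero.1 (hom_eq_zero hG (baseGen_torsion j u hu) hHtf _ ?_ ?_)⟩
  · rintro (_ | i)
    · apply Subtype.ext
      change (f (baseIncl hG (baseGen j u none)) : ℚ × ℚ) - m • ((1 : ℚ), (0 : ℚ)) = 0
      rw [hm]
      simp
    · apply hHtf M _ hM
      apply Subtype.ext
      change M • ((f (baseIncl hG (baseGen j u (some i))) : ℚ × ℚ) - m • ((0 : ℚ), (0 : ℚ))) = 0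
      rw [smul_sub, hw, (hz i).1, (hz i).2]
      simp
  · apply hHtf M _ hM
    apply Subtype.ext
    change M • ((f (adjoined hG) : ℚ × ℚ) - m • ((0 : ℚ), (1 : ℚ))) = 0
    rw [smul_sub, hy, hp, ← hMm]
    simp

end Homomorphisms

/-! ### Assembly -/

/-- Every cotorsion-free reduced abelian group `K` of finite rank `κ ≥ 1`
is the kernel of a cellular exact sequence `0 → K → G → H → 0` with `G` cotorsion-free of
rank `κ + 2` and `H` of rank `2`. -/
theorem cellular_cover_of_finite_rank_cotorsion_free (K : Type) [AddCommGroup K]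
    (hctf : ∀ f : ZHat →+ K, f = 0)
    (hred : ∀ D : AddSubgroup K, (∀ n : ℤ, n ≠ 0 → ∀ d ∈ D, ∃ d' ∈ D, n • d' = d) → D = ⊥)
    (κ : ℕ) (hκ : 1 ≤ κ)
    (hrank : Module.rank ℚ (ℚ ⊗[ℤ] K) = κ) :
    ∃ (G H : Type) (_ : AddCommGroup G) (_ : AddCommGroup H)
      (ι : K →+ G) (π : G →+ H),
      (∀ f : ZHat →+ G, f = 0) ∧
      Module.rank ℚ (ℚ ⊗[ℤ] G) = (κ : Cardinal) + 2 ∧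
      Module.rank ℚ (ℚ ⊗[ℤ] H) = 2 ∧
      Function.Injective ι ∧
      Function.Surjective π ∧
      ι.range = π.ker ∧
      Function.Bijective (fun φ : G →+ G => π.comp φ) := by
  have htf := smul_eq_zero_of_cotorsionFree hctf
  have hred' := eq_zero_of_factorial_divisible htf hred
  have hcount : Countable K := countable_of_rank κ htf hrank
  have hrankZ : Module.rank ℤ K = κ := by rw [← rank_tensor, hrank]
  obtain ⟨u, hu⟩ := exists_fintype_torsion κ hrankZ
  obtain ⟨σ, hσ, hA, hB⟩ := exists_parameters K (Fin κ) htf hred'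
  let j : K →+ ℚ ⊗[ℤ] K := (TensorProduct.mk ℤ ℚ K 1).toAddMonoidHom
  have hj : Function.Injective j := tensor_mk_injective htf
  have hG : Coherent (base j) (comb (baseGen j u) σ) := coherent_comb hσ
  have hH := coherent_intLine (fun n => σ n none) (fun n m h => hσ n m h none)
  have hinj := kernelIncl_injective j u hG hj
  have hsurj := proj_surjective j u hG hH
  have hexact := range_kernelIncl j u hG hH
  have hrankH := rank_extension_intLine hH
  -- a homomorphism into `G` that is killed by the projection factors through `K`
  have hlift : ∀ (A : Type) [AddCommGroup A] (f : A →+ extension _ _ hG),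
      (∀ g : A →+ K, g = 0) → (proj j u hG hH).comp f = 0 → f = 0 := by
    intro A _ f hAK hf
    have hmem : ∀ x, f x ∈ (kernelIncl j u hG).range := fun x => by
      rw [hexact]
      exact DFunLike.congr_fun hf x
    let e := AddMonoidHom.ofInjective hinj
    have h0 := hAK (e.symm.toAddMonoidHom.comp (f.codRestrict _ hmem))
    ext1 x
    have h1 : e.symm ⟨f x, hmem x⟩ = 0 := DFunLike.congr_fun h0 x
    rw [AddEquiv.map_eq_zero_iff] at h1
    exact congrArg Subtype.val h1
  refine ⟨extension _ _ hG, extension _ _ hH, inferInstance, inferInstance, kernelIncl j u hG,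
    proj j u hG hH, ?_, ?_, ?_, hinj, hsurj, hexact, ?_, ?_⟩
  · intro f
    exact hlift _ f hctf (zhat_hom_eq_zero (extension_intLine_torsionFree hH)
      (extension_intLine_reduced hσ hB) _)
  · rw [rank_tensor, rank_of_exact _ _ hinj hsurj hexact, hrankZ, hrankH]
  · rw [rank_tensor, hrankH]
  · intro φ ψ h
    refine sub_eq_zero.1 (hlift _ (φ - ψ) (hom_to_kernel_eq_zero j u htf hred' hu hA hG) ?_)
    ext1 x
    have h1 : proj j u hG hH (φ x) = proj j u hG hH (ψ x) := DFunLike.congr_fun h x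
    simp only [AddMonoidHom.comp_apply, AddMonoidHom.sub_apply, map_sub, h1, sub_self,
      AddMonoidHom.zero_apply]
  · intro f
    obtain ⟨m, rfl⟩ := hom_eq_zsmul_proj j u hu hσ hB hG f
    refine ⟨m • AddMonoidHom.id _, ?_⟩
    ext1 x
    simp
end

section
/- For every integer n ≥ 1 there exists a cellular exact sequence 0 → ℤ^n → G → H → 0 of abelian groups in which the kernel is the free abelian group of rank n, G is cotorsion-free of rank n + 2, and H has rank 2. -/
/-!
Choose distinct primes `p₀, …, p_{n+1}`, all larger than `n + 2`, and let
`G = ⨁ i, ℤ[1/pᵢ] ⊆ ℚ^{n+2}`. Let `π : G → ℚ²` send the `i`-th unit vector to `vᵢ = (1, i)`, and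
let `H = ∑ i, ℤ[1/pᵢ] vᵢ` be the image of `π`.

* Kernel: if `∑ i, cᵢ vᵢ = 0` then `cᵢ = -∑_{j ≠ i} cⱼ` is integral at `pᵢ`, so `cᵢ ∈ ℤ`. Thus the
  kernel consists of the integer vectors `c` with `∑ cᵢ = ∑ i cᵢ = 0`, which are parametrised by
  the free coordinates `c₂, …, c_{n+1}`.
* Cellularity: a homomorphism out of `ℤ[1/pᵢ]` has infinitely `pᵢ`-divisible values.
  The key point is that the infinitely `pᵢ`-divisible elements of `H` are exactly
  `ℤ[1/pᵢ] vᵢ` (`hGrp_divisible`). The functional `δᵢ (x, y) = y - i x` kills `vᵢ` and takes values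
  integral at `pᵢ` on `H`, so it kills every infinitely `pᵢ`-divisible element, which is
  therefore `t vᵢ` with `t ∈ ℚ`. For `j ≠ i`, `δⱼ (t vᵢ) = (i - j) t` is integral at `pⱼ`, and
  `pⱼ ∤ i - j` because `pⱼ` is large; so `t ∈ ℤ[1/pᵢ]`. Hence every `G → H` lifts, summand by
  summand, to `G → G`. The lift is unique because a homomorphism `G → ℤ^n` is zero.
* Cotorsion-freeness: `G` is integral at `2` and `3`. An element of `Ẑ` with vanishing `2`-adic
  component is infinitely `2`-divisible, and likewise for `3`; `Ẑ` is the sum of these two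
  subgroups, and homomorphisms to `G` kill both.
-/

open TensorProduct

namespace CellularCover

/-! ### Integrality at a prime -/

/-- `ℤ_(l)` as a subgroup of `ℚ`: the rationals of `l`-adic norm at most `1`. -/
def intAt (l : ℕ) [Fact l.Prime] : AddSubgroup ℚ where
  carrier := {x | padicNorm l x ≤ 1}
  zero_mem' := by simp
  add_mem' {a b} ha hb := by
    simp only [Set.mem_ofPred_eq] at *
    exact padicNorm.nonarchimedean.trans (max_le ha hb)
  neg_mem' {a} ha := by simpa using ha

theorem mem_intAt {l : ℕ} [Fact l.Prime] {x : ℚ} : x ∈ intAt l ↔ padicNorm l x ≤ 1 := Iff.rfl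

theorem intCast_mem_intAt (l : ℕ) [Fact l.Prime] (z : ℤ) : (z : ℚ) ∈ intAt l :=
  padicNorm.of_int z

theorem mul_mem_intAt {l : ℕ} [Fact l.Prime] {x y : ℚ} (hx : x ∈ intAt l) (hy : y ∈ intAt l) :
    x * y ∈ intAt l := by
  rw [mem_intAt] at *
  rw [padicNorm.mul]
  exact mul_le_one₀ hx (padicNorm.nonneg _) hy

/-- An integer prime to `l` may be cancelled. -/
theorem of_intCast_mul_mem {l : ℕ} [Fact l.Prime] {z : ℤ} {x : ℚ} (hz : ¬ (l : ℤ) ∣ z)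
    (h : (z : ℚ) * x ∈ intAt l) : x ∈ intAt l := by
  rw [mem_intAt, padicNorm.mul, (padicNorm.int_eq_one_iff z).2 hz, one_mul] at h
  exact h

/-- `ℤ_(l)` has no nonzero infinitely `l`-divisible element. -/
theorem eq_zero_of_divisible {l : ℕ} [hl : Fact l.Prime] {x : ℚ}
    (h : ∀ k : ℕ, ∃ y ∈ intAt l, x = (l : ℚ) ^ k * y) : x = 0 := by
  by_contra hx
  have hpos : 0 < padicNorm l x :=
    lt_of_le_of_ne (padicNorm.nonneg _) (padicNorm.nonzero hx).symm
  have hl1 : (l : ℚ)⁻¹ < 1 := inv_lt_one_of_one_lt₀ (by exact_mod_cast hl.out.one_lt)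
  obtain ⟨k, hk⟩ := exists_pow_lt_of_lt_one hpos hl1
  have hpow (k : ℕ) : padicNorm l ((l : ℚ) ^ k) = ((l : ℚ)⁻¹) ^ k := by
    rw [← padicNorm.padicNorm_p_of_prime]
    induction k with
    | zero => simp
    | succ k ih => rw [pow_succ, padicNorm.mul, ih, pow_succ]
  obtain ⟨y, hy, rfl⟩ := h k
  rw [padicNorm.mul, hpow] at hk
  have : ((l : ℚ)⁻¹) ^ k * padicNorm l y ≤ ((l : ℚ)⁻¹) ^ k :=
    mul_le_of_le_one_right (by positivity) hy
  linarith

/-- A rational that is integral at every prime is an integer. -/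
theorem exists_int {x : ℚ} (h : ∀ (l : ℕ) [Fact l.Prime], x ∈ intAt l) : ∃ z : ℤ, (z : ℚ) = x := by
  refine ⟨x.num, Rat.coe_int_num_of_den_eq_one ?_⟩
  by_contra hd
  obtain ⟨l, hl, hld⟩ := Nat.exists_prime_and_dvd hd
  have : Fact l.Prime := ⟨hl⟩
  have h1 : ¬ (l : ℤ) ∣ x.num := by
    intro hn
    have := Nat.dvd_gcd (Int.natCast_dvd.1 hn) hld
    rw [x.reduced] at this
    exact hl.one_lt.ne' (Nat.dvd_one.1 this)
  have h2 : padicNorm l x * padicNorm l (x.den : ℚ) = 1 := by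
    rw [← padicNorm.mul, Rat.mul_den_eq_num, padicNorm.int_eq_one_iff]
    exact h1
  have h3 : padicNorm l (x.den : ℚ) < 1 := (padicNorm.nat_lt_one_iff _).2 hld
  have h4 : padicNorm l x * padicNorm l (x.den : ℚ) ≤ padicNorm l (x.den : ℚ) :=
    mul_le_of_le_one_left (padicNorm.nonneg _) (h l)
  linarith

/-- `ℤ[1/p]` as a subgroup of `ℚ`: the rationals integral at every prime other than `p`. -/
def away (p : ℕ) : AddSubgroup ℚ where
  carrier := {x | ∀ (l : ℕ) [Fact l.Prime], l ≠ p → x ∈ intAt l}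
  zero_mem' := fun _ _ _ => zero_mem _
  add_mem' ha hb := fun l _ hl => add_mem (ha l hl) (hb l hl)
  neg_mem' ha := fun l _ hl => neg_mem (ha l hl)

theorem mem_away {p : ℕ} {x : ℚ} :
    x ∈ away p ↔ ∀ (l : ℕ) [Fact l.Prime], l ≠ p → x ∈ intAt l := Iff.rfl

theorem intCast_mem_away (p : ℕ) (z : ℤ) : (z : ℚ) ∈ away p :=
  fun l _ _ => intCast_mem_intAt l z

theorem div_pow_mem_away {p : ℕ} (hp : p.Prime) {x : ℚ} (hx : x ∈ away p) (k : ℕ) :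
    x / (p : ℚ) ^ k ∈ away p := by
  intro l hl hlp
  refine of_intCast_mul_mem (z := (p : ℤ) ^ k) ?_ ?_
  · intro h
    have h' : l ∣ p ^ k := by exact_mod_cast h
    exact hlp ((Nat.prime_dvd_prime_iff_eq hl.out hp).1 (hl.out.dvd_of_dvd_pow h'))
  · have : (p : ℚ) ≠ 0 := by exact_mod_cast hp.ne_zero
    push_cast
    rw [mul_div_cancel₀ _ (pow_ne_zero _ this)]
    exact hx l hlp

/-! ### Ranks of full subgroups of rational vector spaces -/

/-- A subgroup of a rational vector space `V` meeting every line nontrivially has rank `dim V`,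
since `V` is then its localization at the nonzero integers. -/
theorem rank_tensor_s8 {V : Type} [AddCommGroup V] [Module ℚ V] (A : AddSubgroup V)
    (h : ∀ v : V, ∃ k : ℕ, k ≠ 0 ∧ k • v ∈ A) :
    Module.rank ℚ (ℚ ⊗[ℤ] A) = Module.rank ℚ V := by
  let f : A →ₗ[ℤ] V := A.subtype.toIntLinearMap
  have : IsLocalizedModule (nonZeroDivisors ℤ) f := by
    refine ⟨?_, ?_, ?_⟩
    · intro x
      have hx : ((x : ℤ) : ℚ) ≠ 0 := by exact_mod_cast nonZeroDivisors.ne_zero x.2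
      rw [Module.End.isUnit_iff]
      constructor
      · intro a b hab
        have hab' : (x : ℤ) • a = (x : ℤ) • b := hab
        rw [← Int.cast_smul_eq_zsmul ℚ, ← Int.cast_smul_eq_zsmul ℚ] at hab'
        exact smul_right_injective V hx hab'
      · intro b
        refine ⟨((x : ℤ) : ℚ)⁻¹ • b, ?_⟩
        change (x : ℤ) • (((x : ℤ) : ℚ)⁻¹ • b) = b
        rw [← Int.cast_smul_eq_zsmul ℚ, smul_inv_smul₀ hx]
    · intro v
      obtain ⟨k, hk, hkv⟩ := h v
      refine ⟨(⟨k • v, hkv⟩, ⟨(k : ℤ), mem_nonZeroDivisors_of_ne_zero (by exact_mod_cast hk)⟩), ?_⟩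
      change (k : ℤ) • v = k • v
      simp
    · intro a b hab
      exact ⟨1, by rw [Subtype.ext hab]⟩
  have hb : IsBaseChange ℚ f := (isLocalizedModule_iff_isBaseChange (nonZeroDivisors ℤ) ℚ f).1 this
  exact hb.equiv.rank_eq

/-! ### The groups `G` and `H` -/

/-- Pairwise distinct primes `pᵢ > n + 2`. -/
noncomputable def pr (n : ℕ) (i : ℕ) : ℕ := Nat.nth Nat.Prime (n + 1 + i)

theorem pr_prime (n i : ℕ) : (pr n i).Prime := Nat.prime_nth_prime _

instance (n i : ℕ) : Fact (pr n i).Prime := ⟨pr_prime n i⟩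

theorem pr_gt (n i : ℕ) : n + 3 ≤ pr n i := by
  have := Nat.add_two_le_nth_prime (n + 1 + i)
  unfold pr
  omega

theorem pr_inj {n i j : ℕ} (h : pr n i = pr n j) : i = j := by
  have := Nat.nth_injective Nat.infinite_setOfPred_prime h
  omega

/-- `G = ⨁ i, ℤ[1/pᵢ]`, as the subgroup `∏ i, ℤ[1/pᵢ]` of `ℚ^{n+2}`. -/
def gGrp (n : ℕ) : AddSubgroup (Fin (n + 2) → ℚ) where
  carrier := {c | ∀ i : Fin (n + 2), c i ∈ away (pr n i)}
  zero_mem' := fun _ => zero_mem _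
  add_mem' ha hb := fun i => add_mem (ha i) (hb i)
  neg_mem' ha := fun i => neg_mem (ha i)

/-- The map `c ↦ ∑ i, cᵢ (1, i)` from `G` to `ℚ²`. -/
def prj (n : ℕ) : gGrp n →+ ℚ × ℚ where
  toFun c := (∑ i, c.1 i, ∑ i : Fin (n + 2), (i : ℚ) * c.1 i)
  map_zero' := by simp
  map_add' a b := by simp [Finset.sum_add_distrib, mul_add]

/-- `H = ∑ i, ℤ[1/pᵢ] (1, i)`. -/
def hGrp (n : ℕ) : AddSubgroup (ℚ × ℚ) := (prj n).range

variable {n : ℕ}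

/-- The inclusion of the `i`-th summand of `G`. -/
def inc (i : Fin (n + 2)) : away (pr n i) →+ gGrp n where
  toFun x := ⟨Pi.single i x.1, fun j => by
    by_cases h : j = i
    · subst h; simp
    · simp [h, zero_mem]⟩
  map_zero' := by ext; simp
  map_add' a b := by ext; simp [Pi.single_add]

/-- The `i`-th coordinate of `G`. -/
def coord (i : Fin (n + 2)) : gGrp n →+ away (pr n i) where
  toFun c := ⟨c.1 i, c.2 i⟩
  map_zero' := rfl
  map_add' _ _ := rfl

theorem sum_inc_coord (c : gGrp n) : ∑ i, inc i (coord i c) = c := by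
  ext j
  rw [AddSubgroup.val_finsetSum, Finset.sum_apply]
  simp [inc, coord, Pi.single_apply]

/-- Values of homomorphisms on the `i`-th summand are infinitely `pᵢ`-divisible. -/
theorem hom_inc_divisible {A : Type*} [AddCommGroup A] (f : gGrp n →+ A) (i : Fin (n + 2))
    (x : away (pr n i)) (k : ℕ) : ∃ g : gGrp n, f (inc i x) = (pr n i ^ k) • f g := by
  refine ⟨inc i ⟨x.1 / (pr n i : ℚ) ^ k, div_pow_mem_away (pr_prime n i) x.2 k⟩, ?_⟩
  rw [← map_nsmul, ← map_nsmul]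
  congr 2
  ext
  have : (pr n i : ℚ) ≠ 0 := by exact_mod_cast (pr_prime n i).ne_zero
  simp [nsmul_eq_mul, mul_div_cancel₀ _ (pow_ne_zero k this)]

/-- `δᵢ (x, y) = y - i x` takes values integral at `pᵢ` on `H`. -/
theorem delta_mem {h : ℚ × ℚ} (hh : h ∈ hGrp n) (i : Fin (n + 2)) :
    h.2 - (i : ℚ) * h.1 ∈ intAt (pr n i) := by
  obtain ⟨c, rfl⟩ := hh
  have : (prj n c).2 - (i : ℚ) * (prj n c).1 =
      ∑ j : Fin (n + 2), (((j : ℤ) - (i : ℤ) : ℤ) : ℚ) * c.1 j := by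
    simp [prj, Finset.mul_sum, sub_mul]
  rw [this]
  refine sum_mem fun j _ => ?_
  by_cases hji : j = i
  · subst hji; simp [zero_mem]
  · refine mul_mem_intAt (intCast_mem_intAt _ _) (c.2 j _ fun h => hji ?_)
    exact (Fin.ext (pr_inj h)).symm

theorem not_dvd_sub {i j : Fin (n + 2)} (hij : i ≠ j) (k : ℕ) :
    ¬ (pr n k : ℤ) ∣ (i : ℤ) - (j : ℤ) := by
  intro h
  have h0 : (i : ℤ) - (j : ℤ) ≠ 0 := fun h => hij (Fin.ext (by omega))
  have h1 := Int.le_of_dvd (abs_pos.2 h0) ((dvd_abs _ _).2 h)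
  have h2 := pr_gt n k
  have h3 := i.2
  have h4 := j.2
  rcases abs_cases ((i : ℤ) - (j : ℤ)) with h | h <;> omega

/-- Infinitely `pᵢ`-divisible elements of `H` lie in `ℤ[1/pᵢ] (1, i)`. -/
theorem hGrp_divisible (i : Fin (n + 2)) {h : ℚ × ℚ} (hh : h ∈ hGrp n)
    (hdiv : ∀ k : ℕ, ∃ y ∈ hGrp n, h = (pr n i ^ k) • y) :
    h.2 = i * h.1 ∧ h.1 ∈ away (pr n i) := by
  have h2 : h.2 = i * h.1 := by
    rw [← sub_eq_zero]
    refine eq_zero_of_divisible (l := pr n i) fun k => ?_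
    obtain ⟨y, hy, rfl⟩ := hdiv k
    refine ⟨_, delta_mem hy i, ?_⟩
    rw [Prod.smul_fst, Prod.smul_snd, nsmul_eq_mul, nsmul_eq_mul]
    push_cast
    ring
  refine ⟨h2, fun l _ hl => ?_⟩
  by_cases hex : ∃ j : Fin (n + 2), l = pr n j
  · obtain ⟨j, rfl⟩ := hex
    have hij : i ≠ j := fun h => hl (by rw [h])
    refine of_intCast_mul_mem (not_dvd_sub hij j) ?_
    have := delta_mem hh j
    rw [h2] at this
    push_cast
    rwa [sub_mul]
  · push Not at hex
    obtain ⟨c, rfl⟩ := hh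
    change ∑ j, c.1 j ∈ intAt l
    exact sum_mem fun j _ => c.2 j l (hex j)

/-! ### The kernel -/

theorem ker_integral {c : gGrp n} (hc : prj n c = 0) (i : Fin (n + 2)) :
    ∃ z : ℤ, (z : ℚ) = c.1 i := by
  refine exists_int fun l _ => ?_
  by_cases hl : l = pr n i
  · subst hl
    have h0 : ∑ j, c.1 j = 0 := congrArg Prod.fst hc
    rw [← Finset.add_sum_erase _ _ (Finset.mem_univ i)] at h0
    rw [eq_neg_of_add_eq_zero_left h0]
    refine neg_mem (sum_mem fun j hj => c.2 j _ fun h => (Finset.ne_of_mem_erase hj) ?_)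
    exact (Fin.ext (pr_inj h)).symm
  · exact c.2 i l hl

/-- The parametrisation of the kernel by the coordinates with index at least `2`. -/
def kerMap (n : ℕ) : (Fin n → ℤ) →+ gGrp n where
  toFun d := ⟨Fin.cons (((∑ k : Fin n, ((k : ℤ) + 1) * d k : ℤ)) : ℚ)
      (Fin.cons ((-∑ k : Fin n, ((k : ℤ) + 2) * d k : ℤ) : ℚ) fun k => ((d k : ℤ) : ℚ)), fun (i : Fin (n + 2)) => by
    refine Fin.cases ?_ (fun i => ?_) i
    · exact intCast_mem_away _ _
    · refine Fin.cases ?_ (fun i => ?_) i <;> exact intCast_mem_away _ _⟩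
  map_zero' := by
    ext i
    refine Fin.cases ?_ (fun i => ?_) i
    · simp
    · refine Fin.cases ?_ (fun i => ?_) i <;> simp
  map_add' a b := by
    ext i
    refine Fin.cases ?_ (fun i => ?_) i
    · simp [mul_add, Finset.sum_add_distrib]
    · refine Fin.cases ?_ (fun i => ?_) i
      · simp only [Pi.add_apply, mul_add, Finset.sum_add_distrib, neg_add, Int.cast_add,
          AddSubgroup.coe_add, Fin.cons_succ, Fin.cons_zero]
      · simp

theorem kerMap_injective : Function.Injective (kerMap n) := by
  intro a b h
  ext k
  have := congrFun (congrArg Subtype.val h) k.succ.succ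
  simpa [kerMap] using this

theorem prj_kerMap (d : Fin n → ℤ) : prj n (kerMap n d) = 0 := by
  ext
  · simp only [prj, kerMap, AddMonoidHom.coe_mk, ZeroHom.coe_mk, Fin.sum_univ_succ, Fin.cons_zero,
      Fin.cons_succ, Prod.fst_zero]
    push_cast
    rw [← add_assoc, ← sub_eq_add_neg, ← Finset.sum_sub_distrib, ← Finset.sum_add_distrib]
    exact Finset.sum_eq_zero fun k _ => by ring
  · simp only [prj, kerMap, AddMonoidHom.coe_mk, ZeroHom.coe_mk, Fin.sum_univ_succ, Fin.cons_zero,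
      Fin.cons_succ, Prod.snd_zero, Fin.val_zero, Fin.val_succ]
    push_cast
    simp only [zero_mul, zero_add, one_mul]
    rw [neg_add_eq_zero]
    exact Finset.sum_congr rfl fun k _ => by ring

theorem range_kerMap : (kerMap n).range = (prj n).ker := by
  apply le_antisymm
  · rintro _ ⟨d, rfl⟩
    exact prj_kerMap d
  · intro c hc
    rw [AddMonoidHom.mem_ker] at hc
    choose z hz using ker_integral hc
    refine ⟨fun k => z k.succ.succ, ?_⟩
    -- The difference lies in the kernel and has only its coordinates `0` and `1` nonzero.
    have hd : prj n (kerMap n (fun k => z k.succ.succ) - c) = 0 := by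
      rw [map_sub, prj_kerMap, hc, sub_zero]
    rw [← sub_eq_zero]
    set e := kerMap n (fun k => z k.succ.succ) - c with he
    have htail : ∀ k : Fin n, e.1 k.succ.succ = 0 := fun k => by
      rw [he]
      simp [kerMap, hz]
    have h1 : ∑ i, e.1 i = 0 := congrArg Prod.fst hd
    have h2 : ∑ i : Fin (n + 2), (i : ℚ) * e.1 i = 0 := congrArg Prod.snd hd
    simp only [Fin.sum_univ_succ, htail, mul_zero, Finset.sum_const_zero] at h1 h2
    simp at h1 h2
    ext i
    refine Fin.cases ?_ (fun i => ?_) i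
    · simpa [h2] using h1
    · refine Fin.cases ?_ (fun i => ?_) i
      · simpa using h2
      · exact htail i

/-! ### Lifting homomorphisms -/

theorem eq_zero_of_prj_comp {ψ : gGrp n →+ gGrp n} (h : ∀ c, prj n (ψ c) = 0) : ψ = 0 := by
  have key : ∀ (i : Fin (n + 2)) (x : away (pr n i)), ψ (inc i x) = 0 := by
    intro i x
    ext j
    refine eq_zero_of_divisible (l := pr n i) fun k => ?_
    obtain ⟨g, hg⟩ := hom_inc_divisible ψ i x k
    obtain ⟨z, hz⟩ := ker_integral (h g) j
    refine ⟨_, intCast_mem_intAt _ z, ?_⟩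
    rw [hg, hz]
    simp
  ext1 c
  rw [← sum_inc_coord c, map_sum]
  exact Finset.sum_eq_zero fun i _ => key i _

theorem exists_lift_s8 (f : gGrp n →+ hGrp n) :
    ∃ φ : gGrp n →+ gGrp n, ∀ c, prj n (φ c) = f c := by
  have key : ∀ (i : Fin (n + 2)) (x : away (pr n i)),
      (f (inc i x)).1.2 = i * (f (inc i x)).1.1 ∧ (f (inc i x)).1.1 ∈ away (pr n i) := by
    intro i x
    refine hGrp_divisible i (f (inc i x)).2 fun k => ?_
    obtain ⟨g, hg⟩ := hom_inc_divisible f i x k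
    exact ⟨_, (f g).2, by rw [hg]; rfl⟩
  refine ⟨
    { toFun := fun c => ⟨fun i => (f (inc i (coord i c))).1.1, fun i : Fin (n + 2) => (key i _).2⟩
      map_zero' := by ext; simp
      map_add' := fun a b => by ext; simp }, fun c => ?_⟩
  have hc : (f c).1 = ∑ i, (f (inc i (coord i c))).1 := by
    conv_lhs => rw [← sum_inc_coord c, map_sum, AddSubgroup.val_finsetSum]
  rw [hc]
  ext
  · simp [prj, Prod.fst_sum]
  · simp only [prj, AddMonoidHom.coe_mk, ZeroHom.coe_mk, Prod.snd_sum]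
    exact Finset.sum_congr rfl fun i _ => (key i _).1.symm

/-! ### Cotorsion-freeness -/

/-- An element of `Ẑ` whose `q`-component vanishes is divisible by every power of `q`. -/
theorem zhat_divisible (q : Nat.Primes) (x : ZHat) (hx : x q = 0) (k : ℕ) :
    ∃ y : ZHat, x = (q.1 ^ k) • y := by
  have : ∀ l : Nat.Primes, ∃ y : @PadicInt l.1 ⟨l.2⟩, x l = (q.1 ^ k) • y := by
    intro l
    have : Fact l.1.Prime := ⟨l.2⟩
    by_cases hl : l = q
    · subst hl
      exact ⟨0, by simpa using hx⟩
    · have hu : IsUnit ((q.1 : ℤ_[l.1]) ^ k) := by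
        refine IsUnit.pow k ?_
        rw [PadicInt.isUnit_iff, PadicInt.norm_natCast_eq_one_iff]
        exact (Nat.coprime_primes l.2 q.2).2 fun h => hl (Subtype.ext h)
      obtain ⟨y, hy⟩ := hu.dvd (a := x l)
      exact ⟨y, by rw [hy, nsmul_eq_mul]; push_cast; rfl⟩
  choose y hy using this
  exact ⟨y, funext hy⟩

theorem zhat_hom_kills (f : ZHat →+ gGrp n) (q : Nat.Primes) (hq : ∀ i : Fin (n + 2), q.1 ≠ pr n i) (x : ZHat)
    (hx : x q = 0) : f x = 0 := by
  have : Fact q.1.Prime := ⟨q.2⟩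
  ext i
  refine eq_zero_of_divisible (l := q.1) fun k => ?_
  obtain ⟨y, rfl⟩ := zhat_divisible q x hx k
  exact ⟨_, (f y).2 i q.1 (hq i), by rw [map_nsmul]; simp⟩

theorem cotorsionFree (f : ZHat →+ gGrp n) (hn : 1 ≤ n) : f = 0 := by
  ext1 x
  let q2 : Nat.Primes := ⟨2, Nat.prime_two⟩
  let q3 : Nat.Primes := ⟨3, Nat.prime_three⟩
  have hne : q3 ≠ q2 := fun h => by simpa [q2, q3] using congrArg Subtype.val h
  have h2 : ∀ i : Fin (n + 2), q2.1 ≠ pr n i := fun i => by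
    have := pr_gt n i
    change 2 ≠ _
    omega
  have h3 : ∀ i : Fin (n + 2), q3.1 ≠ pr n i := fun i => by
    have := pr_gt n i
    change 3 ≠ _
    omega
  have hx : x = Function.update x q2 0 + (x - Function.update x q2 0) := by abel
  rw [hx, map_add, zhat_hom_kills f q2 h2 _ (by simp), zhat_hom_kills f q3 h3 _ (by simp [hne])]
  simp

/-! ### Ranks -/

theorem rank_gGrp (n : ℕ) : Module.rank ℚ (ℚ ⊗[ℤ] gGrp n) = (n : Cardinal) + 2 := by
  rw [rank_tensor_s8]
  · simp
  · intro v
    refine ⟨∏ i, (v i).den, Finset.prod_ne_zero_iff.2 fun i _ => (v i).den_ne_zero,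
      fun i : Fin (n + 2) => ?_⟩
    have : ((∏ i, (v i).den) • v) i
        = (((∏ j ∈ Finset.univ.erase i, (v j).den : ℕ) * (v i).num : ℤ) : ℚ) := by
      rw [← Finset.mul_prod_erase _ _ (Finset.mem_univ i), Pi.smul_apply, nsmul_eq_mul]
      push_cast
      rw [← Rat.mul_den_eq_num]
      ring
    rw [this]
    exact intCast_mem_away _ _

theorem rank_hGrp (n : ℕ) : Module.rank ℚ (ℚ ⊗[ℤ] hGrp n) = 2 := by
  rw [rank_tensor_s8]
  · simp [one_add_one_eq_two]
  · intro v
    refine ⟨v.1.den * v.2.den, mul_ne_zero v.1.den_ne_zero v.2.den_ne_zero, ?_⟩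
    -- An integer vector `(a, b)` is `(a - b) v₀ + b v₁`.
    let a : ℤ := v.1.num * v.2.den
    let b : ℤ := v.2.num * v.1.den
    refine ⟨⟨Fin.cons ((a - b : ℤ) : ℚ) (Fin.cons (b : ℚ) 0), fun i : Fin (n + 2) => ?_⟩, ?_⟩
    · refine Fin.cases ?_ (fun i => ?_) i
      · exact intCast_mem_away _ _
      · refine Fin.cases ?_ (fun i => ?_) i
        · exact intCast_mem_away _ _
        · exact zero_mem _
    · have ha : (a : ℚ) = v.1.den * v.2.den * v.1 := by
        simp only [a]; push_cast; rw [← Rat.mul_den_eq_num v.1]; ring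
      have hb : (b : ℚ) = v.1.den * v.2.den * v.2 := by
        simp only [b]; push_cast; rw [← Rat.mul_den_eq_num v.2]; ring
      ext
      · simp [prj, Fin.sum_univ_succ, ha]
      · simp [prj, Fin.sum_univ_succ, hb]

end CellularCover

open CellularCover

/-- For every `n ≥ 1` the free abelian group `ℤ^n` is the kernel of a
cellular exact sequence `0 → ℤ^n → G → H → 0` with `G` cotorsion-free of rank `n + 2`
and `H` of rank `2`. -/
theorem cellular_cover_with_free_kernel_of_rank_two_cokernel (n : ℕ) (hn : 1 ≤ n) :
    ∃ (G H : Type) (_ : AddCommGroup G) (_ : AddCommGroup H)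
      (ι : (Fin n → ℤ) →+ G) (π : G →+ H),
      (∀ f : ZHat →+ G, f = 0) ∧
      Module.rank ℚ (ℚ ⊗[ℤ] G) = (n : Cardinal) + 2 ∧
      Module.rank ℚ (ℚ ⊗[ℤ] H) = 2 ∧
      Function.Injective ι ∧
      Function.Surjective π ∧
      ι.range = π.ker ∧
      Function.Bijective (fun φ : G →+ G => π.comp φ) := by
  refine ⟨gGrp n, hGrp n, inferInstance, inferInstance, kerMap n, (prj n).rangeRestrict,
    fun f => cotorsionFree f hn, rank_gGrp n, rank_hGrp n, kerMap_injective,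
    (prj n).rangeRestrict_surjective, ?_, ?_, ?_⟩
  · exact range_kerMap.trans (AddMonoidHom.ker_rangeRestrict (prj n)).symm
  · intro φ φ' h
    rw [← sub_eq_zero]
    refine eq_zero_of_prj_comp fun c => ?_
    have hc := congrArg Subtype.val (DFunLike.congr_fun h c)
    rw [AddMonoidHom.sub_apply, map_sub, sub_eq_zero]
    exact hc
  · intro f
    obtain ⟨φ, hφ⟩ := exists_lift_s8 f
    exact ⟨φ, by ext1 c; exact Subtype.ext (hφ c)⟩
end
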